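/- Let R be an associative ring with identity and Q a left rooted quiver. Then Φ(F(R)) is a cogenerator for Φ(GF(R)) in Rep(Q,R): for every X ∈ Φ(GF(R)) there is a short exact sequence 0 → X → F → Y → 0 in Rep(Q,R) with F ∈ Φ(F(R)) and Y ∈ Φ(GF(R)). -/

import Mathlib

open CategoryTheory CategoryTheory.Limits Opposite
open scoped DirectSum

universe w v u

namespace QuiverGF


section Cat

variable {A : Type u} [Category.{v} A] [Abelian A]

/-- `Ext¹(X,Y) = 0`, expressed as: every short exact sequence `0 → Y → E → X → 0` splits. -/
def ext1Zero (X Y : A) : Prop :=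
  ∀ (E : A) (f : Y ⟶ E) (g : E ⟶ X) (w : f ≫ g = 0),
    (ShortComplex.mk f g w).ShortExact → ∃ s : X ⟶ E, s ≫ g = 𝟙 X

/-- `extHigherZero n X Y` encodes `Ext^{n+1}(X,Y) = 0`, defined by dimension shifting along
short exact sequences `0 → Y → I → Z → 0` with `I` injective. -/
def extHigherZero : ℕ → A → A → Prop
  | 0 => fun X Y => ext1Zero X Y
  | n + 1 => fun X Y => ∀ (I Z : A) (f : Y ⟶ I) (g : I ⟶ Z) (w : f ≫ g = 0),
      Injective I → (ShortComplex.mk f g w).ShortExact → extHigherZero n X Z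

/-- The right `Ext¹`-orthogonal class. -/
def rightPerp (S : Set A) : Set A := {Y | ∀ X ∈ S, ext1Zero X Y}

/-- The left `Ext¹`-orthogonal class. -/
def leftPerp (S : Set A) : Set A := {X | ∀ Y ∈ S, ext1Zero X Y}

/-- `(X, Y)` is a cotorsion pair. -/
structure IsCotorsionPair (X Y : Set A) : Prop where
  right_eq : Y = rightPerp X
  left_eq : X = leftPerp Y

/-- Completeness of a pair of classes: every object admits approximation sequences. -/
def IsCompleteCP (X Y : Set A) : Prop :=
  (∀ M : A, ∃ (YM XM : A) (f : M ⟶ YM) (g : YM ⟶ XM) (w : f ≫ g = 0),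
     (ShortComplex.mk f g w).ShortExact ∧ YM ∈ Y ∧ XM ∈ X) ∧
  (∀ M : A, ∃ (YM XM : A) (f : YM ⟶ XM) (g : XM ⟶ M) (w : f ≫ g = 0),
     (ShortComplex.mk f g w).ShortExact ∧ YM ∈ Y ∧ XM ∈ X)

/-- Heredity: `Ext^i(X,Y) = 0` for all `i ≥ 1`. -/
def IsHereditaryCP (X Y : Set A) : Prop :=
  ∀ M ∈ X, ∀ N ∈ Y, ∀ n : ℕ, extHigherZero n M N

/-- A thick class of objects. -/
structure IsThick (W : Set A) : Prop where
  summand : ∀ Z ∈ W, ∀ (X : A) (i : X ⟶ Z) (r : Z ⟶ X), i ≫ r = 𝟙 X → X ∈ W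
  ext_closed : ∀ (S : ShortComplex A), S.ShortExact → S.X₁ ∈ W → S.X₃ ∈ W → S.X₂ ∈ W
  ker_epi : ∀ (S : ShortComplex A), S.ShortExact → S.X₂ ∈ W → S.X₃ ∈ W → S.X₁ ∈ W
  coker_mono : ∀ (S : ShortComplex A), S.ShortExact → S.X₁ ∈ W → S.X₂ ∈ W → S.X₃ ∈ W

/-- A Hovey triple. -/
structure IsHoveyTriple (C W F : Set A) : Prop where
  thick : IsThick W
  cp1 : IsCotorsionPair C (W ∩ F)
  cp1_complete : IsCompleteCP C (W ∩ F)
  cp2 : IsCotorsionPair (C ∩ W) F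
  cp2_complete : IsCompleteCP (C ∩ W) F

/-- A hereditary Hovey triple. -/
structure IsHereditaryHoveyTriple (C W F : Set A) extends IsHoveyTriple C W F : Prop where
  cp1_hereditary : IsHereditaryCP C (W ∩ F)
  cp2_hereditary : IsHereditaryCP (C ∩ W) F

/-- `f : C ⟶ M` is an `S`-cover of `M`. -/
def IsCover (S : Set A) {C M : A} (f : C ⟶ M) : Prop :=
  C ∈ S ∧ (∀ C' ∈ S, ∀ g : C' ⟶ M, ∃ h : C' ⟶ C, h ≫ f = g) ∧
    (∀ h : C ⟶ C, h ≫ f = f → IsIso h)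

/-- `f : M ⟶ E` is an `S`-envelope of `M`. -/
def IsEnvelope (S : Set A) {M E : A} (f : M ⟶ E) : Prop :=
  E ∈ S ∧ (∀ E' ∈ S, ∀ g : M ⟶ E', ∃ h : E ⟶ E', f ≫ h = g) ∧
    (∀ h : E ⟶ E, f ≫ h = f → IsIso h)

/-- A perfect pair of classes: X-covers and Y-envelopes always exist. -/
def IsPerfectCP (X Y : Set A) : Prop :=
  (∀ M : A, ∃ (C : A) (f : C ⟶ M), IsCover X f) ∧
  (∀ M : A, ∃ (E : A) (f : M ⟶ E), IsEnvelope Y f)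

/-- `W` is a cogenerator for `X`. -/
def IsCogenerator (W X : Set A) : Prop :=
  W ⊆ X ∧ ∀ M ∈ X, ∃ (W' X' : A) (f : M ⟶ W') (g : W' ⟶ X') (w : f ≫ g = 0),
    (ShortComplex.mk f g w).ShortExact ∧ W' ∈ W ∧ X' ∈ X

end Cat

section Quiver

variable (V : Type w) [Quiver.{w} V]

/-- A quiver is left rooted if it has no infinite sequence of arrows `• → • → • → ⋯`. -/
def LeftRooted : Prop := ¬ ∃ f : ℕ → V, ∀ n : ℕ, Nonempty (f n ⟶ f (n + 1))

variable {V}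
variable {A : Type u} [Category.{v} A]

/-- A vertex of `V`, seen as an object of the path category. -/
abbrev vtx (i : V) : Paths V := i

section Phi

variable [Abelian A] [HasCoproducts.{w} A]

/-- The canonical morphism `φᵢˣ : ⊕_{a : j ⟶ i} X(j) ⟶ X(i)`. -/
noncomputable def phi (X : Paths V ⥤ A) (i : V) :
    (∐ fun p : Σ j : V, j ⟶ i => X.obj (vtx p.1)) ⟶ X.obj (vtx i) :=
  Sigma.desc fun p => X.map p.2.toPath

/-- The class `Φ(S)` of representations. -/
noncomputable def PhiClass (S : Set A) : Set (Paths V ⥤ A) :=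
  {X | ∀ i : V, Mono (phi X i) ∧ X.obj (vtx i) ∈ S ∧ cokernel (phi X i) ∈ S}

end Phi

/-- The class of representations with all vertex values in `S`. -/
def RepClass (S : Set A) : Set (Paths V ⥤ A) := {X | ∀ i : V, X.obj (vtx i) ∈ S}

section Psi

variable [Abelian A] [HasProducts.{w} A]

/-- The canonical morphism `ψᵢʸ : Y(i) ⟶ Π_{a : i ⟶ j} Y(j)`. -/
noncomputable def psi (Y : Paths V ⥤ A) (i : V) :
    Y.obj (vtx i) ⟶ ∏ᶜ fun p : Σ j : V, i ⟶ j => Y.obj (vtx p.1) :=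
  Pi.lift fun p => Y.map p.2.toPath

/-- The class `Ψ(S)` of representations. -/
noncomputable def PsiClass (S : Set A) : Set (Paths V ⥤ A) :=
  {Y | ∀ i : V, Epi (psi Y i) ∧ Y.obj (vtx i) ∈ S ∧ kernel (psi Y i) ∈ S}

end Psi

end Quiver




section NcTensor

variable (R : Type u) [Ring R]

variable (E : Type u) [AddCommGroup E] [Module Rᵐᵒᵖ E]
variable (M : Type u) [AddCommGroup M] [Module R M]

/-- The defining relations of the tensor product `E ⊗_R M` of a right `R`-module `E`
and a left `R`-module `M` over a (possibly noncommutative) ring `R`. -/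
def ncRel : Submodule ℤ (TensorProduct ℤ E M) :=
  Submodule.span ℤ {z | ∃ (e : E) (r : R) (m : M),
    z = (MulOpposite.op r • e) ⊗ₜ[ℤ] m - e ⊗ₜ[ℤ] (r • m)}

/-- The tensor product `E ⊗_R M` of a right `R`-module `E` and a left `R`-module `M`. -/
abbrev NcTensor := TensorProduct ℤ E M ⧸ ncRel R E M

/-- The canonical generator `e ⊗ m` of `E ⊗_R M`. -/
noncomputable def NcTensor.tmul (e : E) (m : M) : NcTensor R E M :=
  Submodule.Quotient.mk (e ⊗ₜ[ℤ] m)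

variable {E M}
variable {E' : Type u} [AddCommGroup E'] [Module Rᵐᵒᵖ E']
variable {M' : Type u} [AddCommGroup M'] [Module R M']

/-- Functoriality of the tensor product. -/
noncomputable def NcTensor.map (f : E →ₗ[Rᵐᵒᵖ] E') (g : M →ₗ[R] M') :
    NcTensor R E M →ₗ[ℤ] NcTensor R E' M' :=
  Submodule.mapQ _ _
    (TensorProduct.map f.toAddMonoidHom.toIntLinearMap g.toAddMonoidHom.toIntLinearMap)
    (by
      refine Submodule.span_le.2 ?_
      rintro z ⟨e, r, m, rfl⟩
      refine Submodule.mem_comap.2 (Submodule.subset_span ?_)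
      exact ⟨f e, r, g m,
        (map_sub (TensorProduct.map f.toAddMonoidHom.toIntLinearMap
          g.toAddMonoidHom.toIntLinearMap) _ _).trans
          (by simp [TensorProduct.map_tmul, map_smul])⟩)

@[simp] lemma NcTensor.map_tmul (f : E →ₗ[Rᵐᵒᵖ] E') (g : M →ₗ[R] M') (e : E) (m : M) :
    NcTensor.map R f g (NcTensor.tmul R E M e m) = NcTensor.tmul R E' M' (f e) (g m) := by
  rfl

end NcTensor

section ModuleClasses

variable (R : Type u) [Ring R]

/-- A left `R`-module is flat if tensoring with it preserves injections of right `R`-modules. -/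
def IsFlatModule (M : ModuleCat.{u} R) : Prop :=
  ∀ (E E' : ModuleCat.{u} Rᵐᵒᵖ) (f : E ⟶ E'), Function.Injective f →
    Function.Injective (NcTensor.map R (f.hom : ↑E →ₗ[Rᵐᵒᵖ] ↑E') (LinearMap.id (M := ↑M)))

/-- Gorenstein flat left `R`-modules: cycles of exact complexes of flat modules which stay
exact after tensoring with any injective right `R`-module. -/
def IsGorensteinFlatModule (M : ModuleCat.{u} R) : Prop :=
  ∃ (F : ℤ → ModuleCat.{u} R) (d : ∀ n : ℤ, F n ⟶ F (n + 1)),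
    (∀ n, IsFlatModule R (F n)) ∧
    (∀ n, Function.Exact (d n) (d (n + 1))) ∧
    Nonempty (↑M ≃ₗ[R] ↥(LinearMap.ker ((d 0).hom : ↑(F 0) →ₗ[R] ↑(F (0 + 1))))) ∧
    ∀ (E : ModuleCat.{u} Rᵐᵒᵖ), Injective E → ∀ n : ℤ,
      Function.Exact (NcTensor.map R (LinearMap.id (M := ↑E)) ((d n).hom : ↑(F n) →ₗ[R] ↑(F (n + 1))))
        (NcTensor.map R (LinearMap.id (M := ↑E)) ((d (n + 1)).hom : ↑(F (n + 1)) →ₗ[R] ↑(F (n + 1 + 1))))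

/-- Projectively coresolved Gorenstein flat left `R`-modules. -/
def IsPGFModule (M : ModuleCat.{u} R) : Prop :=
  ∃ (P : ℤ → ModuleCat.{u} R) (d : ∀ n : ℤ, P n ⟶ P (n + 1)),
    (∀ n, Projective (P n)) ∧
    (∀ n, Function.Exact (d n) (d (n + 1))) ∧
    Nonempty (↑M ≃ₗ[R] ↥(LinearMap.ker ((d 0).hom : ↑(P 0) →ₗ[R] ↑(P (0 + 1))))) ∧
    ∀ (E : ModuleCat.{u} Rᵐᵒᵖ), Injective E → ∀ n : ℤ,
      Function.Exact (NcTensor.map R (LinearMap.id (M := ↑E)) ((d n).hom : ↑(P n) →ₗ[R] ↑(P (n + 1))))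
        (NcTensor.map R (LinearMap.id (M := ↑E)) ((d (n + 1)).hom : ↑(P (n + 1)) →ₗ[R] ↑(P (n + 1 + 1))))

/-- Gorenstein injective objects of an abelian category. -/
def IsGorensteinInjective {A : Type*} [Category A] [Abelian A] (M : A) : Prop :=
  ∃ (I : ℤ → A) (d : ∀ n : ℤ, I n ⟶ I (n + 1)),
    (∀ n, Injective (I n)) ∧
    (∀ n, ∃ w : d n ≫ d (n + 1) = 0, (ShortComplex.mk (d n) (d (n + 1)) w).Exact) ∧
    Nonempty (M ≅ kernel (d 0)) ∧
    ∀ (E : A), Injective E → ∀ n : ℤ,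
      Function.Exact (fun f : E ⟶ I n => f ≫ d n) (fun f : E ⟶ I (n + 1) => f ≫ d (n + 1))

end ModuleClasses



section Char

variable (R : Type u) [Ring R] (G : Type u) [AddCommGroup G]

section Left
variable (M : Type u) [AddCommGroup M] [Module R M]

/-- Right `R`-action on `Hom_ℤ(M, G)` for a left `R`-module `M`. -/
instance : SMul Rᵐᵒᵖ (M →+ G) :=
  ⟨fun r f => f.comp (DistribMulAction.toAddMonoidHom M r.unop)⟩

@[simp] lemma op_smul_addHom_apply (r : Rᵐᵒᵖ) (f : M →+ G) (m : M) :
    (r • f) m = f (r.unop • m) := rfl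

instance charRight : Module Rᵐᵒᵖ (M →+ G) where
  one_smul f := AddMonoidHom.ext fun m => by simp
  mul_smul r s f := AddMonoidHom.ext fun m => by simp [mul_smul]
  smul_zero r := AddMonoidHom.ext fun m => rfl
  smul_add r f g := AddMonoidHom.ext fun m => rfl
  add_smul r s f := AddMonoidHom.ext fun m => by simp [add_smul]
  zero_smul f := AddMonoidHom.ext fun m => by simp

end Left

section Right
variable (N : Type u) [AddCommGroup N] [Module Rᵐᵒᵖ N]

/-- Left `R`-action on `Hom_ℤ(N, G)` for a right `R`-module `N`. -/
instance : SMul R (N →+ G) :=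
  ⟨fun r f => f.comp (DistribMulAction.toAddMonoidHom N (MulOpposite.op r))⟩

@[simp] lemma smul_addHom_apply (r : R) (f : N →+ G) (n : N) :
    (r • f) n = f (MulOpposite.op r • n) := rfl

instance charLeft : Module R (N →+ G) where
  one_smul f := AddMonoidHom.ext fun n => by simp
  mul_smul r s f := AddMonoidHom.ext fun n => by simp [MulOpposite.op_mul, mul_smul]
  smul_zero r := AddMonoidHom.ext fun n => rfl
  smul_add r f g := AddMonoidHom.ext fun n => rfl
  add_smul r s f := AddMonoidHom.ext fun n => by simp [add_smul]
  zero_smul f := AddMonoidHom.ext fun n => by simp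

end Right

section Precomp

variable {R G}
variable {M N : Type u} [AddCommGroup M] [AddCommGroup N] [Module R M] [Module R N]

/-- Precomposition, as an `Rᵐᵒᵖ`-linear map between character modules. -/
def precompHom (h : M →ₗ[R] N) : (N →+ G) →ₗ[Rᵐᵒᵖ] (M →+ G) where
  toFun f := f.comp h.toAddMonoidHom
  map_add' f g := rfl
  map_smul' r f := AddMonoidHom.ext fun m => by simp [map_smul]

variable {P Q : Type u} [AddCommGroup P] [AddCommGroup Q] [Module Rᵐᵒᵖ P] [Module Rᵐᵒᵖ Q]

/-- Precomposition, as an `R`-linear map between character modules of right modules. -/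
def precompHomOp (h : P →ₗ[Rᵐᵒᵖ] Q) : (Q →+ G) →ₗ[R] (P →+ G) where
  toFun f := f.comp h.toAddMonoidHom
  map_add' f g := rfl
  map_smul' r f := AddMonoidHom.ext fun p => by simp [map_smul]

end Precomp

end Char


section Reps

variable (V : Type u) [Quiver.{u} V] (R : Type u) [Ring R]

/-- The category of representations of the quiver `V` with values in left `R`-modules. -/
abbrev RepL := Paths V ⥤ ModuleCat.{u} R

/-- The category of representations of the opposite quiver with values in right `R`-modules. -/
abbrev RepR := Paths Vᵒᵖ ⥤ ModuleCat.{u} Rᵐᵒᵖ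

/-- A vertex of `V`, seen as an object of the path category. -/
abbrev vtx' {V : Type u} [Quiver.{u} V] (i : V) : Paths V := i

/-- The representation `Hom(X, G) ∈ Rep(Qᵒᵖ, Rᵒᵖ)`, given vertexwise by `Hom_ℤ(X(i), G)`. -/
noncomputable def HomRepObj (X : RepL V R) (G : Type u) [AddCommGroup G] : RepR V R :=
  Paths.lift
    { obj := fun x => ModuleCat.of Rᵐᵒᵖ (↑(X.obj (vtx' x.unop)) →+ G)
      map := fun {x y} a =>
        ModuleCat.ofHom (precompHom (G := G) ((X.map a.unop.toPath).hom : ↑(X.obj (vtx' y.unop)) →ₗ[R] ↑(X.obj (vtx' x.unop))) :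
          _ →ₗ[Rᵐᵒᵖ] _) }

/-- The representation `Hom(Y, G) ∈ Rep(Q, R)` for `Y ∈ Rep(Qᵒᵖ, Rᵒᵖ)`. -/
noncomputable def HomRepObjOp (Y : RepR V R) (G : Type u) [AddCommGroup G] : RepL V R :=
  Paths.lift
    { obj := fun i => ModuleCat.of R (↑(Y.obj (vtx' (op i))) →+ G)
      map := fun {i j} a =>
        ModuleCat.ofHom (precompHomOp (G := G) ((Y.map a.op.toPath).hom : ↑(Y.obj (vtx' (op j))) →ₗ[Rᵐᵒᵖ] ↑(Y.obj (vtx' (op i)))) :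
          _ →ₗ[R] _) }

/-- The character representation `X⁺ = Hom(X, ℚ/ℤ)`. -/
noncomputable def charRep (X : RepL V R) : RepR V R :=
  HomRepObj V R X (ULift.{u} (AddCircle (1 : ℚ)))

section Tensor

variable {V R}

/-- The additive group structure of `E ⊗_R M` (no longer found under binders). -/
noncomputable instance NcTensor.instAddCommGroup (E : Type u) [AddCommGroup E] [Module Rᵐᵒᵖ E]
    (M : Type u) [AddCommGroup M] [Module R M] :
    AddCommGroup (NcTensor R E M) :=
  Submodule.Quotient.addCommGroup (ncRel R E M)

/-- The underlying group of the tensor product of representations before dividing out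
by the relations coming from arrows. -/
noncomputable abbrev repTensorBase (Y : RepR V R) (X : RepL V R) : Type u :=
  ⨁ (i : V), NcTensor R (↑(Y.obj (vtx' (op i)))) (↑(X.obj (vtx' i)))

open scoped Classical in
/-- The relations defining the tensor product of representations. -/
noncomputable def repTensorRel (Y : RepR V R) (X : RepL V R) :
    Submodule ℤ (repTensorBase Y X) :=
  Submodule.span ℤ {z | ∃ (i j : V) (a : i ⟶ j) (y : ↑(Y.obj (vtx' (op j)))) (x : ↑(X.obj (vtx' i))),
    z = DirectSum.of _ i (NcTensor.tmul R _ _ (Y.map a.op.toPath y) x)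
      - DirectSum.of _ j (NcTensor.tmul R _ _ y (X.map a.toPath x))}

/-- The tensor product `Y ⊗_Q X` of representations, for `Y ∈ Rep(Qᵒᵖ, Rᵒᵖ)` and
`X ∈ Rep(Q, R)`. -/
noncomputable abbrev RepTensor (Y : RepR V R) (X : RepL V R) : Type u :=
  repTensorBase Y X ⧸ repTensorRel Y X

open scoped Classical in
/-- Functoriality of the tensor product of representations. -/
noncomputable def RepTensor.map {Y Y' : RepR V R} {X X' : RepL V R}
    (g : Y ⟶ Y') (f : X ⟶ X') : RepTensor Y X →ₗ[ℤ] RepTensor Y' X' :=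
  Submodule.mapQ _ _
    (DirectSum.toModule ℤ V (repTensorBase Y' X') fun i =>
      (DirectSum.lof ℤ V _ i).comp
        (NcTensor.map R ((g.app (vtx' (op i))).hom : _ →ₗ[Rᵐᵒᵖ] _) ((f.app (vtx' i)).hom : _ →ₗ[R] _)))
    (by
      refine Submodule.span_le.2 ?_
      rintro z ⟨i, j, a, y, x, rfl⟩
      refine Submodule.mem_comap.2 ?_
      rw [map_sub, ← DirectSum.lof_eq_of ℤ, ← DirectSum.lof_eq_of ℤ,
        DirectSum.toModule_lof, DirectSum.toModule_lof]
      refine Submodule.subset_span ?_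
      refine ⟨i, j, a, g.app (vtx' (op j)) y, f.app (vtx' i) x, ?_⟩
      have hg : g.app (vtx' (op i)) (Y.map a.op.toPath y)
          = Y'.map a.op.toPath (g.app (vtx' (op j)) y) := by
        have h := g.naturality (a.op.toPath : vtx' (op j) ⟶ vtx' (op i))
        exact ConcreteCategory.congr_hom h y
      have hf : f.app (vtx' j) (X.map a.toPath x)
          = X'.map a.toPath (f.app (vtx' i) x) := by
        have h := f.naturality (a.toPath : vtx' i ⟶ vtx' j)
        exact ConcreteCategory.congr_hom h x
      simp only [LinearMap.comp_apply, NcTensor.map_tmul, DirectSum.lof_eq_of]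
      rw [hg, hf])

end Tensor

end Reps




section More

variable (V : Type u) [Quiver.{u} V] (R : Type u) [Ring R]

/-- Cotorsion left `R`-modules. -/
def IsCotorsionModule (M : ModuleCat.{u} R) : Prop :=
  ∀ F : ModuleCat.{u} R, IsFlatModule R F → ext1Zero F M

/-- A right coherent ring: every finitely generated right ideal is finitely presented. -/
def RightCoherent : Prop :=
  ∀ I : Submodule Rᵐᵒᵖ R, I.FG → Module.FinitePresentation Rᵐᵒᵖ ↥I

/-- Flat representations: colimits of projective representations. -/
def IsFlatRep (Xr : RepL V R) : Prop :=
  ∃ (J : Cat.{u, u}) (D : ↥J ⥤ RepL V R) (c : Limits.Cocone D),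
    (∀ j, Projective (D.obj j)) ∧ Nonempty (Limits.IsColimit c) ∧ Nonempty (c.pt ≅ Xr)

/-- Gorenstein flat representations. -/
def IsGorensteinFlatRep (Xr : RepL V R) : Prop :=
  ∃ (F : ℤ → RepL V R) (d : ∀ n : ℤ, F (n + 1) ⟶ F n),
    (∀ n, IsFlatRep V R (F n)) ∧
    (∀ n, ∃ w : d (n + 1) ≫ d n = 0, (ShortComplex.mk (d (n + 1)) (d n) w).Exact) ∧
    Nonempty (Xr ≅ cokernel (d 0)) ∧
    ∀ (E : RepR V R), Injective E → ∀ n : ℤ,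
      Function.Exact (RepTensor.map (𝟙 E) (d (n + 1))) (RepTensor.map (𝟙 E) (d n))

/-- Projectively coresolved Gorenstein flat representations. -/
def IsPGFRep (Xr : RepL V R) : Prop :=
  ∃ (P : ℤ → RepL V R) (d : ∀ n : ℤ, P (n + 1) ⟶ P n),
    (∀ n, Projective (P n)) ∧
    (∀ n, ∃ w : d (n + 1) ≫ d n = 0, (ShortComplex.mk (d (n + 1)) (d n) w).Exact) ∧
    Nonempty (Xr ≅ cokernel (d 0)) ∧
    ∀ (E : RepR V R), Injective E → ∀ n : ℤ,
      Function.Exact (RepTensor.map (𝟙 E) (d (n + 1))) (RepTensor.map (𝟙 E) (d n))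

end More

section Swap

variable (R : Type u) [Ring R]
variable (M : Type u) [AddCommGroup M] [Module R M]
variable (E : Type u) [AddCommGroup E] [Module Rᵐᵒᵖ E]

/-- Relations for the tensor product `M ⊗_{Rᵒᵖ} E` of a right `Rᵒᵖ`-module `M`
and a left `Rᵒᵖ`-module `E`. -/
def ncRel' : Submodule ℤ (TensorProduct ℤ M E) :=
  Submodule.span ℤ {z | ∃ (m : M) (r : R) (e : E),
    z = (r • m) ⊗ₜ[ℤ] e - m ⊗ₜ[ℤ] (MulOpposite.op r • e)}

/-- The tensor product `M ⊗_{Rᵒᵖ} E`. -/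
abbrev NcTensorSwap := TensorProduct ℤ M E ⧸ ncRel' R M E

/-- The additive group structure of `M ⊗_{Rᵒᵖ} E` (no longer found under binders). -/
noncomputable instance NcTensorSwap.instAddCommGroup :
    AddCommGroup (NcTensorSwap R M E) :=
  Submodule.Quotient.addCommGroup (ncRel' R M E)

variable {M E}

/-- The generator `m ⊗ e` of `M ⊗_{Rᵒᵖ} E`. -/
noncomputable def NcTensorSwap.tmul (m : M) (e : E) : NcTensorSwap R M E :=
  Submodule.Quotient.mk (m ⊗ₜ[ℤ] e)

variable (V : Type u) [Quiver.{u} V]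

/-- The base of the tensor product `X ⊗_{Qᵒᵖ} Y`. -/
noncomputable abbrev repTensorSwapBase (X : RepL V R) (Y : RepR V R) : Type u :=
  ⨁ (i : V), NcTensorSwap R (↑(X.obj i)) (↑(Y.obj (op i)))

open scoped Classical in
/-- The relations of the tensor product `X ⊗_{Qᵒᵖ} Y`. -/
noncomputable def repTensorSwapRel (X : RepL V R) (Y : RepR V R) :
    Submodule ℤ (repTensorSwapBase R V X Y) :=
  Submodule.span ℤ {z | ∃ (j i : V) (a : j ⟶ i) (x : ↑(X.obj j)) (y : ↑(Y.obj (op i))),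
    z = DirectSum.of _ i (NcTensorSwap.tmul R (X.map a.toPath x) y)
      - DirectSum.of _ j (NcTensorSwap.tmul R x (Y.map a.op.toPath y))}

/-- The tensor product `X ⊗_{Qᵒᵖ} Y` of representations, i.e. the tensor product over the
opposite quiver of the opposite ring. -/
noncomputable abbrev RepTensorSwap (X : RepL V R) (Y : RepR V R) : Type u :=
  repTensorSwapBase R V X Y ⧸ repTensorSwapRel R V X Y

end Swap

section Eval

variable {V : Type u} [Quiver.{u} V] {R : Type u} [Ring R]

/-- Evaluation helper identifying the vertex value of `Hom(X, G)` with `Hom_ℤ(X(i), G)`. -/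
def homRepEval (X : RepL V R) (G : Type u) [AddCommGroup G] {v : Vᵒᵖ}
    (s : ↑((HomRepObj V R X G).obj v)) : ↑(X.obj v.unop) →+ G := s

/-- Evaluation helper identifying the vertex value of `Hom(Y, G)` with `Hom_ℤ(Y(i), G)`. -/
def homRepOpEval (Y : RepR V R) (G : Type u) [AddCommGroup G] {i : V}
    (s : ↑((HomRepObjOp V R Y G).obj i)) : ↑(Y.obj (op i)) →+ G := s

end Eval

end QuiverGF

namespace GFP

open QuiverGF

variable {R : Type u} [Ring R]

abbrev QZ := AddCircle (1 : ℚ)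

theorem charlift {T M : Type*} [AddCommGroup T] [AddCommGroup M] (α : T →+ M) (β : T →+ QZ)
    (h : ∀ t, α t = 0 → β t = 0) : ∃ χ : M →+ QZ, ∀ t, χ (α t) = β t := by
  have hb : Module.Baer ℤ QZ := Module.Baer.of_divisible _
  obtain ⟨χ, hχ⟩ := hb.extension_property_addMonoidHom (QuotientAddGroup.kerLift α)
    (QuotientAddGroup.kerLift_injective α) (QuotientAddGroup.lift α.ker β (fun t ht => h t ht))
  exact ⟨χ, fun t => DFunLike.congr_fun hχ (QuotientAddGroup.mk t)⟩

theorem charsep {M : Type*} [AddCommGroup M] (x : M) (h : ∀ χ : M →+ QZ, χ x = 0) : x = 0 :=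
  CharacterModule.eq_zero_of_character_apply (A := M) h

theorem charsep_sub {M : Type*} [AddCommGroup M] (S : AddSubgroup M) (x : M)
    (h : ∀ χ : M →+ QZ, (∀ s ∈ S, χ s = 0) → χ x = 0) : x ∈ S := by
  rw [← QuotientAddGroup.eq_zero_iff]
  apply charsep
  intro χ
  exact h (χ.comp (QuotientAddGroup.mk' S)) (fun s hs => by
    have : ((s : M) : M ⧸ S) = 0 := (QuotientAddGroup.eq_zero_iff s).2 hs
    simp [this])

/-- characters of a left module -/
def ChL (M : Type*) [AddCommGroup M] := M →+ QZ
/-- characters of a right module -/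
def ChR (M : Type*) [AddCommGroup M] := M →+ QZ

section inst
variable (M : Type*) [AddCommGroup M]
instance : AddCommGroup (ChL M) := inferInstanceAs (AddCommGroup (M →+ QZ))
instance : AddCommGroup (ChR M) := inferInstanceAs (AddCommGroup (M →+ QZ))
instance : FunLike (ChL M) M QZ := inferInstanceAs (FunLike (M →+ QZ) M QZ)
instance : FunLike (ChR M) M QZ := inferInstanceAs (FunLike (M →+ QZ) M QZ)
instance : AddMonoidHomClass (ChL M) M QZ := inferInstanceAs (AddMonoidHomClass (M →+ QZ) M QZ)
instance : AddMonoidHomClass (ChR M) M QZ := inferInstanceAs (AddMonoidHomClass (M →+ QZ) M QZ)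

variable {M}
@[simp] lemma ChL.add_apply (f g : ChL M) (m : M) : (f + g) m = f m + g m := rfl
@[simp] lemma ChR.add_apply (f g : ChR M) (m : M) : (f + g) m = f m + g m := rfl
@[simp] lemma ChL.zero_apply (m : M) : (0 : ChL M) m = 0 := rfl
@[simp] lemma ChR.zero_apply (m : M) : (0 : ChR M) m = 0 := rfl
@[ext] lemma ChL.ext {f g : ChL M} (h : ∀ m, f m = g m) : f = g := AddMonoidHom.ext h
@[ext] lemma ChR.ext {f g : ChR M} (h : ∀ m, f m = g m) : f = g := AddMonoidHom.ext h

instance [Module R M] : Module Rᵐᵒᵖ (ChL M) where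
  smul r f := AddMonoidHom.mk' (fun m => f (r.unop • m)) (fun a b => by simp)
  one_smul f := ChL.ext fun m => congrArg f (one_smul R m)
  mul_smul r s f := ChL.ext fun m => congrArg f (mul_smul s.unop r.unop m)
  smul_zero r := rfl
  smul_add r f g := rfl
  add_smul r s f := ChL.ext fun m => (congrArg f (add_smul _ _ m)).trans (map_add f _ _)
  zero_smul f := ChL.ext fun m => (congrArg f (zero_smul R m)).trans (map_zero f)

instance [Module Rᵐᵒᵖ M] : Module R (ChR M) where
  smul r f := AddMonoidHom.mk' (fun m => f (MulOpposite.op r • m)) (fun a b => by simp)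
  one_smul f := ChR.ext fun m => congrArg f (one_smul Rᵐᵒᵖ m)
  mul_smul r s f := ChR.ext fun m => congrArg f (mul_smul (MulOpposite.op s) (MulOpposite.op r) m)
  smul_zero r := rfl
  smul_add r f g := rfl
  add_smul r s f := ChR.ext fun m =>
    (congrArg f (add_smul (MulOpposite.op r) (MulOpposite.op s) m)).trans (map_add f _ _)
  zero_smul f := ChR.ext fun m => (congrArg f (zero_smul Rᵐᵒᵖ m)).trans (map_zero f)

@[simp] lemma ChL.smul_apply [Module R M] (r : Rᵐᵒᵖ) (f : ChL M) (m : M) :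
    (r • f) m = f (r.unop • m) := rfl
@[simp] lemma ChR.smul_apply [Module Rᵐᵒᵖ M] (r : R) (f : ChR M) (m : M) :
    (r • f) m = f (MulOpposite.op r • m) := rfl
end inst

def mkL {M : Type*} [AddCommGroup M] (f : M →+ QZ) : ChL M := f
def mkR {M : Type*} [AddCommGroup M] (f : M →+ QZ) : ChR M := f
@[simp] lemma mkL_apply {M : Type*} [AddCommGroup M] (f : M →+ QZ) (m : M) : mkL f m = f m := rfl
@[simp] lemma mkR_apply {M : Type*} [AddCommGroup M] (f : M →+ QZ) (m : M) : mkR f m = f m := rfl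

/-- dual map -/
def dL {M N : Type*} [AddCommGroup M] [AddCommGroup N] [Module R M] [Module R N]
    (h : M →ₗ[R] N) : ChL N →ₗ[Rᵐᵒᵖ] ChL M where
  toFun f := mkL (AddMonoidHom.comp f h.toAddMonoidHom)
  map_add' f g := rfl
  map_smul' r f := ChL.ext fun m => congrArg f (h.map_smul r.unop m).symm

@[simp] lemma dL_apply {M N : Type*} [AddCommGroup M] [AddCommGroup N] [Module R M] [Module R N]
    (h : M →ₗ[R] N) (f : ChL N) (m : M) : dL h f m = f (h m) := rfl

section flip
variable {E M : Type*} [AddCommGroup E] [Module Rᵐᵒᵖ E] [AddCommGroup M] [Module R M]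

def toR (g : E →ₗ[Rᵐᵒᵖ] ChL M) : M →ₗ[R] ChR E where
  toFun m := mkR (AddMonoidHom.mk' (fun e => g e m) (fun a b => by simp))
  map_add' a b := ChR.ext fun e => map_add (g e) a b
  map_smul' r m := ChR.ext fun e => by
    change g e (r • m) = g (MulOpposite.op r • e) m
    rw [LinearMap.map_smul]; rfl

def toL (g : M →ₗ[R] ChR E) : E →ₗ[Rᵐᵒᵖ] ChL M where
  toFun e := mkL (AddMonoidHom.mk' (fun m => g m e) (fun a b => by simp))
  map_add' a b := ChL.ext fun m => map_add (g m) a b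
  map_smul' r e := ChL.ext fun m => by
    change g m (r • e) = g (r.unop • m) e
    rw [LinearMap.map_smul]; rfl

@[simp] lemma toR_apply (g : E →ₗ[Rᵐᵒᵖ] ChL M) (m e) : toR g m e = g e m := rfl
@[simp] lemma toL_apply (g : M →ₗ[R] ChR E) (m e) : toL g e m = g m e := rfl
end flip

structure SES {K P C : Type*} [AddCommGroup K] [AddCommGroup P] [AddCommGroup C]
    [Module R K] [Module R P] [Module R C] (j : K →ₗ[R] P) (q : P →ₗ[R] C) : Prop where
  inj : Function.Injective j
  ex : Function.Exact j q
  surj : Function.Surjective q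

variable (R) in
/-- flatness through characters -/
def FlatC (M : Type u) [AddCommGroup M] [Module R M] : Prop := Module.Injective Rᵐᵒᵖ (ChL M)

section flat
variable {K P C : Type u} [AddCommGroup K] [AddCommGroup P] [AddCommGroup C]
    [Module R K] [Module R P] [Module R C]

theorem FlatC.ext {M : Type u} [AddCommGroup M] [Module R M] (h : FlatC R M)
    {X Y : Type u} [AddCommGroup X] [AddCommGroup Y] [Module Rᵐᵒᵖ X] [Module Rᵐᵒᵖ Y]
    (f : X →ₗ[Rᵐᵒᵖ] Y) (hf : Function.Injective f) (g : X →ₗ[Rᵐᵒᵖ] ChL M) :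
    ∃ h : Y →ₗ[Rᵐᵒᵖ] ChL M, ∀ x, h (f x) = g x := Module.Injective.out (self := h) f hf g

theorem FlatC.retract (hP : FlatC R P) (i : K →ₗ[R] P) (p : P →ₗ[R] K) (h : ∀ k, p (i k) = k) :
    FlatC R K := by
  constructor
  intro X Y _ _ _ _ f hf g
  obtain ⟨h', hh⟩ := hP.ext f hf (dL p ∘ₗ g)
  refine ⟨dL i ∘ₗ h', fun x => ChL.ext fun m => ?_⟩
  simp [hh, h]

theorem FlatC.equiv (hP : FlatC R P) (e : P ≃ₗ[R] K) : FlatC R K :=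
  hP.retract e.symm.toLinearMap e.toLinearMap (by simp)

theorem dL_inj {q : P →ₗ[R] C} (hq : Function.Surjective q) : Function.Injective (dL q) := by
  intro a b hab
  ext c
  obtain ⟨p, rfl⟩ := hq c
  exact DFunLike.congr_fun hab p

theorem SES.split_char {j : K →ₗ[R] P} {q : P →ₗ[R] C} (S : SES j q) (hC : FlatC R C) :
    ∃ e : ChL P ≃ₗ[Rᵐᵒᵖ] (ChL K × ChL C), (∀ x, (e x).1 = dL j x) ∧ ∀ c, e (dL q c) = (0, c) := by
  obtain ⟨r, hr⟩ := hC.ext (dL q) (dL_inj S.surj) LinearMap.id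
  have h0 : ∀ c, dL j (dL q c) = 0 := fun c => ChL.ext fun m => by
    simp [S.ex.apply_apply_eq_zero m]
  have hker : ∀ x, dL j x = 0 → ∃ c, dL q c = x := by
    intro x hx
    obtain ⟨χ, hχ⟩ := charlift q.toAddMonoidHom x (fun t ht => by
      obtain ⟨k, rfl⟩ := (S.ex t).1 ht
      exact DFunLike.congr_fun hx k)
    exact ⟨mkL χ, ChL.ext hχ⟩
  have hb : Function.Bijective ((dL j).prod r) := by
    constructor
    · rw [injective_iff_map_eq_zero]
      intro x hx
      have h1 : dL j x = 0 := congrArg Prod.fst hx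
      have h2 : r x = 0 := congrArg Prod.snd hx
      obtain ⟨c, rfl⟩ := hker x h1
      rw [hr] at h2
      have : c = 0 := h2
      simp [this]
    · rintro ⟨k, c⟩
      obtain ⟨χ, hχ⟩ := charlift j.toAddMonoidHom k (fun t ht => by
        have : t = 0 := S.inj (by simpa using ht)
        rw [this]; exact map_zero k)
      have h1 : dL j (mkL χ) = k := ChL.ext hχ
      refine ⟨mkL χ + dL q (c - r (mkL χ)), ?_⟩
      refine Prod.ext ?_ ?_
      · simp [h0, h1]
      · simp [hr]
  refine ⟨LinearEquiv.ofBijective _ hb, fun x => rfl, fun c => ?_⟩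
  exact Prod.ext (h0 c) (hr c)

theorem FlatC.of_ext {j : K →ₗ[R] P} {q : P →ₗ[R] C} (S : SES j q) (hK : FlatC R K)
    (hC : FlatC R C) : FlatC R P := by
  obtain ⟨e, he1, he2⟩ := S.split_char hC
  constructor
  intro X Y _ _ _ _ f hf g
  obtain ⟨h1, hh1⟩ := hK.ext f hf (LinearMap.fst _ _ _ ∘ₗ e.toLinearMap ∘ₗ g)
  obtain ⟨h2, hh2⟩ := hC.ext f hf (LinearMap.snd _ _ _ ∘ₗ e.toLinearMap ∘ₗ g)
  refine ⟨e.symm.toLinearMap ∘ₗ h1.prod h2, fun x => ?_⟩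
  apply e.injective
  simp [hh1, hh2]

theorem FlatC.of_ker {j : K →ₗ[R] P} {q : P →ₗ[R] C} (S : SES j q) (hP : FlatC R P)
    (hC : FlatC R C) : FlatC R K := by
  obtain ⟨e, he1, he2⟩ := S.split_char hC
  constructor
  intro X Y _ _ _ _ f hf g
  obtain ⟨h1, hh1⟩ := hP.ext f hf (e.symm.toLinearMap ∘ₗ LinearMap.inl _ _ _ ∘ₗ g)
  refine ⟨dL j ∘ₗ h1, fun x => ?_⟩
  simp only [LinearMap.comp_apply, hh1, ← he1]
  simp

theorem FlatC.prod (hP : FlatC R P) (hC : FlatC R C) : FlatC R (P × C) :=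
  FlatC.of_ext (j := LinearMap.inl R P C) (q := LinearMap.snd R P C)
    ⟨LinearMap.inl_injective, by
      rintro ⟨a, b⟩; constructor
      · rintro h; exact ⟨a, Prod.ext rfl (by simpa using h.symm)⟩
      · rintro ⟨y, hy⟩; rw [← hy]; rfl, LinearMap.snd_surjective⟩ hP hC

open scoped Classical in
theorem FlatC.directSum {ι : Type u} (M : ι → Type u) [∀ i, AddCommGroup (M i)]
    [∀ i, Module R (M i)] (h : ∀ i, FlatC R (M i)) : FlatC R (⨁ i, M i) := by
  constructor
  intro X Y _ _ _ _ f hf g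
  have := fun i => (h i).ext f hf (dL (DirectSum.lof R ι M i) ∘ₗ g)
  choose hh hhh using this
  let G : ∀ y, (⨁ i, M i) →+ QZ := fun y => DirectSum.toAddMonoid (fun i => (hh i y : M i →+ QZ))
  have hG : ∀ y i m, G y (DirectSum.lof R ι M i m) = hh i y m := fun y i m =>
    DirectSum.toAddMonoid_of _ _ _
  refine ⟨⟨⟨fun y => mkL (G y), ?_⟩, ?_⟩, fun x => ?_⟩
  · intro a b
    refine DirectSum.addHom_ext' fun i => AddMonoidHom.ext fun m => ?_
    have := hG (a+b) i m
    have h1 := hG a i m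
    have h2 := hG b i m
    simp only [map_add, ChL.add_apply, ← h1, ← h2] at this
    exact this
  · intro r a
    refine DirectSum.addHom_ext' fun i => AddMonoidHom.ext fun m => ?_
    have := hG (r • a) i m
    have h1 := hG a i (r.unop • m)
    simp only [map_smul, ChL.smul_apply, ← h1] at this
    exact this
  · refine DirectSum.addHom_ext' fun i => AddMonoidHom.ext fun m => ?_
    exact (hG _ i m).trans (by rw [hhh]; rfl)

theorem FlatC.self : FlatC R R := by
  constructor
  intro X Y _ _ _ _ f hf g
  obtain ⟨χ, hχ⟩ := charlift f.toAddMonoidHom (AddMonoidHom.mk' (fun x => g x 1) (by simp))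
    (fun t ht => by
      have : t = 0 := hf (by simpa using ht)
      simp [this])
  refine ⟨⟨⟨fun y => mkL (AddMonoidHom.mk' (fun r => χ (MulOpposite.op r • y))
    (fun a b => by simp [add_smul])), ?_⟩, ?_⟩, ?_⟩
  · intro a b; ext r; simp
  · intro r a; ext s; simp [mul_smul]
  · intro x
    ext r
    have := hχ (MulOpposite.op r • x)
    simp only [LinearMap.toAddMonoidHom_coe, map_smul, AddMonoidHom.mk'_apply, ChL.smul_apply,
      MulOpposite.unop_op, smul_eq_mul, mul_one] at this
    exact this

theorem FlatC.finsupp {B : Type u} (hP : FlatC R P) : FlatC R (B →₀ P) := by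
  classical
  exact (FlatC.directSum (fun _ : B => P) (fun _ => hP)).equiv (finsuppLEquivDirectSum R P B).symm

theorem FlatC.free [Module.Free R P] : FlatC R P :=
  (FlatC.finsupp (B := Module.Free.ChooseBasisIndex R P) FlatC.self).equiv
    (Module.Free.chooseBasis R P).repr.symm

end flat

section tensor
variable {E M : Type u} [AddCommGroup E] [Module Rᵐᵒᵖ E] [AddCommGroup M] [Module R M]

theorem nc_mk (φ : M →ₗ[R] ChR E) :
    ∃ χ : NcTensor R E M →+ QZ, ∀ e m, χ (NcTensor.tmul R E M e m) = φ m e := by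
  let b : E →ₗ[ℤ] M →ₗ[ℤ] QZ := LinearMap.mk₂ ℤ (fun e m => φ m e)
    (fun a b m => map_add (φ m) a b) (fun n e m => map_zsmul (φ m) n e)
    (fun e a b => by simp) (fun n e m => by
      have h : φ (n • m) = n • φ m := map_zsmul φ n m
      have h2 : ∀ (c : ChR E), (n • c) e = n • c e := fun c => rfl
      rw [h, h2])
  let B : NcTensor R E M →ₗ[ℤ] QZ := Submodule.liftQ _ (TensorProduct.lift b) (by
    refine Submodule.span_le.2 ?_
    rintro z ⟨e, r, m, rfl⟩
    have h1 : TensorProduct.lift b ((MulOpposite.op r • e) ⊗ₜ[ℤ] m) =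
        TensorProduct.lift b (e ⊗ₜ[ℤ] (r • m)) := by
      rw [TensorProduct.lift.tmul, TensorProduct.lift.tmul]
      simp [b]
    refine LinearMap.mem_ker.2 ((map_sub (TensorProduct.lift b) _ _).trans ?_)
    rw [h1, sub_self])
  refine ⟨B.toAddMonoidHom, fun e m => ?_⟩
  change TensorProduct.lift b (e ⊗ₜ m) = _
  simp [b]

theorem nc_ext {G : Type*} [AddCommGroup G] (f g : NcTensor R E M →+ G)
    (h : ∀ e m, f (NcTensor.tmul R E M e m) = g (NcTensor.tmul R E M e m)) : f = g := by
  ext z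
  induction z using Submodule.Quotient.induction_on with
  | H z =>
    induction z using TensorProduct.induction_on with
    | zero => exact (map_zero f).trans (map_zero g).symm
    | tmul e m => exact h e m
    | add a b ha hb =>
      rw [Submodule.Quotient.mk_add, map_add, map_add, ha, hb]

theorem tmul_smul' (e : E) (r : R) (m : M) : NcTensor.tmul R E M e (r • m) =
    NcTensor.tmul R E M (MulOpposite.op r • e) m := by
  symm
  rw [← sub_eq_zero]
  change Submodule.Quotient.mk _ = _
  rw [Submodule.Quotient.mk_eq_zero]
  exact Submodule.subset_span ⟨e, r, m, rfl⟩

theorem nc_un (χ : NcTensor R E M →+ QZ) :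
    ∃ φ : M →ₗ[R] ChR E, ∀ e m, χ (NcTensor.tmul R E M e m) = φ m e := by
  refine ⟨⟨⟨fun m => mkR (AddMonoidHom.mk' (fun e => χ (NcTensor.tmul R E M e m)) ?_), ?_⟩, ?_⟩,
    fun e m => rfl⟩
  · intro a b
    rw [← map_add]; congr 1
    exact congrArg Submodule.Quotient.mk (TensorProduct.add_tmul a b m)
  · intro a b; ext e
    change χ _ = χ _ + χ _
    rw [← map_add]; congr 1
    exact congrArg Submodule.Quotient.mk (TensorProduct.tmul_add e a b)
  · intro r m; ext e
    exact congrArg χ (tmul_smul' e r m)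
end tensor

theorem isFlat_iff (M : ModuleCat.{u} R) : IsFlatModule R M ↔ FlatC R M := by
  constructor
  · intro h
    constructor
    intro X Y _ _ _ _ f hf g
    have hi := h (ModuleCat.of _ X) (ModuleCat.of _ Y) (ModuleCat.ofHom f) hf
    obtain ⟨χ, hχ⟩ := nc_mk (toR g)
    obtain ⟨ψ, hψ⟩ := charlift (NcTensor.map R f (LinearMap.id (R := R) (M := M))).toAddMonoidHom χ
      (fun t ht => by
        have : t = 0 := hi (by simpa using ht)
        rw [this]; exact map_zero χ)
    obtain ⟨φ, hφ⟩ := nc_un ψ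
    refine ⟨toL φ, fun x => ChL.ext fun m => ?_⟩
    have := hψ (NcTensor.tmul R X M x m)
    rw [hχ] at this
    exact (hφ _ _).symm.trans this
  · intro h E E' f hf
    rw [injective_iff_map_eq_zero]
    intro z hz
    apply charsep
    intro χ
    obtain ⟨φ, hφ⟩ := nc_un χ
    obtain ⟨g, hg⟩ := h.ext f.hom hf (toL φ)
    obtain ⟨ψ, hψ⟩ := nc_mk (toR g)
    have : χ = ψ.comp (NcTensor.map R f.hom (LinearMap.id (R := R) (M := M))).toAddMonoidHom := by
      apply nc_ext
      intro e m
      rw [hφ]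
      refine Eq.trans ?_ (hψ (f.hom e) m).symm
      simp [hg]
    rw [this]
    exact (congrArg ψ hz).trans (map_zero ψ)

section hex
variable {A B C : Type*} [AddCommGroup A] [AddCommGroup B] [AddCommGroup C]
  [Module R A] [Module R B] [Module R C]

/-- Exactness after applying `Hom(-, E^+)` for injective `E`. -/
def HEx (d : A →ₗ[R] B) (d' : B →ₗ[R] C) : Prop :=
  ∀ (E : Type u) [AddCommGroup E] [Module Rᵐᵒᵖ E], Module.Injective Rᵐᵒᵖ E →
    ∀ h : B →ₗ[R] ChR E, (∀ a, h (d a) = 0) → ∃ h' : C →ₗ[R] ChR E, ∀ b, h' (d' b) = h b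
end hex

theorem nc_exact {A B C : Type u} [AddCommGroup A] [AddCommGroup B] [AddCommGroup C]
    [Module R A] [Module R B] [Module R C] (E : Type u) [AddCommGroup E] [Module Rᵐᵒᵖ E]
    (d : A →ₗ[R] B) (d' : B →ₗ[R] C) (hd : ∀ a, d' (d a) = 0) :
    Function.Exact (NcTensor.map R (LinearMap.id (R := Rᵐᵒᵖ) (M := E)) d)
      (NcTensor.map R (LinearMap.id (R := Rᵐᵒᵖ) (M := E)) d') ↔
    ∀ h : B →ₗ[R] ChR E, (∀ a, h (d a) = 0) → ∃ h' : C →ₗ[R] ChR E, ∀ b, h' (d' b) = h b := by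
  set D := NcTensor.map R (LinearMap.id (R := Rᵐᵒᵖ) (M := E)) d
  set D' := NcTensor.map R (LinearMap.id (R := Rᵐᵒᵖ) (M := E)) d'
  constructor
  · intro hex h hh
    obtain ⟨χ, hχ⟩ := nc_mk h
    obtain ⟨ψ, hψ⟩ := charlift D'.toAddMonoidHom χ (fun t ht => by
      obtain ⟨s, rfl⟩ := (hex t).1 ht
      have : χ.comp D.toAddMonoidHom = 0 := by
        apply nc_ext
        intro e m
        refine (hχ e (d m)).trans ?_
        rw [hh]; rfl
      exact DFunLike.congr_fun this s)
    obtain ⟨φ, hφ⟩ := nc_un ψ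
    refine ⟨φ, fun b => ChR.ext fun e => ?_⟩
    rw [← hφ, ← hχ]
    exact hψ (NcTensor.tmul R E B e b)
  · intro H z
    constructor
    · intro hz
      have : z ∈ D.toAddMonoidHom.range := by
        apply charsep_sub
        intro χ hχ
        obtain ⟨h, hh⟩ := nc_un χ
        obtain ⟨h', hh'⟩ := H h (fun a => ChR.ext fun e => by
          rw [← hh]
          exact hχ _ ⟨NcTensor.tmul R E A e a, rfl⟩)
        obtain ⟨ψ, hψ⟩ := nc_mk h'
        have : χ = ψ.comp D'.toAddMonoidHom := by
          apply nc_ext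
          intro e m
          rw [hh, ← hh']
          exact (hψ e (d' m)).symm
        rw [this]
        exact (congrArg ψ hz).trans (map_zero ψ)
      obtain ⟨s, hs⟩ := this
      exact ⟨s, hs⟩
    · rintro ⟨s, rfl⟩
      have : D'.toAddMonoidHom.comp D.toAddMonoidHom = 0 := by
        apply nc_ext
        intro e m
        change NcTensor.tmul R E C e (d' (d m)) = 0
        rw [hd]
        exact congrArg Submodule.Quotient.mk (TensorProduct.tmul_zero _ e)
      exact DFunLike.congr_fun this s

end GFP

namespace GFP

open QuiverGF

variable {R : Type u} [Ring R]

section basic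
variable {A B C D : Type*} [AddCommGroup A] [AddCommGroup B] [AddCommGroup C] [AddCommGroup D]
  [Module R A] [Module R B] [Module R C] [Module R D]

theorem factor_surj (s : A →ₗ[R] B) (hs : Function.Surjective s) (t : A →ₗ[R] C)
    (h : ∀ a, s a = 0 → t a = 0) : ∃ t' : B →ₗ[R] C, ∀ a, t' (s a) = t a := by
  refine ⟨(LinearMap.ker s).liftQ t (fun a ha => h a ha) ∘ₗ
    (s.quotKerEquivOfSurjective hs).symm.toLinearMap, fun a => ?_⟩
  have : (s.quotKerEquivOfSurjective hs).symm (s a) = Submodule.Quotient.mk a := by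
    rw [LinearEquiv.symm_apply_eq]; rfl
  rw [LinearMap.comp_apply, LinearEquiv.coe_coe, this]; rfl

theorem factor_inj {j : A →ₗ[R] B} {q : B →ₗ[R] C} (hj : Function.Injective j)
    (hx : Function.Exact j q) (t : D →ₗ[R] B)
    (h : ∀ d, q (t d) = 0) : ∃ t' : D →ₗ[R] A, ∀ d, j (t' d) = t d := by
  have := fun d => (hx (t d)).1 (h d)
  choose f hf using this
  refine ⟨⟨⟨f, fun a b => hj ?_⟩, fun r a => hj ?_⟩, hf⟩ <;> simp [hf]

theorem SES.zero {j : A →ₗ[R] B} {q : B →ₗ[R] C} (S : SES j q) (a) : q (j a) = 0 :=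
  S.ex.apply_apply_eq_zero a

theorem SES.mem {j : A →ₗ[R] B} {q : B →ₗ[R] C} (S : SES j q) {b} (h : q b = 0) : ∃ a, j a = b :=
  (S.ex b).1 h

theorem SES.mk' {j : A →ₗ[R] B} {q : B →ₗ[R] C} (h1 : ∀ a, j a = 0 → a = 0) (h2 : ∀ a, q (j a) = 0)
    (h3 : ∀ b, q b = 0 → ∃ a, j a = b) (h4 : Function.Surjective q) : SES j q :=
  ⟨(injective_iff_map_eq_zero j).2 h1, fun b => ⟨h3 b, fun ⟨a, ha⟩ => ha ▸ h2 a⟩, h4⟩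

theorem SES.inj0 {j : A →ₗ[R] B} {q : B →ₗ[R] C} (S : SES j q) {a} (h : j a = 0) : a = 0 :=
  S.inj (h.trans (map_zero j).symm)

theorem SES.of_surj (q : B →ₗ[R] C) (h : Function.Surjective q) :
    SES (LinearMap.ker q).subtype q :=
  SES.mk' (fun a h => by simpa using h) (fun a => a.2) (fun b hb => ⟨⟨b, hb⟩, rfl⟩) h

theorem SES.of_inj (j : A →ₗ[R] B) (h : Function.Injective j) :
    SES j (LinearMap.range j).mkQ :=
  SES.mk' (fun a ha => h (by simpa using ha)) (fun a => by simp)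
    (fun b hb => by simpa using hb) (Submodule.mkQ_surjective _)

theorem SES.prod : SES (LinearMap.inl R A B) (LinearMap.snd R A B) :=
  SES.mk' (fun a h => by simpa using h) (fun a => rfl)
    (fun b hb => ⟨b.1, Prod.ext rfl hb.symm⟩) LinearMap.snd_surjective

theorem SES.of_equiv {A' : Type*} [AddCommGroup A'] [Module R A'] (e : A' ≃ₗ[R] A)
    {j : A →ₗ[R] B} {q : B →ₗ[R] C} (S : SES j q) : SES (j ∘ₗ e.toLinearMap) q :=
  SES.mk' (fun a h => by simpa using S.inj0 h) (fun a => S.zero _) (fun b hb => by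
    obtain ⟨a, rfl⟩ := S.mem hb
    exact ⟨e.symm a, by simp⟩) S.surj

theorem SES.equiv_right {C' : Type*} [AddCommGroup C'] [Module R C'] (e : C ≃ₗ[R] C')
    {j : A →ₗ[R] B} {q : B →ₗ[R] C} (S : SES j q) : SES j (e.toLinearMap ∘ₗ q) :=
  SES.mk' (fun a h => S.inj0 h) (fun a => by simp [S.zero]) (fun b hb => S.mem (by simpa using hb))
    (e.surjective.comp S.surj)
end basic

section nine
variable {A B C P X S A' B' C' : Type*} [AddCommGroup A] [AddCommGroup B] [AddCommGroup C]
  [AddCommGroup P] [AddCommGroup X] [AddCommGroup S]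
  [AddCommGroup A'] [AddCommGroup B'] [AddCommGroup C']
  [Module R A] [Module R B] [Module R C] [Module R P] [Module R X] [Module R S]
  [Module R A'] [Module R B'] [Module R C']

theorem nine_coker {j : A →ₗ[R] B} {q : B →ₗ[R] C} {J : P →ₗ[R] X} {Q : X →ₗ[R] S}
    {a : A →ₗ[R] P} {a' : P →ₗ[R] A'} {b : B →ₗ[R] X} {b' : X →ₗ[R] B'}
    {c : C →ₗ[R] S} {c' : S →ₗ[R] C'} (h1 : SES j q) (h2 : SES J Q) (ca : SES a a')
    (cb : SES b b') (cc : SES c c') (s1 : ∀ x, b (j x) = J (a x)) (s2 : ∀ x, c (q x) = Q (b x)) :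
    ∃ (j' : A' →ₗ[R] B') (q' : B' →ₗ[R] C'), SES j' q' ∧ (∀ p, j' (a' p) = b' (J p)) ∧
      ∀ x, q' (b' x) = c' (Q x) := by
  obtain ⟨j', hj'⟩ := factor_surj a' ca.surj (b' ∘ₗ J) (fun p hp => by
    obtain ⟨x, rfl⟩ := ca.mem hp
    simp [← s1, cb.zero])
  obtain ⟨q', hq'⟩ := factor_surj b' cb.surj (c' ∘ₗ Q) (fun p hp => by
    obtain ⟨x, rfl⟩ := cb.mem hp
    simp [← s2, cc.zero])
  refine ⟨j', q', SES.mk' ?_ ?_ ?_ ?_, hj', hq'⟩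
  · intro y hy
    obtain ⟨p, rfl⟩ := ca.surj y
    rw [hj'] at hy
    obtain ⟨x, hx⟩ := cb.mem hy
    have : q x = 0 := cc.inj0 (by rw [s2, hx]; exact h2.zero p)
    obtain ⟨z, rfl⟩ := h1.mem this
    rw [s1] at hx
    rw [← h2.inj hx, ca.zero]
  · intro y
    obtain ⟨p, rfl⟩ := ca.surj y
    rw [hj']
    simp only [LinearMap.comp_apply]
    rw [hq']
    simp [h2.zero]
  · intro y hy
    obtain ⟨x, rfl⟩ := cb.surj y
    rw [hq'] at hy
    obtain ⟨z, hz⟩ := cc.mem hy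
    obtain ⟨t, rfl⟩ := h1.surj z
    rw [s2] at hz
    obtain ⟨p, hp⟩ := h2.mem (b := x - b t) (by simp [hz])
    refine ⟨a' p, ?_⟩
    rw [hj', LinearMap.comp_apply, hp]
    simp [cb.zero]
  · intro y
    obtain ⟨s, rfl⟩ := cc.surj y
    obtain ⟨x, rfl⟩ := h2.surj s
    exact ⟨b' x, hq' x⟩

theorem nine_ker {J : P →ₗ[R] X} {Q : X →ₗ[R] S} {j' : A' →ₗ[R] B'} {q' : B' →ₗ[R] C'}
    {a : A →ₗ[R] P} {a' : P →ₗ[R] A'} {b : B →ₗ[R] X} {b' : X →ₗ[R] B'}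
    {c : C →ₗ[R] S} {c' : S →ₗ[R] C'} (h2 : SES J Q) (h3 : SES j' q') (ca : SES a a')
    (cb : SES b b') (cc : SES c c') (s1 : ∀ x, b' (J x) = j' (a' x))
    (s2 : ∀ x, c' (Q x) = q' (b' x)) :
    ∃ (j : A →ₗ[R] B) (q : B →ₗ[R] C), SES j q ∧ (∀ x, b (j x) = J (a x)) ∧
      ∀ x, c (q x) = Q (b x) := by
  obtain ⟨j, hj⟩ := factor_inj cb.inj cb.ex (J ∘ₗ a) (fun x => by simp [s1, ca.zero])
  obtain ⟨q, hq⟩ := factor_inj cc.inj cc.ex (Q ∘ₗ b) (fun x => by simp [s2, cb.zero])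
  refine ⟨j, q, SES.mk' ?_ ?_ ?_ ?_, hj, hq⟩
  · intro x hx
    have := hj x
    rw [hx, map_zero] at this
    exact ca.inj0 (h2.inj0 this.symm)
  · intro x
    apply cc.inj0
    rw [hq, LinearMap.comp_apply, hj, LinearMap.comp_apply, h2.zero]
  · intro x hx
    have h := hq x
    rw [hx, map_zero] at h
    obtain ⟨p, hp⟩ := h2.mem h.symm
    have : a' p = 0 := h3.inj0 (by rw [← s1, hp, cb.zero])
    obtain ⟨y, rfl⟩ := ca.mem this
    exact ⟨y, cb.inj (by rw [hj, ← hp]; rfl)⟩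
  · intro z
    obtain ⟨y, hy⟩ := h2.surj (c z)
    have : q' (b' y) = 0 := by rw [← s2, hy, cc.zero]
    obtain ⟨p', hp'⟩ := h3.mem this
    obtain ⟨p, rfl⟩ := ca.surj p'
    obtain ⟨w, hw⟩ := cb.mem (b := y - J p) (by rw [map_sub, s1, hp', sub_self])
    refine ⟨w, cc.inj ?_⟩
    rw [hq, LinearMap.comp_apply, hw, map_sub, hy, h2.zero, sub_zero]

end nine

section extz
variable (R) in
def ExtZ (C A : Type u) [AddCommGroup C] [AddCommGroup A] [Module R C] [Module R A] : Prop :=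
  ∀ (K P : Type u) [AddCommGroup K] [AddCommGroup P] [Module R K] [Module R P]
    (j : K →ₗ[R] P) (q : P →ₗ[R] C), SES j q → ∀ f : K →ₗ[R] A, ∃ g : P →ₗ[R] A, ∀ k, g (j k) = f k

variable {A C K P : Type u} [AddCommGroup A] [AddCommGroup C] [AddCommGroup K] [AddCommGroup P]
  [Module R A] [Module R C] [Module R K] [Module R P]

theorem ExtZ.of_one [Module.Projective R P] {j : K →ₗ[R] P} {q : P →ₗ[R] C} (S : SES j q)
    (h : ∀ f : K →ₗ[R] A, ∃ g : P →ₗ[R] A, ∀ k, g (j k) = f k) : ExtZ R C A := by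
  intro K' P' _ _ _ _ j' q' S' f
  obtain ⟨u, hu⟩ := Module.projective_lifting_property q' q S'.surj
  have hu : ∀ p, q' (u p) = q p := fun p => LinearMap.congr_fun hu p
  obtain ⟨v, hv⟩ := factor_inj S'.inj S'.ex (u ∘ₗ j) (fun k => by simp [hu, S.zero])
  obtain ⟨g, hg⟩ := h (f ∘ₗ v)
  obtain ⟨t, ht⟩ := factor_surj (LinearMap.coprod j' u) (by
    intro p'
    obtain ⟨p, hp⟩ := S.surj (q' p')
    obtain ⟨k', hk'⟩ := S'.mem (b := p' - u p) (by simp [hu, hp])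
    exact ⟨(k', p), by simp [hk']⟩) (LinearMap.coprod f g) (by
      rintro ⟨k', p⟩ h0
      have h0 : j' k' + u p = 0 := by simpa using h0
      have h1 : q p = 0 := by
        have := congrArg q' h0
        simpa [S'.zero, hu] using this
      obtain ⟨k, rfl⟩ := S.mem h1
      have h2 : k' + v k = 0 := S'.inj0 (by rw [map_add, hv]; exact h0)
      have := congrArg f h2
      simpa [hg] using this)
  refine ⟨t, fun k => ?_⟩
  have := ht (k, 0)
  simpa using this

theorem ExtZ.retract {D : Type u} [AddCommGroup D] [Module R D] (h : ExtZ R D A)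
    (i : C →ₗ[R] D) (p : D →ₗ[R] C) (hp : ∀ c, p (i c) = c) : ExtZ R C A := by
  intro K X _ _ _ _ j q S f
  let W := LinearMap.ker (LinearMap.coprod q (-p))
  have hW : ∀ x d, q x = p d → (x, d) ∈ W := fun x d h => by simp [W, h]
  have hW' : ∀ w : W, q w.1.1 = p w.1.2 := fun w => by
    have := w.2
    simp only [W, LinearMap.mem_ker, LinearMap.coprod_apply, LinearMap.neg_apply] at this
    exact eq_of_sub_eq_zero (by rw [sub_eq_add_neg]; exact this)
  let j' : K →ₗ[R] W := LinearMap.codRestrict W (LinearMap.inl R X D ∘ₗ j) (fun k => by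
    apply hW; simp [S.zero])
  let q' : W →ₗ[R] D := LinearMap.snd R X D ∘ₗ W.subtype
  have S' : SES j' q' := by
    refine SES.mk' (fun k hk => S.inj0 ?_) (fun k => rfl) ?_ ?_
    · exact congrArg (fun w : W => w.1.1) hk
    · rintro ⟨⟨x, d⟩, hw⟩ h0
      have h0 : d = 0 := h0
      have h1 := hW' ⟨(x, d), hw⟩
      obtain ⟨k, hk⟩ := S.mem (b := x) (by simpa [h0] using h1)
      exact ⟨k, Subtype.ext (Prod.ext hk h0.symm)⟩
    · intro d
      obtain ⟨x, hx⟩ := S.surj (p d)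
      exact ⟨⟨(x, d), hW _ _ hx⟩, rfl⟩
  obtain ⟨g, hg⟩ := h _ _ j' q' S' f
  let l : X →ₗ[R] W := LinearMap.codRestrict W (LinearMap.prod LinearMap.id (i ∘ₗ q)) (fun x => by
    apply hW; simp [hp])
  refine ⟨g ∘ₗ l, fun k => ?_⟩
  rw [← hg]
  refine congrArg g (Subtype.ext (Prod.ext rfl ?_))
  change i (q (j k)) = 0
  simp [S.zero]

theorem ExtZ.equiv {D : Type u} [AddCommGroup D] [Module R D] (h : ExtZ R D A)
    (e : C ≃ₗ[R] D) : ExtZ R C A := h.retract e.toLinearMap e.symm.toLinearMap (by simp)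

theorem ExtZ.of_ext {D : Type u} [AddCommGroup D] [Module R D] {j : K →ₗ[R] D} {q : D →ₗ[R] C}
    (S : SES j q) (hK : ExtZ R K A) (hC : ExtZ R C A) : ExtZ R D A := by
  intro K' P' _ _ _ _ j' q' S' f
  have S1 := SES.of_surj (q ∘ₗ q') (S.surj.comp S'.surj)
  let W := LinearMap.ker (q ∘ₗ q')
  let j1 : K' →ₗ[R] W := LinearMap.codRestrict W j' (fun k => by simp [W, S'.zero])
  obtain ⟨q1, hq1⟩ := factor_inj S.inj S.ex (q' ∘ₗ W.subtype) (fun w => w.2)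
  have S2 : SES j1 q1 := by
    refine SES.mk' (fun k hk => S'.inj0 ?_) (fun k => S.inj0 ?_) (fun w hw => ?_) (fun k => ?_)
    · exact congrArg Subtype.val hk
    · rw [hq1]; exact S'.zero k
    · have := hq1 w
      rw [hw, map_zero] at this
      obtain ⟨k, hk⟩ := S'.mem this.symm
      exact ⟨k, Subtype.ext hk⟩
    · obtain ⟨p, hp⟩ := S'.surj (j k)
      refine ⟨⟨p, by simp [W, hp, S.zero]⟩, S.inj ?_⟩
      rw [hq1]; exact hp
  obtain ⟨g1, hg1⟩ := hK _ _ j1 q1 S2 f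
  obtain ⟨g, hg⟩ := hC _ _ _ _ S1 g1
  exact ⟨g, fun k => by rw [← hg1, ← hg]; rfl⟩

theorem ExtZ.split (h : ExtZ R C A) {X : Type u} [AddCommGroup X] [Module R X] {j : A →ₗ[R] X}
    {q : X →ₗ[R] C} (S : SES j q) : ∃ s : C →ₗ[R] X, ∀ c, q (s c) = c := by
  obtain ⟨r, hr⟩ := h _ _ j q S LinearMap.id
  obtain ⟨s, hs⟩ := factor_surj q S.surj (LinearMap.id - j ∘ₗ r) (fun x hx => by
    obtain ⟨a, rfl⟩ := S.mem hx
    simp [hr])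
  refine ⟨s, fun c => ?_⟩
  obtain ⟨x, rfl⟩ := S.surj c
  simp [hs, S.zero]

theorem ExtZ.of_split (h : ∀ (X : Type u) [AddCommGroup X] [Module R X] (j : A →ₗ[R] X)
    (q : X →ₗ[R] C), SES j q → ∃ s : C →ₗ[R] X, ∀ c, q (s c) = c) : ExtZ R C A := by
  intro K P _ _ _ _ j q S f
  let N := LinearMap.range (LinearMap.prod f (-j))
  let X := (A × P) ⧸ N
  let jA : A →ₗ[R] X := N.mkQ ∘ₗ LinearMap.inl R A P
  let u : P →ₗ[R] X := N.mkQ ∘ₗ LinearMap.inr R A P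
  have hju : ∀ k, u (j k) = jA (f k) := fun k => by
    symm
    rw [← sub_eq_zero]
    simp only [jA, u, LinearMap.comp_apply, ← map_sub]
    rw [Submodule.mkQ_apply, Submodule.Quotient.mk_eq_zero]
    exact ⟨k, by simp⟩
  obtain ⟨qX, hqX⟩ := factor_surj N.mkQ N.mkQ_surjective (q ∘ₗ LinearMap.snd R A P) (fun x hx => by
    rw [Submodule.mkQ_apply, Submodule.Quotient.mk_eq_zero] at hx
    obtain ⟨k, rfl⟩ := hx
    simp [S.zero])
  have hqu : ∀ p, qX (u p) = q p := fun p => hqX _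
  have SX : SES jA qX := by
    refine SES.mk' (fun a ha => ?_) (fun a => ?_) (fun x hx => ?_) (fun c => ?_)
    · simp only [jA, LinearMap.comp_apply] at ha
      rw [Submodule.mkQ_apply, Submodule.Quotient.mk_eq_zero] at ha
      obtain ⟨k, hk⟩ := ha
      have h1 : f k = a := congrArg Prod.fst hk
      have h2 : -j k = 0 := congrArg Prod.snd hk
      rw [← h1, S.inj0 (neg_eq_zero.1 h2), map_zero]
    · exact (hqX _).trans (by simp)
    · obtain ⟨⟨a, p⟩, rfl⟩ := N.mkQ_surjective x
      rw [hqX] at hx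
      obtain ⟨k, rfl⟩ := S.mem (b := p) hx
      refine ⟨a + f k, ?_⟩
      rw [map_add, ← hju]
      simp only [jA, u, LinearMap.comp_apply, ← map_add]
      simp only [LinearMap.inl_apply, LinearMap.inr_apply, Prod.mk_add_mk, add_zero, zero_add]
    · obtain ⟨p, rfl⟩ := S.surj c
      exact ⟨u p, hqu p⟩
  obtain ⟨s, hs⟩ := h X jA qX SX
  obtain ⟨g, hg⟩ := factor_inj SX.inj SX.ex (u - s ∘ₗ q) (fun p => by simp [hs, hqu])
  refine ⟨g, fun k => SX.inj ?_⟩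
  rw [hg]
  simp [S.zero, hju]

open scoped Classical in
theorem ExtZ.directSum {ι : Type u} (M : ι → Type u) [∀ i, AddCommGroup (M i)]
    [∀ i, Module R (M i)] (h : ∀ i, ExtZ R (M i) A) : ExtZ R (⨁ i, M i) A := by
  apply ExtZ.of_split
  intro X _ _ j q S
  have : ∀ i, ∃ s : M i →ₗ[R] X, ∀ m, q (s m) = DirectSum.lof R ι M i m := by
    intro i
    let W := LinearMap.ker (LinearMap.coprod q (-DirectSum.lof R ι M i))
    have hW : ∀ x d, q x = DirectSum.lof R ι M i d → (x, d) ∈ W := fun x d h => by simp [W, h]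
    have hW' : ∀ w : W, q w.1.1 = DirectSum.lof R ι M i w.1.2 := fun w => by
      have := w.2
      simp only [W, LinearMap.mem_ker, LinearMap.coprod_apply, LinearMap.neg_apply] at this
      exact eq_of_sub_eq_zero (by rw [sub_eq_add_neg]; exact this)
    let j' : A →ₗ[R] W := LinearMap.codRestrict W (LinearMap.inl R X (M i) ∘ₗ j) (fun k => by
      apply hW; simp [S.zero])
    let q' : W →ₗ[R] M i := LinearMap.snd R X (M i) ∘ₗ W.subtype
    have S' : SES j' q' := by
      refine SES.mk' (fun k hk => S.inj0 ?_) (fun k => rfl) ?_ ?_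
      · exact congrArg (fun w : W => w.1.1) hk
      · rintro ⟨⟨x, d⟩, hw⟩ h0
        have h0 : d = 0 := h0
        have h1 := hW' ⟨(x, d), hw⟩
        obtain ⟨k, hk⟩ := S.mem (b := x) (by simpa [h0] using h1)
        exact ⟨k, Subtype.ext (Prod.ext hk h0.symm)⟩
      · intro d
        obtain ⟨x, hx⟩ := S.surj (DirectSum.lof R ι M i d)
        exact ⟨⟨(x, d), hW _ _ hx⟩, rfl⟩
    obtain ⟨s, hs⟩ := (h i).split S'
    refine ⟨LinearMap.fst R X (M i) ∘ₗ W.subtype ∘ₗ s, fun m => ?_⟩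
    refine (hW' (s m)).trans ?_
    congr 1
    exact hs m
  choose s hs using this
  refine ⟨DirectSum.toModule R ι X s, fun c => ?_⟩
  have : q ∘ₗ DirectSum.toModule R ι X s = LinearMap.id := by
    refine DirectSum.linearMap_ext R fun i => LinearMap.ext fun m => ?_
    simp [hs]
  exact LinearMap.congr_fun this c

theorem ExtZ.proj [Module.Projective R C] : ExtZ R C A := by
  apply ExtZ.of_split
  intro X _ _ j q S
  obtain ⟨s, hs⟩ := Module.projective_lifting_property q LinearMap.id S.surj
  exact ⟨s, fun c => LinearMap.congr_fun hs c⟩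

theorem ExtZ.flat_chr (hC : FlatC R C) (N : Type u) [AddCommGroup N] [Module Rᵐᵒᵖ N] :
    ExtZ R C (ChR N) := by
  intro K P _ _ _ _ j q S f
  obtain ⟨e, he1, he2⟩ := S.split_char hC
  let h : N →ₗ[Rᵐᵒᵖ] ChL P := e.symm.toLinearMap ∘ₗ LinearMap.inl _ _ _ ∘ₗ toL f
  refine ⟨toR h, fun k => ChR.ext fun n => ?_⟩
  have : dL j (h n) = toL f n := by rw [← he1]; simp [h]
  exact DFunLike.congr_fun this k

end extz

section LL

variable (R) in
structure LLClass (𝒞 : ModuleCat.{u} R → Prop) : Prop where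
  flat : ∀ C, 𝒞 C → ∀ (A : Type u) [AddCommGroup A] [Module R A], FlatC R A → ExtZ R C A
  chr : ∀ C, 𝒞 C → ∀ (E : Type u) [AddCommGroup E] [Module Rᵐᵒᵖ E], Module.Injective Rᵐᵒᵖ E →
    ExtZ R C (ChR E)
  right : ∀ C, 𝒞 C → ∃ (P C' : ModuleCat.{u} R) (j : C →ₗ[R] P) (q : P →ₗ[R] C'),
    Module.Free R P ∧ SES j q ∧ 𝒞 C'
  left : ∀ C, 𝒞 C → ∃ (P C' : ModuleCat.{u} R) (j : C' →ₗ[R] P) (q : P →ₗ[R] C),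
    Module.Free R P ∧ SES j q ∧ 𝒞 C'

variable (R) in
def LL (M : Type u) [AddCommGroup M] [Module R M] : Prop :=
  ∃ 𝒞, LLClass R 𝒞 ∧ 𝒞 (ModuleCat.of R M)

theorem LL.cls : LLClass R (fun C => LL R C) where
  flat := fun C ⟨𝒞, h, hC⟩ A _ _ hA => h.flat _ hC A hA
  chr := fun C ⟨𝒞, h, hC⟩ A _ _ hA => h.chr _ hC A hA
  right := fun C ⟨𝒞, h, hC⟩ => by
    obtain ⟨P, C', j, q, h1, h2, h3⟩ := h.right _ hC
    exact ⟨P, C', j, q, h1, h2, 𝒞, h, h3⟩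
  left := fun C ⟨𝒞, h, hC⟩ => by
    obtain ⟨P, C', j, q, h1, h2, h3⟩ := h.left _ hC
    exact ⟨P, C', j, q, h1, h2, 𝒞, h, h3⟩

variable {A B C : Type u} [AddCommGroup A] [AddCommGroup B] [AddCommGroup C]
  [Module R A] [Module R B] [Module R C]

theorem LL.flat (h : LL R C) (hA : FlatC R A) : ExtZ R C A := LL.cls.flat (.of R C) h A hA
theorem LL.chr (h : LL R C) (E : Type u) [AddCommGroup E] [Module Rᵐᵒᵖ E]
    (hE : Module.Injective Rᵐᵒᵖ E) : ExtZ R C (ChR E) := LL.cls.chr (.of R C) h E hE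
theorem LL.right (h : LL R C) : ∃ (P C' : ModuleCat.{u} R) (j : C →ₗ[R] P) (q : P →ₗ[R] C'),
    Module.Free R P ∧ SES j q ∧ LL R C' := LL.cls.right (.of R C) h
theorem LL.left (h : LL R C) : ∃ (P C' : ModuleCat.{u} R) (j : C' →ₗ[R] P) (q : P →ₗ[R] C),
    Module.Free R P ∧ SES j q ∧ LL R C' := LL.cls.left (.of R C) h

theorem LL.equiv (h : LL R C) (e : C ≃ₗ[R] A) : LL R A := by
  refine ⟨fun X => ∃ L : ModuleCat.{u} R, LL R L ∧ Nonempty (L ≃ₗ[R] X), ⟨?_, ?_, ?_, ?_⟩,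
    ⟨.of R C, h, ⟨e⟩⟩⟩
  · rintro X ⟨L, hL, ⟨e⟩⟩ A _ _ hA
    exact (hL.flat hA).equiv e.symm
  · rintro X ⟨L, hL, ⟨e⟩⟩ A _ _ hA
    exact (hL.chr A hA).equiv e.symm
  · rintro X ⟨L, hL, ⟨e⟩⟩
    obtain ⟨P, C', j, q, h1, h2, h3⟩ := hL.right
    exact ⟨P, C', _, q, h1, h2.of_equiv e.symm, C', h3, ⟨LinearEquiv.refl _ _⟩⟩
  · rintro X ⟨L, hL, ⟨e⟩⟩
    obtain ⟨P, C', j, q, h1, h2, h3⟩ := hL.left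
    exact ⟨P, C', j, _, h1, h2.equiv_right e, C', h3, ⟨LinearEquiv.refl _ _⟩⟩

theorem LL.free [Module.Free R C] : LL R C := by
  refine ⟨fun X => Module.Free R X, ⟨?_, ?_, ?_, ?_⟩, ‹_›⟩
  · intro X hX A _ _ _; haveI := Module.Projective.of_free (R := R) (P := X); exact ExtZ.proj
  · intro X hX A _ _ _; haveI := Module.Projective.of_free (R := R) (P := X); exact ExtZ.proj
  · intro X hX
    refine ⟨X, .of R PUnit, LinearMap.id, 0, hX, SES.mk' ?_ ?_ ?_ ?_, ?_⟩
    · intro a h; exact h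
    · intro a; rfl
    · intro b _; exact ⟨b, rfl⟩
    · intro b; exact ⟨0, rfl⟩
    · change Module.Free R PUnit.{u+1}; infer_instance
  · intro X hX
    refine ⟨X, .of R PUnit, 0, LinearMap.id, hX, SES.mk' ?_ ?_ ?_ ?_, ?_⟩
    · intro a h; rfl
    · intro a; rfl
    · intro b hb; exact ⟨0, hb.symm⟩
    · intro b; exact ⟨b, rfl⟩
    · change Module.Free R PUnit.{u+1}; infer_instance

theorem LL.of_ext {j : A →ₗ[R] B} {q : B →ₗ[R] C} (S : SES j q) (hA : LL R A) (hC : LL R C) :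
    LL R B := by
  refine ⟨fun X => ∃ (L N : ModuleCat.{u} R) (j : L →ₗ[R] X) (q : X →ₗ[R] N), SES j q ∧ LL R L ∧
    LL R N, ⟨?_, ?_, ?_, ?_⟩, ⟨.of R A, .of R C, j, q, S, hA, hC⟩⟩
  · rintro X ⟨L, N, j, q, S, hL, hN⟩ A _ _ hA
    exact ExtZ.of_ext S (hL.flat hA) (hN.flat hA)
  · rintro X ⟨L, N, j, q, S, hL, hN⟩ A _ _ hA
    exact ExtZ.of_ext S (hL.chr A hA) (hN.chr A hA)
  · rintro X ⟨L, N, j, q, S, hL, hN⟩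
    obtain ⟨P1, L', j1, q1, f1, S1, hL'⟩ := hL.right
    obtain ⟨P2, N', j2, q2, f2, S2, hN'⟩ := hN.right
    obtain ⟨t, ht⟩ := hN.flat (FlatC.free (P := P1)) _ _ _ _ S j1
    let b : X →ₗ[R] (P1 × P2) := t.prod (j2 ∘ₗ q)
    have hb : Function.Injective b := by
      rw [injective_iff_map_eq_zero]
      intro x hx
      have h1 : t x = 0 := congrArg Prod.fst hx
      have h2 : j2 (q x) = 0 := congrArg Prod.snd hx
      obtain ⟨l, rfl⟩ := S.mem (S2.inj0 h2)
      rw [ht] at h1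
      rw [S1.inj0 h1, map_zero]
    obtain ⟨j', q', S', -, -⟩ := nine_coker (b := b) S SES.prod S1 (SES.of_inj b hb) S2
      (fun x => Prod.ext (ht x) (by simp [b, S.zero])) (fun x => rfl)
    refine ⟨.of R (P1 × P2), .of R _, b, _, ?_, SES.of_inj b hb, L', N', j', q', S', hL', hN'⟩
    change Module.Free R (P1 × P2); infer_instance
  · rintro X ⟨L, N, j, q, S, hL, hN⟩
    obtain ⟨P1, L', j1, q1, f1, S1, hL'⟩ := hL.left
    obtain ⟨P2, N', j2, q2, f2, S2, hN'⟩ := hN.left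
    haveI := Module.Projective.of_free (R := R) (P := P2)
    obtain ⟨t, ht⟩ := Module.projective_lifting_property q q2 S.surj
    have ht : ∀ p, q (t p) = q2 p := fun p => LinearMap.congr_fun ht p
    let b : (P1 × P2) →ₗ[R] X := (j ∘ₗ q1).coprod t
    have hb : Function.Surjective b := by
      intro x
      obtain ⟨p2, hp2⟩ := S2.surj (q x)
      obtain ⟨l, hl⟩ := S.mem (b := x - t p2) (by simp [ht, hp2])
      obtain ⟨p1, rfl⟩ := S1.surj l
      exact ⟨(p1, p2), by simp [b, hl]⟩
    obtain ⟨j', q', S', -, -⟩ := nine_ker (b' := b) SES.prod S S1 (SES.of_surj b hb) S2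
      (fun x => by simp [b]) (fun x => by simp [b, S.zero, ht])
    refine ⟨.of R (P1 × P2), .of R _, _, b, ?_, SES.of_surj b hb, L', N', j', q', S', hL', hN'⟩
    change Module.Free R (P1 × P2); infer_instance

theorem LL.prod (hA : LL R A) (hC : LL R C) : LL R (A × C) := LL.of_ext SES.prod hA hC

theorem LL.of_prod_free [Module.Free R A] (h : LL R (C × A)) : LL R C := by
  have key : ∀ (X : ModuleCat.{u} R), LL R X →
    ∃ P : ModuleCat.{u} R, Module.Free R P ∧ LL R (X × P) := fun X hX =>
    ⟨.of R PUnit, by change Module.Free R PUnit.{u+1}; infer_instance, hX.equiv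
      (LinearEquiv.prodUnique (R := R) (M := X) (M₂ := PUnit.{u+1})).symm⟩
  refine ⟨fun X => ∃ P : ModuleCat.{u} R, Module.Free R P ∧ LL R (X × P), ⟨?_, ?_, ?_, ?_⟩,
    .of R A, ‹_›, h⟩
  · rintro X ⟨P, hP, hX⟩ A _ _ hA
    exact (hX.flat hA).retract (LinearMap.inl R X P) (LinearMap.fst R X P) (fun c => rfl)
  · rintro X ⟨P, hP, hX⟩ A _ _ hA
    exact (hX.chr A hA).retract (LinearMap.inl R X P) (LinearMap.fst R X P) (fun c => rfl)
  · rintro X ⟨P, hP, hX⟩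
    obtain ⟨Q, D, j, q, hQ, S, hD⟩ := hX.right
    have hj : Function.Injective (j ∘ₗ LinearMap.inl R X P) := S.inj.comp LinearMap.inl_injective
    obtain ⟨a, ha⟩ := factor_surj (LinearMap.range (j ∘ₗ LinearMap.inl R X P)).mkQ
      (Submodule.mkQ_surjective _) q (fun x hx => by
        obtain ⟨y, rfl⟩ := (SES.of_inj _ hj).mem hx
        exact S.zero _)
    have S' : SES ((LinearMap.range (j ∘ₗ LinearMap.inl R X P)).mkQ ∘ₗ j ∘ₗ LinearMap.inr R X P)
        a := by
      refine SES.mk' (fun p hp => ?_) (fun p => ?_) (fun b hb => ?_) (fun d => ?_)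
      · obtain ⟨x, hx⟩ := (SES.of_inj _ hj).mem hp
        exact (congrArg Prod.snd (S.inj hx)).symm
      · exact (ha _).trans (S.zero _)
      · obtain ⟨y, rfl⟩ := Submodule.mkQ_surjective _ b
        rw [ha] at hb
        obtain ⟨⟨x, p⟩, rfl⟩ := S.mem hb
        refine ⟨p, ?_⟩
        have : j (x, p) = (j ∘ₗ LinearMap.inl R X P) x + j (LinearMap.inr R X P p) := by
          rw [LinearMap.comp_apply, ← map_add]; simp
        rw [this, map_add, (SES.of_inj _ hj).zero, zero_add]
        rfl
      · obtain ⟨y, rfl⟩ := S.surj d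
        exact ⟨_, ha y⟩
    exact ⟨Q, .of R _, _, _, hQ, SES.of_inj _ hj, key (.of R _) (LL.of_ext S' LL.free hD)⟩
  · rintro X ⟨P, hP, hX⟩
    obtain ⟨Q, D, j, q, hQ, S, hD⟩ := hX.left
    have hq : Function.Surjective (LinearMap.fst R X P ∘ₗ q) :=
      (LinearMap.fst_surjective (R := R) (M := X) (M₂ := P)).comp S.surj
    let K := LinearMap.ker (LinearMap.fst R X P ∘ₗ q)
    have S' : SES (LinearMap.codRestrict K j (fun d => by simp [K, S.zero]))
        (LinearMap.snd R X P ∘ₗ q ∘ₗ K.subtype) := by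
      refine SES.mk' (fun p hp => S.inj0 ?_) (fun p => ?_) (fun b hb => ?_) (fun d => ?_)
      · exact congrArg Subtype.val hp
      · simp [S.zero]
      · obtain ⟨d, hd⟩ := S.mem (b := b.1) (Prod.ext b.2 hb)
        exact ⟨d, Subtype.ext hd⟩
      · obtain ⟨y, hy⟩ := S.surj (0, d)
        exact ⟨⟨y, by simp [K, hy]⟩, by simp [hy]⟩
    exact ⟨Q, .of R _, _, _, hQ, SES.of_surj _ hq, key (.of R _) (LL.of_ext S' hD LL.free)⟩

theorem LL.of_ker {j : A →ₗ[R] B} {q : B →ₗ[R] C} (S : SES j q) (hB : LL R B) (hC : LL R C) :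
    LL R A := by
  obtain ⟨P, D, i, p, hP, S1, hD⟩ := hC.left
  haveI := Module.Projective.of_free (R := R) (P := P)
  obtain ⟨t, ht⟩ := Module.projective_lifting_property q p S.surj
  have ht : ∀ x, q (t x) = p x := fun x => LinearMap.congr_fun ht x
  -- D → A × P → B
  obtain ⟨v, hv⟩ := factor_inj S.inj S.ex (t ∘ₗ i) (fun d => by simp [ht, S1.zero])
  have S2 : SES (LinearMap.prod (-v) i) (LinearMap.coprod j t) := by
    refine SES.mk' (fun d hd => S1.inj0 ?_) (fun d => ?_) ?_ (fun b => ?_)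
    · exact congrArg Prod.snd hd
    · simp [hv]
    · rintro ⟨a, x⟩ h0
      have h0 : j a + t x = 0 := by simpa using h0
      obtain ⟨d, rfl⟩ := S1.mem (b := x) (by
        have := congrArg q h0
        simpa [S.zero, ht] using this)
      refine ⟨d, Prod.ext ?_ rfl⟩
      apply S.inj
      have := hv d
      simp only [LinearMap.comp_apply] at this
      simp [this, eq_neg_of_add_eq_zero_left h0]
    · obtain ⟨x, hx⟩ := S1.surj (q b)
      obtain ⟨a, ha⟩ := S.mem (b := b - t x) (by simp [ht, hx])
      exact ⟨(a, x), by simp [ha]⟩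
  exact LL.of_prod_free (LL.of_ext S2 hD hB)

theorem LL.periodic [Module.Free R B] {j : A →ₗ[R] B} {q : B →ₗ[R] A} (S : SES j q)
    (h1 : ∀ (X : Type u) [AddCommGroup X] [Module R X], FlatC R X → ExtZ R A X)
    (h2 : ∀ (E : Type u) [AddCommGroup E] [Module Rᵐᵒᵖ E], Module.Injective Rᵐᵒᵖ E →
      ExtZ R A (ChR E)) : LL R A := by
  refine ⟨fun X => Nonempty (A ≃ₗ[R] X), ⟨?_, ?_, ?_, ?_⟩, ⟨LinearEquiv.refl _ _⟩⟩
  · rintro X ⟨e⟩ Y _ _ hY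
    exact (h1 Y hY).equiv e.symm
  · rintro X ⟨e⟩ Y _ _ hY
    exact (h2 Y hY).equiv e.symm
  · rintro X ⟨e⟩
    exact ⟨.of R B, .of R A, _, q, ‹_›, S.of_equiv e.symm, ⟨LinearEquiv.refl _ _⟩⟩
  · rintro X ⟨e⟩
    exact ⟨.of R B, .of R A, j, _, ‹_›, S.equiv_right e, ⟨LinearEquiv.refl _ _⟩⟩

section ds
variable {ι : Type u} {K P Q : ι → Type u} [∀ i, AddCommGroup (K i)] [∀ i, AddCommGroup (P i)]
  [∀ i, AddCommGroup (Q i)] [∀ i, Module R (K i)] [∀ i, Module R (P i)] [∀ i, Module R (Q i)]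

def dsMap (f : ∀ i, K i →ₗ[R] P i) : (⨁ i, K i) →ₗ[R] ⨁ i, P i := DFinsupp.mapRange.linearMap f

@[simp] lemma dsMap_apply (f : ∀ i, K i →ₗ[R] P i) (x : ⨁ i, K i) (i : ι) :
    dsMap f x i = f i (x i) := rfl

open scoped Classical in
@[simp] lemma dsMap_lof (f : ∀ i, K i →ₗ[R] P i) (i : ι) (x : K i) :
    dsMap f (DirectSum.lof R ι K i x) = DirectSum.lof R ι P i (f i x) :=
  DFinsupp.mapRange_single (hf := fun i => map_zero (f i))

theorem SES.directSum {j : ∀ i, K i →ₗ[R] P i} {q : ∀ i, P i →ₗ[R] Q i} (S : ∀ i, SES (j i) (q i)) :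
    SES (dsMap j) (dsMap q) := by
  refine SES.mk' (fun k hk => ?_) (fun k => ?_) (fun p hp => ?_) (fun d => ?_)
  · ext i
    exact (S i).inj0 (by rw [← dsMap_apply, hk]; rfl)
  · ext i
    rw [dsMap_apply, dsMap_apply, (S i).zero]; rfl
  · have : ∀ i, ∃ r : P i → K i, r 0 = 0 ∧ ∀ p, q i p = 0 → j i (r p) = p := fun i => by
      classical
      refine ⟨fun p => if h : q i p = 0 then ((S i).mem h).choose else 0, ?_, ?_⟩
      · simp only [map_zero, dite_true]
        exact (S i).inj0 ((S i).mem (map_zero (q i))).choose_spec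
      · intro p hp
        simp only [hp, dite_true]
        exact ((S i).mem hp).choose_spec
    choose r hr hr' using this
    refine ⟨DFinsupp.mapRange r hr p, ?_⟩
    ext i
    rw [dsMap_apply]
    exact hr' i _ (by rw [← dsMap_apply, hp]; rfl)
  · have : ∀ i, ∃ r : Q i → P i, r 0 = 0 ∧ ∀ p, q i (r p) = p := fun i => by
      classical
      refine ⟨fun p => if p = 0 then 0 else ((S i).surj p).choose, by simp, ?_⟩
      intro p
      by_cases hp : p = 0
      · simp [hp]
      · simp only [hp, if_false]
        exact ((S i).surj p).choose_spec
    choose r hr hr' using this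
    refine ⟨DFinsupp.mapRange r hr d, ?_⟩
    ext i
    rw [dsMap_apply]
    exact hr' i _

theorem LL.directSum (h : ∀ i, LL R (K i)) : LL R (⨁ i, K i) := by
  refine ⟨fun X => ∃ (M : ι → ModuleCat.{u} R), (∀ i, LL R (M i)) ∧ Nonempty (X ≃ₗ[R] ⨁ i, M i),
    ⟨?_, ?_, ?_, ?_⟩, ⟨fun i => .of R (K i), h, ⟨LinearEquiv.refl _ _⟩⟩⟩
  · rintro X ⟨M, hM, ⟨e⟩⟩ Y _ _ hY
    exact (ExtZ.directSum _ (fun i => (hM i).flat hY)).equiv e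
  · rintro X ⟨M, hM, ⟨e⟩⟩ Y _ _ hY
    exact (ExtZ.directSum _ (fun i => (hM i).chr Y hY)).equiv e
  · rintro X ⟨M, hM, ⟨e⟩⟩
    choose P C' j q hP S hC using fun i => (hM i).right
    exact ⟨.of R (⨁ i, P i), .of R (⨁ i, C' i), _, _, Module.Free.directSum R _,
      (SES.directSum S).of_equiv e, C', hC, ⟨LinearEquiv.refl _ _⟩⟩
  · rintro X ⟨M, hM, ⟨e⟩⟩
    choose P C' j q hP S hC using fun i => (hM i).left
    exact ⟨.of R (⨁ i, P i), .of R (⨁ i, C' i), _, _, Module.Free.directSum R _,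
      (SES.directSum S).equiv_right e.symm, C', hC, ⟨LinearEquiv.refl _ _⟩⟩
end ds

end LL

end GFP

namespace GFP

open QuiverGF

variable {R : Type u} [Ring R] {M : Type u} [AddCommGroup M] [Module R M]

lemma ChL.sum_apply {ι : Type*} (s : Finset ι) (f : ι → ChL M) (m : M) :
    (∑ i ∈ s, f i) m = ∑ i ∈ s, f i m := by
  classical
  induction s using Finset.induction_on with
  | empty => rfl
  | insert a s ha ih => rw [Finset.sum_insert ha, Finset.sum_insert ha, ChL.add_apply, ih]

theorem FlatC.eq_crit (h : FlatC R M) {m t : ℕ} (x : Fin m → M) (v : Fin t → Fin m → R)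
    (hv : ∀ l, ∑ j, v l j • x j = 0) :
    ∃ (n : ℕ) (c : Fin m → Fin n → R) (y : Fin n → M), (∀ j, x j = ∑ i, c j i • y i) ∧
      ∀ l i, ∑ j, v l j * c j i = 0 := by
  let G : Set (Fin m → M) := {z | ∃ (c : Fin m → R) (y : M), (∀ l, ∑ j, v l j * c j = 0) ∧
    z = fun j => c j • y}
  have key : x ∈ AddSubgroup.closure G := by
    apply charsep_sub
    intro χ hχ
    let χj : Fin m → ChL M := fun j => mkL (χ.comp (AddMonoidHom.single (fun _ => M) j))
    have hsum : ∀ z, χ z = ∑ j, χj j (z j) := fun z => by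
      conv_lhs => rw [← Finset.univ_sum_single z]
      rw [map_sum]; rfl
    let g : (Fin m → R) →ₗ[Rᵐᵒᵖ] ChL M :=
      { toFun := fun c => ∑ j, MulOpposite.op (c j) • χj j
        map_add' := fun a b => by simp [add_smul, Finset.sum_add_distrib]
        map_smul' := fun r a => by simp [Finset.smul_sum, smul_smul] }
    let ρ : (Fin m → R) →ₗ[Rᵐᵒᵖ] (Fin t → R) :=
      { toFun := fun c l => ∑ j, v l j * c j
        map_add' := fun a b => by
          funext l; simp [mul_add, Finset.sum_add_distrib]
        map_smul' := fun r a => by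
          funext l; simp [Finset.sum_mul, mul_assoc] }
    have hker : ∀ c, ρ c = 0 → g c = 0 := by
      intro c hc
      ext y
      have := hχ (fun j => c j • y) (AddSubgroup.subset_closure ⟨c, y, fun l => congrFun hc l, rfl⟩)
      rw [hsum] at this
      change (∑ j, MulOpposite.op (c j) • χj j) y = 0
      rw [ChL.sum_apply]
      exact this
    obtain ⟨g', hg'⟩ := factor_surj ρ.rangeRestrict ρ.surjective_rangeRestrict g
      (fun c hc => hker c (congrArg Subtype.val hc))
    obtain ⟨h', hh'⟩ := h.ext (LinearMap.range ρ).subtype (Submodule.injective_subtype _) g'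
    have hgr : ∀ c, h' (ρ c) = g c := fun c => by
      rw [← hg', ← hh']; rfl
    have hh : ∀ w, h' w = ∑ l, MulOpposite.op (w l) • h' (Pi.single l 1) := fun w => by
      conv_lhs => rw [← Finset.univ_sum_single w]
      rw [map_sum]
      refine Finset.sum_congr rfl fun l _ => ?_
      rw [← LinearMap.map_smul]
      congr 1
      funext k
      by_cases hk : k = l
      · subst hk; simp
      · simp [Pi.single_eq_of_ne hk]
    have hj : ∀ j, χj j = ∑ l, MulOpposite.op (v l j) • h' (Pi.single l 1) := fun j => by
      have := hgr (Pi.single j 1)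
      rw [hh] at this
      have h1 : g (Pi.single j 1) = χj j := by
        change ∑ j', MulOpposite.op ((Pi.single j 1 : Fin m → R) j') • χj j' = χj j
        rw [Finset.sum_eq_single j]
        · simp
        · intro b _ hb; simp [Pi.single_eq_of_ne hb]
        · simp
      have h2 : ∀ l, ρ (Pi.single j 1) l = v l j := fun l => by
        change ∑ j', v l j' * (Pi.single j 1 : Fin m → R) j' = v l j
        rw [Finset.sum_eq_single j]
        · simp
        · intro b _ hb; simp [Pi.single_eq_of_ne hb]
        · simp
      rw [← h1, ← this]
      simp [h2]
    rw [hsum]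
    calc ∑ j, χj j (x j) = ∑ j, ∑ l, h' (Pi.single l 1) (v l j • x j) := by
          refine Finset.sum_congr rfl fun j _ => ?_
          rw [hj, ChL.sum_apply]; rfl
      _ = ∑ l, h' (Pi.single l 1) (∑ j, v l j • x j) := by
          rw [Finset.sum_comm]
          simp
      _ = 0 := by simp [hv]
  have key2 : x ∈ AddSubmonoid.closure (G ∪ -G) := by
    rw [← AddSubgroup.closure_toAddSubmonoid]; exact key
  obtain ⟨L, hL, hLx⟩ := AddSubmonoid.exists_list_of_mem_closure key2
  have hL' : ∀ i : Fin L.length, ∃ (c : Fin m → R) (y : M), (∀ l, ∑ j, v l j * c j = 0) ∧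
    L[i] = fun j => c j • y := by
    intro i
    rcases hL L[i] (List.getElem_mem _) with h | ⟨c, y, h1, h2⟩
    · exact h
    · refine ⟨c, -y, h1, ?_⟩
      rw [← neg_neg L[i], h2]; funext j; simp
  choose c y h1 h2 using hL'
  refine ⟨L.length, fun j i => c i j, y, fun j => ?_, fun l i => h1 i l⟩
  have : x = ∑ i : Fin L.length, L[i] := by
    rw [← hLx]; exact (Fin.sum_univ_getElem L).symm
  rw [this, Finset.sum_apply]
  refine Finset.sum_congr rfl fun i _ => ?_
  exact congrFun (h2 i) j

theorem FlatC.of_crit (h : ∀ (m : ℕ) (x : Fin m → M) (r : Fin m → R), ∑ j, r j • x j = 0 →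
    ∃ (n : ℕ) (c : Fin m → Fin n → R) (y : Fin n → M), (∀ j, x j = ∑ i, c j i • y i) ∧
      ∀ i, ∑ j, r j * c j i = 0) : FlatC R M := by
  apply Module.Baer.injective
  intro I g
  classical
  let α : (I →₀ M) →+ M := Finsupp.liftAddHom fun ρ => DistribSMul.toAddMonoidHom M ρ.1.unop
  let β : (I →₀ M) →+ QZ := Finsupp.liftAddHom fun ρ => (g ρ : M →+ QZ)
  obtain ⟨χ, hχ⟩ := charlift α β (by
    intro t ht
    let e := t.support.equivFin
    let ρ : Fin t.support.card → I := fun i => (e.symm i).1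
    have hsum : ∀ (f : I → M → M), t.sum f = ∑ i, f (ρ i) (t (ρ i)) := by
      intro f
      rw [Finsupp.sum, ← Finset.sum_coe_sort]
      exact (Equiv.sum_comp e.symm (fun x : t.support => f x.1 (t x.1))).symm
    have hsum' : ∀ (f : I → M → QZ), t.sum f = ∑ i, f (ρ i) (t (ρ i)) := by
      intro f
      rw [Finsupp.sum, ← Finset.sum_coe_sort]
      exact (Equiv.sum_comp e.symm (fun x : t.support => f x.1 (t x.1))).symm
    have ht' : ∑ i, (ρ i).1.unop • t (ρ i) = 0 := by
      rw [← ht]; exact (hsum (fun ρ m => ρ.1.unop • m)).symm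
    obtain ⟨n, c, y, h1, h2⟩ := h _ _ _ ht'
    have hb : β t = ∑ j, g (ρ j) (t (ρ j)) := hsum' (fun ρ m => g ρ m)
    rw [hb]
    calc ∑ j, g (ρ j) (t (ρ j)) = ∑ j, ∑ i, g (MulOpposite.op (c j i) • ρ j) (y i) := by
          refine Finset.sum_congr rfl fun j _ => ?_
          rw [h1 j, map_sum]
          refine Finset.sum_congr rfl fun i _ => ?_
          rw [LinearMap.map_smul]; rfl
      _ = ∑ i, g (∑ j, MulOpposite.op (c j i) • ρ j) (y i) := by
          rw [Finset.sum_comm]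
          refine Finset.sum_congr rfl fun i _ => ?_
          rw [map_sum, ChL.sum_apply]
      _ = 0 := by
          refine Finset.sum_eq_zero fun i _ => ?_
          have : ∑ j, MulOpposite.op (c j i) • ρ j = 0 := by
            apply Subtype.ext
            apply MulOpposite.unop_injective
            simpa using h2 i
          rw [this, map_zero]; rfl)
  refine ⟨LinearMap.toSpanSingleton Rᵐᵒᵖ (ChL M) (mkL χ), fun r hr => ChL.ext fun m => ?_⟩
  have := hχ (Finsupp.single ⟨r, hr⟩ m)
  have hβ : β (Finsupp.single ⟨r, hr⟩ m) = g ⟨r, hr⟩ m := Finsupp.liftAddHom_apply_single _ _ _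
  have hα : α (Finsupp.single ⟨r, hr⟩ m) = r.unop • m := Finsupp.liftAddHom_apply_single _ _ _
  rw [hα, hβ] at this
  exact this

lemma fs_eval {N : Type*} [AddCommGroup N] [Module R N] (φ : (ℕ →₀ R) →ₗ[R] N) (m : ℕ)
    (h : ∀ j, m ≤ j → φ (Finsupp.single j 1) = 0) (v : ℕ →₀ R) :
    φ v = ∑ j : Fin m, v j • φ (Finsupp.single (j : ℕ) 1) := by
  rw [Fin.sum_univ_eq_sum_range (fun j => v j • φ (Finsupp.single j 1)) m]
  induction v using Finsupp.induction_linear with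
  | zero => simp
  | add f g hf hg => simp [hf, hg, add_smul, Finset.sum_add_distrib]
  | single a b =>
    have : Finsupp.single a b = b • Finsupp.single a (1 : R) := by simp
    rw [this, map_smul]
    by_cases ha : a < m
    · rw [Finset.sum_eq_single a]
      · simp
      · intro j _ hj; simp [Finsupp.single_eq_of_ne hj]
      · simp [ha]
    · rw [h a (not_lt.1 ha), smul_zero]
      symm
      refine Finset.sum_eq_zero fun j hj => ?_
      have : j ≠ a := by rintro rfl; exact ha (Finset.mem_range.1 hj)
      simp [Finsupp.single_eq_of_ne this]

theorem FlatC.eq_critN (h : FlatC R M) (b : (ℕ →₀ R) →ₗ[R] M) (m : ℕ)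
    (hb : ∀ j, m ≤ j → b (Finsupp.single j 1) = 0) {t : ℕ} (v : Fin t → (ℕ →₀ R))
    (hv : ∀ l, b (v l) = 0) :
    ∃ (a : (ℕ →₀ R) →ₗ[R] (ℕ →₀ R)) (b' : (ℕ →₀ R) →ₗ[R] M) (m' : ℕ), (∀ z, b z = b' (a z)) ∧
      (∀ l, a (v l) = 0) ∧ (∀ j, m ≤ j → a (Finsupp.single j 1) = 0) ∧
      ∀ j, m' ≤ j → b' (Finsupp.single j 1) = 0 := by
  obtain ⟨n, c, y, h1, h2⟩ := h.eq_crit (fun j : Fin m => b (Finsupp.single (j : ℕ) 1))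
    (fun l j => v l j) (fun l => by rw [← fs_eval b m hb, hv])
  let a : (ℕ →₀ R) →ₗ[R] (ℕ →₀ R) := Finsupp.linearCombination R fun j =>
    if h : j < m then ∑ i : Fin n, c ⟨j, h⟩ i • Finsupp.single (i : ℕ) (1 : R) else 0
  let b' : (ℕ →₀ R) →ₗ[R] M := Finsupp.linearCombination R fun j =>
    if h : j < n then y ⟨j, h⟩ else 0
  have ha1 : ∀ j : Fin m, a (Finsupp.single (j : ℕ) 1) =
      ∑ i : Fin n, c j i • Finsupp.single (i : ℕ) (1 : R) := fun j => by simp [a]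
  have ha2 : ∀ j, m ≤ j → a (Finsupp.single j 1) = 0 := fun j hj => by
    simp [a, not_lt.2 hj]
  have hb1 : ∀ j : Fin n, b' (Finsupp.single (j : ℕ) 1) = y j := fun j => by simp [b']
  refine ⟨a, b', n, fun z => ?_, fun l => ?_, ha2, fun j hj => by simp [b', not_lt.2 hj]⟩
  · rw [fs_eval b m hb z, fs_eval a m ha2 z, map_sum]
    refine Finset.sum_congr rfl fun j _ => ?_
    rw [map_smul, ha1, map_sum, h1]
    simp only [map_smul, hb1]
  · rw [fs_eval a m ha2]
    simp only [ha1, Finset.smul_sum, smul_smul]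
    rw [Finset.sum_comm]
    refine Finset.sum_eq_zero fun i _ => ?_
    rw [← Finset.sum_smul, h2, zero_smul]

end GFP

namespace GFP

open QuiverGF

section K1

variable {R : Type u} [Ring R] {B : Type u} {M : Type u} [AddCommGroup M] [Module R M]

/-- The dual differential on functions. -/
noncomputable def Dh (d : B → (B →₀ R)) (h : B → M) (b : B) : M := Finsupp.linearCombination R h (d b)

lemma Dh_add (d : B → (B →₀ R)) (h k : B → M) (b : B) : Dh d (h + k) b = Dh d h b + Dh d k b := by
  simp [Dh, Finsupp.linearCombination_apply, Finsupp.sum_add]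

lemma Dh_sub (d : B → (B →₀ R)) (h k : B → M) (b : B) : Dh d (h - k) b = Dh d h b - Dh d k b := by
  simp [Dh, Finsupp.linearCombination_apply, smul_sub, Finsupp.sum_sub]

lemma Dh_Dh (d : B → (B →₀ R)) (k : B → M) (b : B) :
    Dh d (Dh d k) b = Finsupp.linearCombination R k (Finsupp.linearCombination R d (d b)) := by
  have : Finsupp.linearCombination R (Dh d k) =
    (Finsupp.linearCombination R k).comp (Finsupp.linearCombination R d) := by
    apply Finsupp.lhom_ext'
    intro b
    apply LinearMap.ext_ring
    simp [Dh]
  exact LinearMap.congr_fun this (d b)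

lemma Dh_congr (d : B → (B →₀ R)) (h k : B → M) (b : B) (H : ∀ c, d b c ≠ 0 → h c = k c) :
    Dh d h b = Dh d k b := by
  simp only [Dh, Finsupp.linearCombination_apply]
  refine Finsupp.sum_congr fun c hc => ?_
  rw [H c (Finsupp.mem_support_iff.1 hc)]

variable {E : Type u} [AddCommGroup E] [Module Rᵐᵒᵖ E]

/-- The differential with coefficients in a right module. -/
noncomputable def dE (d : B → (B →₀ R)) : (B →₀ E) →+ (B →₀ E) :=
  Finsupp.liftAddHom fun b => ∑ c ∈ (d b).support,
    (Finsupp.singleAddHom c).comp (DistribSMul.toAddMonoidHom E (MulOpposite.op (d b c)))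

lemma dE_single (d : B → (B →₀ R)) (b : B) (e : E) : dE d (Finsupp.single b e) =
    ∑ c ∈ (d b).support, Finsupp.single c (MulOpposite.op (d b c) • e) := by
  rw [dE, Finsupp.liftAddHom_apply_single, AddMonoidHom.finsetSum_apply]
  rfl

lemma dE_apply (d : B → (B →₀ R)) (z : B →₀ E) (c : B) :
    dE d z c = z.sum fun b e => MulOpposite.op (d b c) • e := by
  classical
  induction z using Finsupp.induction_linear with
  | zero => simp
  | add f g hf hg =>
    rw [map_add, Finsupp.add_apply, hf, hg, Finsupp.sum_add_index']
    · simp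
    · simp
  | single b e =>
    rw [dE_single, Finsupp.finsetSum_apply, Finsupp.sum_single_index (by simp)]
    by_cases hc : c ∈ (d b).support
    · rw [Finset.sum_eq_single c]
      · simp
      · intro x _ hx; simp [Finsupp.single_eq_of_ne hx.symm]
      · intro h; exact absurd hc h
    · have : d b c = 0 := by simpa using hc
      rw [this]; simp only [MulOpposite.op_zero, zero_smul]
      refine Finset.sum_eq_zero fun x hx => ?_
      have : c ≠ x := by rintro rfl; exact hc hx
      simp [Finsupp.single_eq_of_ne this]

lemma dE_nat {E' : Type u} [AddCommGroup E'] [Module Rᵐᵒᵖ E'] (φ : E →ₗ[Rᵐᵒᵖ] E')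
    (d : B → (B →₀ R)) (z : B →₀ E) :
    dE d (z.mapRange φ (map_zero φ)) = (dE d z).mapRange φ (map_zero φ) := by
  ext c
  rw [dE_apply, Finsupp.mapRange_apply, dE_apply, Finsupp.sum_mapRange_index (by simp), map_finsuppSum]
  simp

/-- pairing -/
noncomputable def prg (h : B → M) : (B →₀ ChL M) →+ QZ :=
  Finsupp.liftAddHom fun b => 
    ({ toFun := fun e => e (h b), map_zero' := rfl, map_add' := fun _ _ => rfl } : ChL M →+ QZ)

lemma prg_single (h : B → M) (b : B) (e : ChL M) : prg h (Finsupp.single b e) = e (h b) :=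
  Finsupp.liftAddHom_apply_single _ _ _

lemma prg_dE (d : B → (B →₀ R)) (h : B → M) (w : B →₀ ChL M) :
    prg h (dE d w) = prg (Dh d h) w := by
  induction w using Finsupp.induction_linear with
  | zero => simp
  | add f g hf hg => simp [hf, hg]
  | single b e =>
    rw [dE_single, map_sum, prg_single, Dh, Finsupp.linearCombination_apply, Finsupp.sum, map_sum]
    refine Finset.sum_congr rfl fun c _ => ?_
    rw [prg_single]; rfl

/-- supported on a set -/
def Sup {N : Type*} [Zero N] (S : Set B) (z : B →₀ N) : Prop := ∀ b, b ∉ S → z b = 0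

lemma dE_sup {d : B → (B →₀ R)} {S : Set B} (hS : ∀ b ∈ S, Sup S (d b)) {z : B →₀ E} (hz : Sup S z) :
    Sup S (dE d z) := by
  intro c hc
  rw [dE_apply]
  refine Finset.sum_eq_zero fun b hb => ?_
  have : b ∈ S := by by_contra h; exact (Finsupp.mem_support_iff.1 hb) (hz b h)
  show MulOpposite.op (d b c) • z b = 0
  rw [hS b this c hc]; simp

/-- exactness on a set -/
def EEx (d : B → (B →₀ R)) (N : Set B) : Prop :=
  ∀ (E : Type u) [AddCommGroup E] [Module Rᵐᵒᵖ E], Module.Injective Rᵐᵒᵖ E → ∀ z : B →₀ E,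
    Sup N z → dE d z = 0 → ∃ w, dE d w = z

theorem EEx.cpt {d : B → (B →₀ R)} {N : Set B} (h : EEx d N) (Q : Finset B) : ∃ Q' : Finset B,
    ∀ (E : Type u) [AddCommGroup E] [Module Rᵐᵒᵖ E], Module.Injective Rᵐᵒᵖ E → ∀ z : B →₀ E,
    Sup (Q : Set B) z → Sup N z → dE d z = 0 → ∃ w, Sup (Q' : Set B) w ∧ dE d w = z := by
  classical
  by_contra hc
  push Not at hc
  choose E i1 i2 hE z hz1 hz2 hz3 hz4 using hc
  haveI := hE
  let Z : B →₀ (∀ Q', E Q') := Finsupp.onFinset Q (fun b Q' => z Q' b) (by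
    intro b hb
    by_contra hbq
    exact hb (funext fun Q' => hz1 Q' b hbq))
  have hZ : ∀ Q', Z.mapRange (LinearMap.proj (R := Rᵐᵒᵖ) Q') (map_zero _) = z Q' := fun Q' => by
    ext b; simp [Z]
  have hinj : Module.Injective Rᵐᵒᵖ (∀ Q', E Q') := inferInstance
  obtain ⟨w, hw⟩ := h _ hinj Z (fun b hb => funext fun Q' => hz2 Q' b hb) (by
    ext b Q'
    have := dE_nat (LinearMap.proj (R := Rᵐᵒᵖ) (φ := E) Q') d Z
    rw [hZ, hz3] at this
    have := DFunLike.congr_fun this b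
    rw [Finsupp.mapRange_apply] at this
    exact this.symm)
  apply hz4 w.support (w.mapRange (LinearMap.proj (R := Rᵐᵒᵖ) w.support) (map_zero _))
  · intro b hb
    have : w b = 0 := by simpa using hb
    rw [Finsupp.mapRange_apply, this, map_zero]
  · rw [dE_nat, hw, hZ]

theorem step2 {d : B → (B →₀ R)} {N : Set B} (hM : FlatC R M) (V Q' : Finset B)
    (hVN : (V : Set B) ⊆ N)
    (hQ : ∀ (E : Type u) [AddCommGroup E] [Module Rᵐᵒᵖ E], Module.Injective Rᵐᵒᵖ E → ∀ z : B →₀ E,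
      Sup (V : Set B) z → Sup N z → dE d z = 0 → ∃ w, Sup (Q' : Set B) w ∧ dE d w = z)
    (h : B → M) (hh : ∀ q ∈ Q', Dh d h q = 0) : ∃ k : B → M, ∀ v ∈ V, h v = Dh d k v := by
  classical
  let H : AddSubgroup (V → M) :=
    { carrier := {y | ∃ k : B → M, ∀ v : V, y v = Dh d k v}
      zero_mem' := ⟨0, fun v => by simp [Dh, Finsupp.linearCombination_apply]⟩
      add_mem' := by
        rintro a b ⟨k, hk⟩ ⟨l, hl⟩
        exact ⟨k + l, fun v => by rw [Dh_add, ← hk, ← hl]; rfl⟩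
      neg_mem' := by
        rintro a ⟨k, hk⟩
        refine ⟨0 - k, fun v => ?_⟩
        rw [Dh_sub, ← hk]; simp [Dh, Finsupp.linearCombination_apply] }
  have key : (fun v : V => h v) ∈ H := by
    apply charsep_sub
    intro χ hχ
    let z : B →₀ ChL M := ∑ v : V, Finsupp.single (v : B)
      (mkL (χ.comp (AddMonoidHom.single (fun _ : V => M) v)))
    have hzV : Sup (V : Set B) z := by
      intro b hb
      rw [Finsupp.finsetSum_apply]
      refine Finset.sum_eq_zero fun v _ => ?_
      have : b ≠ v := by rintro rfl; exact hb v.2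
      rw [Finsupp.single_eq_of_ne this]
    have hpz : ∀ k : B → M, prg k z = χ (fun v => k v) := by
      intro k
      rw [map_sum]
      conv_rhs => rw [← Finset.univ_sum_single (fun v : V => k v)]
      rw [map_sum]
      refine Finset.sum_congr rfl fun v _ => ?_
      rw [prg_single]; rfl
    have hdz : dE d z = 0 := by
      ext c m
      have h1 : prg (Pi.single c m) (dE d z) = (dE d z c) m := by
        have : ∀ y : B →₀ ChL M, prg (Pi.single c m) y = (y c) m := by
          intro y
          induction y using Finsupp.induction_linear with
          | zero => simp
          | add f g hf hg => simp [hf, hg]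
          | single b e =>
            rw [prg_single]
            by_cases hbc : b = c
            · subst hbc; simp
            · rw [Pi.single_eq_of_ne hbc, Finsupp.single_eq_of_ne (Ne.symm hbc), map_zero]; rfl
        exact this _
      rw [← h1, prg_dE, hpz]
      exact hχ _ ⟨_, fun v => rfl⟩
    obtain ⟨w, hw1, hw2⟩ := hQ _ hM z hzV (fun b hb => hzV b (fun h => hb (hVN h))) hdz
    rw [← hpz, ← hw2, prg_dE]
    rw [prg, Finsupp.liftAddHom_apply]
    refine Finset.sum_eq_zero fun b hb => ?_
    have : b ∈ Q' := by by_contra h; exact (Finsupp.mem_support_iff.1 hb) (hw1 b h)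
    simp [hh b this]
  obtain ⟨k, hk⟩ := key
  exact ⟨k, fun v hv => hk ⟨v, hv⟩⟩

theorem ctbl {d : B → (B →₀ R)} {N : Set B} (hN : N.Countable) (hM : FlatC R M)
    (hd0 : ∀ b, b ∉ N → d b = 0) (hdN : ∀ b, Sup N (d b))
    (hdd : ∀ b, Finsupp.linearCombination R d (d b) = 0) (hE : EEx d N)
    (f : B → M) (hf : ∀ b, Dh d f b = 0) (hf0 : ∀ b, b ∉ N → f b = 0) :
    ∃ g : B → M, ∀ b, Dh d g b = f b := by
  classical
  choose T hT using hE.cpt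
  have fin : ∀ W : Finset B, ∃ g : B → M, ∀ b ∈ W, Dh d g b = f b := by
    intro W
    obtain ⟨k, hk⟩ := step2 hM (W.filter (· ∈ N)) (T _) (by intro b hb; simp at hb; exact hb.2)
      (fun E _ _ => hT _ E) f (fun q _ => hf q)
    refine ⟨k, fun b hb => ?_⟩
    by_cases hbN : b ∈ N
    · exact (hk b (by simp [hb, hbN])).symm
    · rw [hf0 b hbN, Dh, hd0 b hbN, map_zero]
  obtain ⟨e, he⟩ := Set.countable_iff_exists_injOn.1 hN
  have hfin : ∀ n : ℕ, {b | b ∈ N ∧ e b ≤ n}.Finite := fun n =>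
    Set.Finite.of_finite_image ((Set.finite_Iic n).subset (by rintro _ ⟨b, hb, rfl⟩; exact hb.2))
      (he.mono fun b hb => hb.1)
  let V : ℕ → Finset B := fun n => (hfin n).toFinset
  have hV : ∀ n b, b ∈ V n ↔ b ∈ N ∧ e b ≤ n := fun n b => by simp [V]
  let W : ℕ → Finset B := fun n => V n ∪ T (V n)
  have step : ∀ n (g : B → M), (∀ b ∈ W n, Dh d g b = f b) → ∃ g' : B → M,
      (∀ b ∈ W (n+1), Dh d g' b = f b) ∧ ∀ b ∈ V n, g' b = g b := by
    intro n g hg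
    obtain ⟨g1, hg1⟩ := fin (W (n+1) ∪ T (V n))
    obtain ⟨k, hk⟩ := step2 hM (V n) (T _) (by intro b hb; exact ((hV n b).1 hb).1)
      (fun E _ _ => hT _ E) (g1 - g) (fun q hq => by
        rw [Dh_sub, hg1 q (Finset.mem_union_right _ hq), hg q (Finset.mem_union_right _ hq), sub_self])
    refine ⟨g1 - Dh d k, fun b hb => ?_, fun b hb => ?_⟩
    · rw [Dh_sub, hg1 b (Finset.mem_union_left _ hb), Dh_Dh, hdd, map_zero, sub_zero]
    · have := hk b hb
      simp only [Pi.sub_apply] at this ⊢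
      rw [← this]; abel
  choose nx hnx1 hnx2 using step
  let G : ∀ n, {g : B → M // ∀ b ∈ W n, Dh d g b = f b} := fun n =>
    Nat.rec ⟨(fin (W 0)).choose, (fin (W 0)).choose_spec⟩ (fun n g => ⟨nx n g.1 g.2, hnx1 n g.1 g.2⟩) n
  have hG : ∀ n, ∀ b ∈ V n, (G (n+1)).1 b = (G n).1 b := fun n => hnx2 n _ (G n).2
  have hG' : ∀ n m, n ≤ m → ∀ b ∈ V n, (G m).1 b = (G n).1 b := by
    intro n m hnm
    induction m, hnm using Nat.le_induction with
    | base => intro b _; rfl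
    | succ m hnm ih =>
      intro b hb
      rw [hG m b ((hV m b).2 ⟨((hV n b).1 hb).1, ((hV n b).1 hb).2.trans hnm⟩), ih b hb]
  refine ⟨fun b => (G (e b)).1 b, fun b => ?_⟩
  by_cases hbN : b ∈ N
  · let m := e b + ∑ c ∈ (d b).support, e c
    rw [Dh_congr d _ (G m).1 b]
    · exact (G m).2 b (Finset.mem_union_left _ ((hV m b).2 ⟨hbN, Nat.le_add_right _ _⟩))
    · intro c hc
      have hcN : c ∈ N := by by_contra h; exact hc (hdN b c h)
      refine (hG' (e c) m ?_ c ((hV _ _).2 ⟨hcN, le_rfl⟩)).symm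
      exact (Finset.single_le_sum (f := e) (fun _ _ => Nat.zero_le _)
        (Finsupp.mem_support_iff.2 hc)).trans (Nat.le_add_left _ _)
  · rw [hf0 b hbN, Dh, hd0 b hbN, map_zero]

end K1
end GFP

namespace GFP

open QuiverGF

section K1b

variable {R : Type u} [Ring R] {B : Type u} {M : Type u} [AddCommGroup M] [Module R M]
variable {E : Type u} [AddCommGroup E] [Module Rᵐᵒᵖ E]

lemma Sup.mono {N : Type*} [Zero N] {S S' : Set B} (h : S ⊆ S') {z : B →₀ N} (hz : Sup S z) :
    Sup S' z := fun b hb => hz b fun h' => hb (h h')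
lemma Sup.add {N : Type*} [AddCommGroup N] {S : Set B} {z z' : B →₀ N} (h : Sup S z) (h' : Sup S z') :
    Sup S (z + z') := fun b hb => by simp [h b hb, h' b hb]
lemma Sup.sub {N : Type*} [AddCommGroup N] {S : Set B} {z z' : B →₀ N} (h : Sup S z) (h' : Sup S z') :
    Sup S (z - z') := fun b hb => by simp [h b hb, h' b hb]
lemma Sup.mem {N : Type*} [Zero N] {S : Set B} {z : B →₀ N} (h : Sup S z) {b} (hb : z b ≠ 0) : b ∈ S := by
  by_contra h'; exact hb (h b h')

lemma lc_filter {N : Type*} [AddCommGroup N] [Module R N] (p : B → Prop) [DecidablePred p] (k : B → N)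
    (v : B →₀ R) :
    Finsupp.linearCombination R k (v.filter p) =
      Finsupp.linearCombination R (fun x => if p x then k x else 0) v := by
  induction v using Finsupp.induction_linear with
  | zero => rw [Finsupp.filter_zero]; simp
  | add f g hf hg => rw [Finsupp.filter_add, map_add, map_add, hf, hg]
  | single b r =>
    by_cases h : p b
    · simp [Finsupp.filter_single_of_pos _ h, h]
    · simp [Finsupp.filter_single_of_neg _ h, h]

lemma lc_congr {N : Type*} [AddCommGroup N] [Module R N] (h k : B → N) (v : B →₀ R)
    (H : ∀ c, v c ≠ 0 → h c = k c) :
    Finsupp.linearCombination R h v = Finsupp.linearCombination R k v := by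
  simp only [Finsupp.linearCombination_apply]
  refine Finsupp.sum_congr fun c hc => ?_
  rw [H c (Finsupp.mem_support_iff.1 hc)]

lemma lc_filter' (p : B → Prop) [DecidablePred p] (d : B → (B →₀ R)) (v : B →₀ R) :
    Finsupp.linearCombination R (fun x => (d x).filter p) v =
      (Finsupp.linearCombination R d v).filter p := by
  induction v using Finsupp.induction_linear with
  | zero => rw [map_zero, map_zero, Finsupp.filter_zero]
  | add f g hf hg => rw [map_add, map_add, hf, hg, Finsupp.filter_add]
  | single b r => simp [Finsupp.filter_smul]

lemma dE_dE (d : B → (B →₀ R)) (z : B →₀ E) :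
    dE d (dE d z) = dE (fun b => Finsupp.linearCombination R d (d b)) z := by
  induction z using Finsupp.induction_linear with
  | zero => simp
  | add f g hf hg => simp [hf, hg]
  | single b e =>
    ext c
    rw [dE_single, map_sum, Finsupp.finsetSum_apply, dE_apply _ _ c, Finsupp.sum_single_index (by simp),
      Finsupp.linearCombination_apply, Finsupp.sum, Finsupp.finsetSum_apply]
    simp only [Finset.op_sum, Finset.sum_smul]
    refine Finset.sum_congr rfl fun x _ => ?_
    rw [dE_apply, Finsupp.sum_single_index (by simp)]
    simp [smul_smul]

/-- closed sets -/
structure TCl (d : B → (B →₀ R)) (T : Finset B → Finset B) (Y : Set B) : Prop where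
  d : ∀ b ∈ Y, Sup Y (d b)
  T : ∀ Q : Finset B, (Q : Set B) ⊆ Y → (T Q : Set B) ⊆ Y

lemma TCl.inter {d : B → (B →₀ R)} {T : Finset B → Finset B} {Y Z : Set B} (hY : TCl d T Y)
    (hZ : TCl d T Z) : TCl d T (Y ∩ Z) where
  d b hb c hc := by
    by_cases h : c ∈ Y
    · exact hZ.d b hb.2 c fun h' => hc ⟨h, h'⟩
    · exact hY.d b hb.1 c h
  T Q hQ := Set.subset_inter (hY.T Q fun _ h => (hQ h).1) (hZ.T Q fun _ h => (hQ h).2)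

lemma TCl.countable (d : B → (B →₀ R)) (T : Finset B → Finset B) (b : B) :
    ∃ Y, TCl d T Y ∧ b ∈ Y ∧ Y.Countable := by
  classical
  let nx : Set B → Set B := fun X => X ∪ (⋃ x : X, ((d x).support : Set B)) ∪
    ⋃ Q : Finset X, (T (Q.map (Function.Embedding.subtype _)) : Set B)
  let X : ℕ → Set B := fun n => nx^[n] {b}
  have hX : ∀ n, X (n+1) = nx (X n) := fun n => Function.iterate_succ_apply' _ _ _
  have hmono : Monotone X := monotone_nat_of_le_succ fun n => by
    rw [hX]; exact fun x hx => Or.inl (Or.inl hx)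
  refine ⟨⋃ n, X n, ⟨?_, ?_⟩, Set.mem_iUnion.2 ⟨0, rfl⟩, Set.countable_iUnion fun n => ?_⟩
  · intro x hx c hc
    obtain ⟨n, hn⟩ := Set.mem_iUnion.1 hx
    by_contra h
    refine hc (Set.mem_iUnion.2 ⟨n+1, ?_⟩)
    rw [hX]
    exact Or.inl (Or.inr (Set.mem_iUnion.2 ⟨⟨x, hn⟩, by simpa using h⟩))
  · intro Q hQ
    have : ∃ m, (Q : Set B) ⊆ X m := by
      induction Q using Finset.induction_on with
      | empty => exact ⟨0, by simp⟩
      | insert a s _ ih =>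
        obtain ⟨m, hm⟩ := ih (fun x hx => hQ (by simp; right; exact hx))
        obtain ⟨n, hn⟩ := Set.mem_iUnion.1 (hQ (show a ∈ _ by simp))
        refine ⟨m + n, fun x hx => ?_⟩
        simp only [Finset.coe_insert, Set.mem_insert_iff] at hx
        rcases hx with rfl | hx
        · exact hmono (Nat.le_add_left _ _) hn
        · exact hmono (Nat.le_add_right _ _) (hm hx)
    obtain ⟨m, hm⟩ := this
    refine fun x hx => Set.mem_iUnion.2 ⟨m+1, ?_⟩
    rw [hX]
    refine Or.inr (Set.mem_iUnion.2 ⟨Q.subtype (· ∈ X m), ?_⟩)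
    have : (Q.subtype (· ∈ X m)).map (Function.Embedding.subtype _) = Q := by
      apply Finset.subtype_map_of_mem
      exact fun x hx => hm hx
    rw [this]; exact hx
  · induction n with
    | zero => exact Set.countable_singleton b
    | succ n ih =>
      rw [hX]
      haveI := ih.to_subtype
      exact (ih.union (Set.countable_iUnion fun x => Finset.countable_toSet _)).union
        (Set.countable_iUnion fun x => Finset.countable_toSet _)

/-- The compactness datum. -/
def Cpt (d : B → (B →₀ R)) (T : Finset B → Finset B) : Prop :=
  ∀ (Q : Finset B) (E : Type u) [AddCommGroup E] [Module Rᵐᵒᵖ E], Module.Injective Rᵐᵒᵖ E →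
    ∀ z : B →₀ E, Sup (Q : Set B) z → dE d z = 0 → ∃ w, Sup (T Q : Set B) w ∧ dE d w = z

variable {d : B → (B →₀ R)} {T : Finset B → Finset B}

lemma Cpt.closed (h : Cpt d T) (hE : Module.Injective Rᵐᵒᵖ E) {Y : Set B} (hY : TCl d T Y) (z : B →₀ E)
    (hz : Sup Y z) (hdz : dE d z = 0) : ∃ w, Sup Y w ∧ dE d w = z := by
  obtain ⟨w, hw, hw'⟩ := h z.support E hE z (fun b hb => by simpa using hb) hdz
  exact ⟨w, hw.mono (hY.T _ fun b hb => hz.mem (by simpa using hb)), hw'⟩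

lemma Cpt.list (h : Cpt d T) (hdd : ∀ b, Finsupp.linearCombination R d (d b) = 0)
    (hE : Module.Injective Rᵐᵒᵖ E) (l : List (Set B)) (hl : ∀ Y ∈ l, TCl d T Y) :
    ∀ C, TCl d T C → ∀ z : B →₀ E, Sup (C ∩ {b | ∃ Y ∈ l, b ∈ Y}) z → dE d z = 0 →
      ∃ w, Sup (C ∩ {b | ∃ Y ∈ l, b ∈ Y}) w ∧ dE d w = z := by
  classical
  induction l with
  | nil =>
    intro C hC z hz _
    refine ⟨0, fun _ _ => rfl, ?_⟩
    ext b; rw [hz b (by simp)]; simp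
  | cons Y l ih =>
    intro C hC z hz hdz
    have hdE : ∀ x : B →₀ E, dE d (dE d x) = 0 := fun x => by
      rw [dE_dE]; ext c; rw [dE_apply]; simp [hdd]
    have hY := hl Y (by simp)
    have ih' := ih (fun Y' h' => hl Y' (by simp [h']))
    have hcl : ∀ Z, TCl d T Z → ∀ b ∈ Z ∩ {b | ∃ Y ∈ l, b ∈ Y},
        Sup (Z ∩ {b | ∃ Y ∈ l, b ∈ Y}) (d b) := by
      rintro Z hZ b ⟨hb1, Y', hY', hb2⟩ c hc
      by_contra h0
      refine hc ⟨(hZ.d b hb1).mem h0, Y', hY', ((hl Y' (by simp [hY'])).d b hb2).mem h0⟩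
    let y := z.filter (· ∈ Y)
    let s := z.filter (fun b => ¬ (b ∈ Y))
    have hys : y + s = z := Finsupp.filter_pos_add_filter_neg _ _
    have hy : Sup (C ∩ Y) y := by
      intro b hb
      by_cases hbY : b ∈ Y
      · rw [Finsupp.filter_apply_pos _ _ hbY]
        exact hz b fun h => hb ⟨h.1, hbY⟩
      · exact Finsupp.filter_apply_neg _ _ hbY
    have hs : Sup (C ∩ {b | ∃ Y ∈ l, b ∈ Y}) s := by
      intro b hb
      by_cases hbY : b ∈ Y
      · exact Finsupp.filter_apply_neg _ _ (not_not.2 hbY)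
      · refine (Finsupp.filter_apply_pos (fun b => ¬ (b ∈ Y)) z hbY).trans ?_
        refine hz b ?_
        rintro ⟨h1, Y', h2, h3⟩
        rcases List.mem_cons.1 h2 with rfl | h2
        · exact hbY h3
        · exact hb ⟨h1, Y', h2, h3⟩
    have hds : dE d y = - dE d s := by
      rw [eq_neg_iff_add_eq_zero, ← map_add, hys, hdz]
    have h1 : Sup ((C ∩ Y) ∩ {b | ∃ Y ∈ l, b ∈ Y}) (dE d y) := by
      intro b hb
      by_cases hbCY : b ∈ C ∩ Y
      · rw [hds, Finsupp.neg_apply, dE_sup (hcl C hC) hs b fun h => hb ⟨hbCY, h.2⟩, neg_zero]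
      · exact dE_sup (hC.inter hY).d hy b hbCY
    obtain ⟨w, hw, hwd⟩ := ih' (C ∩ Y) (hC.inter hY) _ h1 (hdE _)
    obtain ⟨w1, hw1, hwd1⟩ := h.closed hE (hC.inter hY) (y - w)
      (hy.sub (hw.mono Set.inter_subset_left)) (by rw [map_sub, hwd, sub_self])
    obtain ⟨w2, hw2, hwd2⟩ := ih' C hC (s + w)
      (hs.add (hw.mono (S' := C ∩ {b | ∃ Y ∈ l, b ∈ Y}) fun b hb => ⟨hb.1.1, hb.2⟩)) (by rw [map_add, hwd, hds, add_neg_cancel])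
    refine ⟨w1 + w2, (hw1.mono ?_).add (hw2.mono ?_), ?_⟩
    · rintro b ⟨hb1, hb2⟩; exact ⟨hb1, Y, by simp, hb2⟩
    · rintro b ⟨hb1, Y', hb2, hb3⟩; exact ⟨hb1, Y', by simp [hb2], hb3⟩
    · rw [map_add, hwd1, hwd2, ← hys]; abel

/-- unions of closed sets -/
def Good (d : B → (B →₀ R)) (T : Finset B → Finset B) (S : Set B) : Prop :=
  ∀ b ∈ S, ∃ Y, TCl d T Y ∧ b ∈ Y ∧ Y ⊆ S

lemma Good.dcl {S : Set B} (h : Good d T S) : ∀ b ∈ S, Sup S (d b) := fun b hb => by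
  obtain ⟨Y, h1, h2, h3⟩ := h b hb
  exact (h1.d b h2).mono h3

lemma Good.exact {S : Set B} (hS : Good d T S) (h : Cpt d T)
    (hdd : ∀ b, Finsupp.linearCombination R d (d b) = 0)
    (hE : Module.Injective Rᵐᵒᵖ E) (z : B →₀ E) (hz : Sup S z) (hdz : dE d z = 0) :
    ∃ w, Sup S w ∧ dE d w = z := by
  choose! Y hY1 hY2 hY3 using hS
  obtain ⟨w, hw, hw'⟩ := h.list hdd hE (z.support.toList.map Y) (by
      intro Z hZ
      obtain ⟨b, hb, rfl⟩ := List.mem_map.1 hZ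
      exact hY1 b (hz.mem (by simpa using hb))) Set.univ
    ⟨fun b _ c hc => absurd trivial hc, fun _ _ _ _ => trivial⟩ z (by
      intro b hb
      by_contra h0
      exact hb ⟨trivial, Y b, List.mem_map.2 ⟨b, by simpa using h0, rfl⟩, hY2 b (hz.mem h0)⟩) hdz
  refine ⟨w, hw.mono ?_, hw'⟩
  rintro b ⟨-, Z, hZ, hb⟩
  obtain ⟨b', hb', rfl⟩ := List.mem_map.1 hZ
  exact hY3 b' (hz.mem (by simpa using hb')) hb

end K1b
end GFP

namespace GFP

open QuiverGF

section K1c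

variable {R : Type u} [Ring R] {B : Type u} {M : Type u} [AddCommGroup M] [Module R M]
variable {d : B → (B →₀ R)} {T : Finset B → Finset B}

lemma k1_ext (hcpt : Cpt d T) (hdd : ∀ b, Finsupp.linearCombination R d (d b) = 0) (hM : FlatC R M)
    (f : B → M) (hf : ∀ b, Dh d f b = 0) {S Y : Set B} (hS : Good d T S) (hY : TCl d T Y)
    (hYc : Y.Countable) (g : B → M) (hg : ∀ b ∈ S, Dh d g b = f b) :
    ∃ g' : B → M, (∀ b ∈ S, g' b = g b) ∧ ∀ b ∈ S ∪ Y, Dh d g' b = f b := by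
  classical
  let N : Set B := Y \ S
  have hS' : Good d T (S ∪ Y) := by
    rintro b (hb | hb)
    · obtain ⟨Z, h1, h2, h3⟩ := hS b hb
      exact ⟨Z, h1, h2, fun x hx => Or.inl (h3 hx)⟩
    · exact ⟨Y, hY, hb, fun x hx => Or.inr hx⟩
  have hN : ∀ b, b ∈ S ∪ Y → b ∉ S → b ∈ N := by
    rintro b (hb | hb) h
    · exact absurd hb h
    · exact ⟨hb, h⟩
  let d' : B → (B →₀ R) := fun b => if b ∈ N then (d b).filter (· ∈ N) else 0
  let f1 : B → M := fun b => f b - Dh d g b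
  have hf1S : ∀ b ∈ S, f1 b = 0 := fun b hb => by simp [f1, hg b hb]
  have hf1 : ∀ b, Dh d f1 b = 0 := fun b => by
    have : f1 = f - Dh d g := rfl
    rw [this, Dh_sub, hf, Dh_Dh, hdd, map_zero, sub_zero]
  let f' : B → M := fun b => if b ∈ N then f1 b else 0
  have hD : ∀ (k : B → M), ∀ b ∈ N, Dh d' k b = Dh d (fun x => if x ∈ N then k x else 0) b := by
    intro k b hb
    simp only [Dh, d', if_pos hb]
    exact lc_filter _ _ _
  have hd'N : ∀ b, Sup N (d' b) := by
    intro b c hc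
    by_cases hb : b ∈ N
    · simp only [d', if_pos hb]
      exact Finsupp.filter_apply_neg _ _ hc
    · simp [d', hb]
  have hd0 : ∀ b, b ∉ N → d' b = 0 := fun b hb => by simp [d', hb]
  have hd'f : ∀ b ∈ S ∪ Y, d' b = (d b).filter (· ∈ N) := by
    intro b hb
    by_cases hbN : b ∈ N
    · simp [d', hbN]
    · rw [hd0 b hbN]
      have hbS : b ∈ S := by by_contra h; exact hbN (hN b hb h)
      ext c
      by_cases hc : c ∈ N
      · rw [Finsupp.filter_apply_pos (· ∈ N) _ hc, hS.dcl b hbS c hc.2]; rfl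
      · rw [Finsupp.filter_apply_neg (· ∈ N) _ hc]; rfl
  have hdE' : ∀ (E : Type u) [AddCommGroup E] [Module Rᵐᵒᵖ E] (w : B →₀ E), Sup (S ∪ Y) w →
      dE d' w = (dE d w).filter (· ∈ N) := by
    intro E _ _ w hw
    ext c
    by_cases hc : c ∈ N
    · rw [Finsupp.filter_apply_pos (· ∈ N) _ hc, dE_apply, dE_apply]
      refine Finsupp.sum_congr fun b hb => ?_
      rw [hd'f b (hw.mem (Finsupp.mem_support_iff.1 hb)), Finsupp.filter_apply_pos (· ∈ N) _ hc]
    · rw [Finsupp.filter_apply_neg (· ∈ N) _ hc, dE_apply]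
      refine Finset.sum_eq_zero fun b hb => ?_
      show MulOpposite.op (d' b c) • w b = 0
      rw [hd'N b c hc]; simp
  obtain ⟨k, hk⟩ := ctbl (d := d') (N := N) (hYc.mono Set.diff_subset) hM hd0 hd'N (by
      intro b
      by_cases hb : b ∈ N
      · rw [hd'f b (Or.inr hb.1), lc_filter,
          lc_congr (k := fun x => (d x).filter (· ∈ N)), lc_filter', hdd, Finsupp.filter_zero]
        intro c hc
        rw [← hd'f c ((hS'.dcl b (Or.inr hb.1)).mem hc)]
        by_cases hcN : c ∈ N
        · simp [hcN]
        · simp [hcN, hd0 c hcN]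
      · rw [hd0 b hb, map_zero]) (by
      intro E _ _ hE z hz hdz
      have hzS' : Sup (S ∪ Y) z := hz.mono fun b hb => Or.inr hb.1
      have h1 : Sup S (dE d z) := by
        intro c hc
        by_cases hcS : c ∈ S ∪ Y
        · have := DFunLike.congr_fun (hdE' E z hzS') c
          rw [hdz, Finsupp.filter_apply_pos (· ∈ N) _ (hN c hcS hc)] at this
          exact this.symm
        · exact dE_sup hS'.dcl hzS' c hcS
      obtain ⟨w1, hw1, hw1'⟩ := hS.exact hcpt hdd hE _ h1 (by
        rw [dE_dE]; ext c; rw [dE_apply]; simp [hdd])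
      obtain ⟨w, hw, hw'⟩ := hS'.exact hcpt hdd hE (z - w1)
        (hzS'.sub (hw1.mono Set.subset_union_left)) (by rw [map_sub, hw1', sub_self])
      refine ⟨w, ?_⟩
      rw [hdE' E w hw, hw']
      ext c
      by_cases hc : c ∈ N
      · rw [Finsupp.filter_apply_pos (· ∈ N) _ hc, Finsupp.sub_apply, hw1 c hc.2, sub_zero]
      · rw [Finsupp.filter_apply_neg (· ∈ N) _ hc, hz c hc]) f' (by
      intro b
      by_cases hb : b ∈ N
      · refine (hD f' b hb).trans (Eq.trans ?_ (hf1 b))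
        apply Dh_congr
        intro c hc
        by_cases hcN : c ∈ N
        · simp [f', hcN]
        · have : c ∈ S := by
            by_contra h
            exact hcN (hN c ((hS'.dcl b (Or.inr hb.1)).mem hc) h)
          simp [hcN, hf1S c this]
      · rw [Dh, hd0 b hb, map_zero]) (by intro b hb; simp [f', hb])
  refine ⟨g + fun x => if x ∈ N then k x else 0, ?_, ?_⟩
  · intro b hb
    have : b ∉ N := fun h => h.2 hb
    simp [this]
  · intro b hb
    rw [Dh_add]
    by_cases hbN : b ∈ N
    · rw [← hD k b hbN, hk]
      simp [f', hbN, f1]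
    · have hbS : b ∈ S := by by_contra h; exact hbN (hN b hb h)
      rw [hg b hbS, Dh_congr d _ (fun _ => (0 : M)) b]
      · simp [Dh, Finsupp.linearCombination_apply]
      · intro c hc
        have : c ∉ N := fun h => h.2 ((hS.dcl b hbS).mem hc)
        simp [this]

theorem k1_based (hcpt : Cpt d T) (hdd : ∀ b, Finsupp.linearCombination R d (d b) = 0) (hM : FlatC R M)
    (f : B → M) (hf : ∀ b, Dh d f b = 0) : ∃ g : B → M, ∀ b, Dh d g b = f b := by
  classical
  let X := {p : Set B × (B → M) // Good d T p.1 ∧ ∀ b ∈ p.1, Dh d p.2 b = f b}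
  let r : X → X → Prop := fun p q => p.1.1 ⊆ q.1.1 ∧ ∀ b ∈ p.1.1, q.1.2 b = p.1.2 b
  obtain ⟨m, hm⟩ := exists_maximal_of_chains_bounded (r := r) (by
    intro c hc
    let S : Set B := {b | ∃ p ∈ c, b ∈ p.1.1}
    let g : B → M := fun b => if h : ∃ p ∈ c, b ∈ p.1.1 then h.choose.1.2 b else 0
    have hg : ∀ p ∈ c, ∀ b ∈ p.1.1, g b = p.1.2 b := by
      intro p hp b hb
      have h : ∃ p ∈ c, b ∈ p.1.1 := ⟨p, hp, hb⟩
      simp only [g, dif_pos h]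
      by_cases hpq : h.choose = p
      · rw [hpq]
      · rcases hc h.choose_spec.1 hp hpq with h' | h'
        · exact (h'.2 b h.choose_spec.2).symm
        · exact h'.2 b hb
    refine ⟨⟨(S, g), ?_, ?_⟩, ?_⟩
    · rintro b ⟨p, hp, hb⟩
      obtain ⟨Y, h1, h2, h3⟩ := p.2.1 b hb
      exact ⟨Y, h1, h2, fun x hx => ⟨p, hp, h3 hx⟩⟩
    · rintro b ⟨p, hp, hb⟩
      show Dh d g b = f b
      rw [← p.2.2 b hb]
      apply Dh_congr
      intro x hx
      exact hg p hp x ((p.2.1.dcl b hb).mem hx)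
    · intro p hp
      exact ⟨fun b hb => ⟨p, hp, hb⟩, fun b hb => hg p hp b hb⟩) (by
    intro a b c h1 h2
    exact ⟨h1.1.trans h2.1, fun x hx => (h2.2 x (h1.1 hx)).trans (h1.2 x hx)⟩)
  refine ⟨m.1.2, fun b => ?_⟩
  by_cases hb : b ∈ m.1.1
  · exact m.2.2 b hb
  · exfalso
    obtain ⟨Y, hY, hbY, hYc⟩ := TCl.countable d T b
    obtain ⟨g', h1, h2⟩ := k1_ext hcpt hdd hM f hf m.2.1 hY hYc m.1.2 m.2.2
    have hS' : Good d T (m.1.1 ∪ Y) := by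
      rintro b (hb | hb)
      · obtain ⟨Z, h1, h2, h3⟩ := m.2.1 b hb
        exact ⟨Z, h1, h2, fun x hx => Or.inl (h3 hx)⟩
      · exact ⟨Y, hY, hb, fun x hx => Or.inr hx⟩
    exact hb ((hm ⟨(m.1.1 ∪ Y, g'), hS', h2⟩ ⟨fun x hx => Or.inl hx, h1⟩).1 (Or.inr hbY))

lemma HEx.eex (D : (B →₀ R) →ₗ[R] (B →₀ R)) (h : HEx D D) :
    EEx (fun b => D (Finsupp.single b 1)) Set.univ := by
  intro E _ _ hE z _ hdz
  set d := fun b => D (Finsupp.single b 1)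
  have : z ∈ (dE (E := E) d).range := by
    apply charsep_sub
    intro χ hχ
    let φ : (B →₀ R) →ₗ[R] ChR E := Finsupp.linearCombination R fun b =>
      mkR (χ.comp (Finsupp.singleAddHom b))
    have hφ : ∀ b e, φ (Finsupp.single b 1) e = χ (Finsupp.single b e) := by
      intro b e
      simp only [φ, Finsupp.linearCombination_single, one_smul]; rfl
    have hpair : ∀ (ψ : (B →₀ R) →ₗ[R] ChR E) b e, ψ (d b) e =
        ∑ c ∈ (d b).support, ψ (Finsupp.single c 1) (MulOpposite.op (d b c) • e) := by
      intro ψ b e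
      have : d b = ∑ c ∈ (d b).support, (d b c) • Finsupp.single c (1 : R) := by
        conv_lhs => rw [← Finsupp.sum_single (d b)]
        simp [Finsupp.sum]
      conv_lhs => rw [this]
      rw [map_sum]
      have hs : ∀ (s : Finset B) (F : B → ChR E), (∑ c ∈ s, F c) e = ∑ c ∈ s, F c e := by
        intro s F
        classical
        induction s using Finset.induction_on with
        | empty => rfl
        | insert a s ha ih => rw [Finset.sum_insert ha, Finset.sum_insert ha, ← ih]; rfl
      rw [hs]
      refine Finset.sum_congr rfl fun c _ => ?_
      rw [LinearMap.map_smul]; rfl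
    obtain ⟨ψ, hψ⟩ := h E hE φ (by
      intro a
      have : φ ∘ₗ D = 0 := by
        apply Finsupp.lhom_ext'
        intro b
        apply LinearMap.ext_ring
        apply ChR.ext
        intro e
        change φ (d b) e = 0
        rw [hpair, ← hχ (dE d (Finsupp.single b e)) ⟨_, rfl⟩, dE_single, map_sum]
        exact Finset.sum_congr rfl fun c _ => hφ c _
      exact LinearMap.congr_fun this a)
    let χ' : (B →₀ E) →+ QZ := Finsupp.liftAddHom fun b => (ψ (Finsupp.single b 1) : E →+ QZ)
    have hχ' : ∀ b e, χ' (Finsupp.single b e) = ψ (Finsupp.single b 1) e := fun b e =>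
      Finsupp.liftAddHom_apply_single _ _ _
    have : χ = χ'.comp (dE d) := by
      apply Finsupp.addHom_ext
      intro b e
      rw [← hφ, ← hψ]
      change ψ (d b) e = χ' (dE d (Finsupp.single b e))
      rw [hpair, dE_single, map_sum]
      exact Finset.sum_congr rfl fun c _ => (hχ' c _).symm
    rw [this]
    simp [hdz]
  exact this

theorem k1_fs (D : (B →₀ R) →ₗ[R] (B →₀ R)) (h : HEx D D) (hDD : ∀ x, D (D x) = 0)
    (hM : FlatC R M) (f : (B →₀ R) →ₗ[R] M) (hf : ∀ x, f (D x) = 0) :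
    ∃ g : (B →₀ R) →ₗ[R] M, ∀ x, g (D x) = f x := by
  choose T hT using (h.eex).cpt
  have hlc : Finsupp.linearCombination R (fun b => D (Finsupp.single b 1)) = D := by
    apply Finsupp.lhom_ext'
    intro b
    apply LinearMap.ext_ring
    simp
  have hlf : Finsupp.linearCombination R (fun b => f (Finsupp.single b 1)) = f := by
    apply Finsupp.lhom_ext'
    intro b
    apply LinearMap.ext_ring
    simp
  obtain ⟨g, hg⟩ := k1_based (T := T) (d := fun b => D (Finsupp.single b 1))
    (fun Q E _ _ hE z h1 h2 => hT Q E hE z h1 (fun b hb => absurd trivial hb) h2)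
    (fun b => by rw [hlc, hDD]) hM (fun b => f (Finsupp.single b 1))
    (fun b => by rw [Dh, hlf, hf])
  refine ⟨Finsupp.linearCombination R g, fun x => ?_⟩
  have : Finsupp.linearCombination R g ∘ₗ D = f := by
    apply Finsupp.lhom_ext'
    intro b
    apply LinearMap.ext_ring
    exact hg b
  exact LinearMap.congr_fun this x

theorem k1 {P : Type u} [AddCommGroup P] [Module R P] [Module.Free R P] (D : P →ₗ[R] P) (h : HEx D D)
    (hDD : ∀ x, D (D x) = 0) (hM : FlatC R M) (f : P →ₗ[R] M) (hf : ∀ x, f (D x) = 0) :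
    ∃ g : P →ₗ[R] M, ∀ x, g (D x) = f x := by
  let e := (Module.Free.chooseBasis R P).repr
  obtain ⟨g, hg⟩ := k1_fs (e.toLinearMap ∘ₗ D ∘ₗ e.symm.toLinearMap) (by
    intro E _ _ hE φ hφ
    obtain ⟨ψ, hψ⟩ := h E hE (φ ∘ₗ e.toLinearMap) (fun a => by
      have := hφ (e a); simpa using this)
    exact ⟨ψ ∘ₗ e.symm.toLinearMap, fun b => by simp [hψ]⟩) (by intro x; simp [hDD]) hM
      (f ∘ₗ e.symm.toLinearMap) (fun x => by simp [hf])
  exact ⟨g ∘ₗ e.toLinearMap, fun x => by simpa using hg (e x)⟩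

end K1c
end GFP

namespace GFP

open QuiverGF

section K2

/-- Formal cells to be attached. -/
inductive Cell (R : Type u) [Ring R] (F : Type u) : Type u
  | mk (S : ℕ × ℕ → (ℕ × ℕ →₀ R)) (x : ℕ × ℕ → F) (l : ℕ × ℕ → ℕ) (c : ∀ j, Fin (l j) → Cell R F)
      (a : ∀ j, Fin (l j) → R) (j0 : ℕ × ℕ) : Cell R F

variable {R : Type u} [Ring R] {F : Type u} [AddCommGroup F] [Module R F]

/-- attaching element -/
noncomputable def cq {C : Type u} (x : ℕ × ℕ → F) (l : ℕ × ℕ → ℕ) (c : ∀ j, Fin (l j) → C)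
    (a : ∀ j, Fin (l j) → R) (j : ℕ × ℕ) : F × (C →₀ R) :=
  (x j, ∑ t, a j t • Finsupp.single (c j t) 1)

/-- boundary of a cell, unrestricted -/
noncomputable def dc : Cell R F → F × (Cell R F →₀ R)
  | .mk S x l c a j0 => cq x l c a j0 -
      Finsupp.linearCombination R (fun j => ((0 : F), Finsupp.single (Cell.mk S x l c a j) (1 : R))) (S j0)

/-- the differential extended by generators -/
noncomputable def dX {C : Type u} (d : F →ₗ[R] F) (b : C → F × (C →₀ R)) :
    (F × (C →₀ R)) →ₗ[R] F × (C →₀ R) :=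
  (LinearMap.inl R F (C →₀ R) ∘ₗ d).coprod (Finsupp.linearCombination R b)

lemma dX_inl {C : Type u} (d : F →ₗ[R] F) (b : C → F × (C →₀ R)) (f : F) : dX d b (f, 0) = (d f, 0) := by
  simp [dX]

lemma dX_inr {C : Type u} (d : F →ₗ[R] F) (b : C → F × (C →₀ R)) (c : C) :
    dX d b (0, Finsupp.single c 1) = b c := by
  simp [dX]

/-- valid cells -/
inductive Valid (d : F →ₗ[R] F) : Cell R F → Prop
  | mk (S : ℕ × ℕ → (ℕ × ℕ →₀ R)) (x : ℕ × ℕ → F) (l : ℕ × ℕ → ℕ) (c : ∀ j, Fin (l j) → Cell R F)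
      (a : ∀ j, Fin (l j) → R) (j0 : ℕ × ℕ) (h : ∀ j t, Valid d (c j t))
      (hS : ∀ j, Finsupp.linearCombination R S (S j) = 0)
      (hq : ∀ j, dX d dc (cq x l c a j) = Finsupp.linearCombination R (cq x l c a) (S j)) :
      Valid d (Cell.mk S x l c a j0)

variable (d : F →ₗ[R] F)

lemma Valid.sub {S : ℕ × ℕ → (ℕ × ℕ →₀ R)} {x : ℕ × ℕ → F} {l : ℕ × ℕ → ℕ} {c : ∀ j, Fin (l j) → Cell R F}
      {a : ∀ j, Fin (l j) → R} {j0 : ℕ × ℕ} (h : Valid d (Cell.mk S x l c a j0)) :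
    ∀ j t, Valid d (c j t) := by cases h; assumption

lemma Valid.sq {S : ℕ × ℕ → (ℕ × ℕ →₀ R)} {x : ℕ × ℕ → F} {l : ℕ × ℕ → ℕ} {c : ∀ j, Fin (l j) → Cell R F}
      {a : ∀ j, Fin (l j) → R} {j0 : ℕ × ℕ} (h : Valid d (Cell.mk S x l c a j0)) :
    ∀ j, Finsupp.linearCombination R S (S j) = 0 := by cases h; assumption

lemma Valid.eq {S : ℕ × ℕ → (ℕ × ℕ →₀ R)} {x : ℕ × ℕ → F} {l : ℕ × ℕ → ℕ} {c : ∀ j, Fin (l j) → Cell R F}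
      {a : ∀ j, Fin (l j) → R} {j0 : ℕ × ℕ} (h : Valid d (Cell.mk S x l c a j0)) :
    ∀ j, dX d dc (cq x l c a j) = Finsupp.linearCombination R (cq x l c a) (S j) := by cases h; assumption

lemma Valid.sib {S : ℕ × ℕ → (ℕ × ℕ →₀ R)} {x : ℕ × ℕ → F} {l : ℕ × ℕ → ℕ} {c : ∀ j, Fin (l j) → Cell R F}
      {a : ∀ j, Fin (l j) → R} {j0 : ℕ × ℕ} (h : Valid d (Cell.mk S x l c a j0)) (j : ℕ × ℕ) :
    Valid d (Cell.mk S x l c a j) := Valid.mk _ _ _ _ _ _ (h.sub) (h.sq) (h.eq)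

/-- type of valid cells -/
abbrev VC := {c : Cell R F // Valid d c}

/-- boundary of a valid cell -/
noncomputable def dV : VC d → F × (VC d →₀ R)
  | ⟨.mk S x l c a j0, h⟩ => cq x l (fun j t => (⟨c j t, h.sub d j t⟩ : VC d)) a j0 -
      Finsupp.linearCombination R
        (fun j => ((0 : F), Finsupp.single (⟨Cell.mk S x l c a j, h.sib d j⟩ : VC d) (1 : R))) (S j0)

/-- inclusion into the unrestricted module -/
noncomputable def io : (F × (VC d →₀ R)) →ₗ[R] F × (Cell R F →₀ R) :=
  LinearMap.prodMap LinearMap.id (Finsupp.lmapDomain R R Subtype.val)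

lemma io_inj : Function.Injective (io d) := by
  rintro ⟨a, b⟩ ⟨a', b'⟩ h
  simp only [io, LinearMap.prodMap_apply, Prod.mk.injEq] at h
  exact Prod.ext h.1 (Finsupp.mapDomain_injective Subtype.val_injective h.2)

lemma io_single (c : VC d) : io d (0, Finsupp.single c 1) = (0, Finsupp.single c.1 1) := by
  simp [io]

lemma io_cq (x : ℕ × ℕ → F) (l : ℕ × ℕ → ℕ) (c : ∀ j, Fin (l j) → VC d)
    (a : ∀ j, Fin (l j) → R) (j : ℕ × ℕ) : io d (cq x l c a j) = cq x l (fun j t => (c j t).1) a j := by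
  simp only [io, cq, LinearMap.prodMap_apply, map_sum, map_smul]
  simp

lemma io_dV (c : VC d) : io d (dV d c) = dc c.1 := by
  obtain ⟨⟨S, x, l, c, a, j0⟩, h⟩ := c
  simp only [dV, dc, map_sub, io_cq]
  congr 1
  rw [← LinearMap.comp_apply]
  congr 1
  apply Finsupp.lhom_ext'
  intro j
  apply LinearMap.ext_ring
  simp [io]

lemma io_dX (y) : io d (dX d (dV d) y) = dX d dc (io d y) := by
  rw [← LinearMap.comp_apply, ← LinearMap.comp_apply]
  congr 1
  apply LinearMap.prod_ext
  · ext f <;> simp [io, dX]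
  · apply Finsupp.lhom_ext'
    intro j
    apply LinearMap.ext_ring
    simp only [LinearMap.comp_apply, Finsupp.lsingle_apply, LinearMap.inr_apply]
    rw [dX_inr, io_dV, io_single, dX_inr]

lemma dc_sq (c : Cell R F) (h : Valid d c) : dX d dc (dc c) = 0 := by
  obtain ⟨S, x, l, c, a, j0⟩ := c
  have h1 : ∀ j, dX d dc (0, Finsupp.single (Cell.mk S x l c a j) (1 : R)) = cq x l c a j -
      Finsupp.linearCombination R (fun j => ((0 : F), Finsupp.single (Cell.mk S x l c a j) (1 : R))) (S j) :=
    fun j => by rw [dX_inr]; rfl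
  rw [dc, map_sub, h.eq d j0]
  set T := Finsupp.linearCombination R (fun j => ((0 : F), Finsupp.single (Cell.mk S x l c a j) (1 : R)))
  have h2 : dX d dc ∘ₗ T = Finsupp.linearCombination R (cq x l c a) - T ∘ₗ Finsupp.linearCombination R S := by
    apply Finsupp.lhom_ext'
    intro j
    apply LinearMap.ext_ring
    simp only [LinearMap.comp_apply, Finsupp.lsingle_apply, LinearMap.sub_apply,
      Finsupp.linearCombination_single, one_smul]
    rw [← h1]
    simp [T]
  have := LinearMap.congr_fun h2 (S j0)
  simp only [LinearMap.comp_apply, LinearMap.sub_apply, h.sq d j0, map_zero, sub_zero] at this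
  rw [this, sub_self]

lemma dX_sq (hd : ∀ x, d (d x) = 0) (y) : dX d (dV d) (dX d (dV d) y) = 0 := by
  rw [← LinearMap.comp_apply, ← LinearMap.zero_apply (σ₁₂ := RingHom.id R) (M₂ := F × (VC d →₀ R)) y]
  congr 1
  apply LinearMap.prod_ext
  · apply LinearMap.ext
    intro f
    simp only [LinearMap.comp_apply, LinearMap.inl_apply, dX_inl, hd]
    rfl
  · apply Finsupp.lhom_ext'
    intro j
    apply LinearMap.ext_ring
    apply io_inj
    simp only [LinearMap.comp_apply, Finsupp.lsingle_apply, LinearMap.inr_apply]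
    rw [dX_inr, io_dX, io_dV, dc_sq d _ j.2]
    simp

theorem attach (S : ℕ × ℕ → (ℕ × ℕ →₀ R)) (hS : ∀ j, Finsupp.linearCombination R S (S j) = 0)
    (q : ℕ × ℕ → F × (VC d →₀ R))
    (hq : ∀ j, dX d (dV d) (q j) = Finsupp.linearCombination R q (S j)) :
    ∃ s : ℕ × ℕ → F × (VC d →₀ R), ∀ j, dX d (dV d) (s j) = q j - Finsupp.linearCombination R s (S j) := by
  let x : ℕ × ℕ → F := fun j => (q j).1
  let l : ℕ × ℕ → ℕ := fun j => (q j).2.support.card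
  let c : ∀ j, Fin (l j) → VC d := fun j t => ((q j).2.support.equivFin.symm t).1
  let a : ∀ j, Fin (l j) → R := fun j t => (q j).2 (c j t)
  have hcq : cq x l c a = q := by
    funext j
    refine Prod.ext rfl ?_
    simp only [cq]
    conv_rhs => rw [← Finsupp.sum_single (q j).2]
    rw [Finsupp.sum]
    refine Eq.trans ?_ (Finset.sum_coe_sort (q j).2.support (fun b => Finsupp.single b ((q j).2 b)))
    rw [← Equiv.sum_comp (q j).2.support.equivFin.symm]
    refine Finset.sum_congr rfl fun t _ => ?_
    simp [a, c]
  have hv : ∀ j, Valid d (Cell.mk S x l (fun j t => (c j t).1) a j) := by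
    intro j
    refine Valid.mk _ _ _ _ _ _ (fun j t => (c j t).2) hS (fun j => ?_)
    rw [← io_cq, ← io_dX, hcq, hq, ← LinearMap.comp_apply]
    congr 1
    apply Finsupp.lhom_ext'
    intro j
    apply LinearMap.ext_ring
    simp only [LinearMap.comp_apply, Finsupp.lsingle_apply, Finsupp.linearCombination_single, one_smul]
    rw [← io_cq, hcq]
  refine ⟨fun j => (0, Finsupp.single ⟨_, hv j⟩ 1), fun j => ?_⟩
  rw [dX_inr, ← hcq]
  rfl

end K2
end GFP

namespace GFP
open QuiverGF

section K2b
variable {R : Type u} [Ring R] {X : Type u} [AddCommGroup X] [Module R X]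

/-- attaching property -/
def Att (δ : X →ₗ[R] X) : Prop :=
  ∀ (S : ℕ × ℕ → (ℕ × ℕ →₀ R)), (∀ j, Finsupp.linearCombination R S (S j) = 0) →
    ∀ (q : ℕ × ℕ → X), (∀ j, δ (q j) = Finsupp.linearCombination R q (S j)) →
    ∃ s : ℕ × ℕ → X, ∀ j, δ (s j) = q j - Finsupp.linearCombination R s (S j)

/-- iteration state -/
structure St (δ : X →ₗ[R] X) where
  q : (ℕ →₀ R) →ₗ[R] X
  a : (ℕ →₀ R) →ₗ[R] (ℕ →₀ R)
  k : ℕ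
  m : ℕ
  ha : ∀ j, k ≤ j → a (Finsupp.single j 1) = 0
  hq : ∀ j, m ≤ j → q (Finsupp.single j 1) = 0
  hd : ∀ z, δ (q (a z)) = 0

lemma fs_lext {N : Type*} [AddCommGroup N] [Module R N] {B : Type*} {f g : (B →₀ R) →ₗ[R] N}
    (h : ∀ b, f (Finsupp.single b 1) = g (Finsupp.single b 1)) : f = g :=
  Finsupp.lhom_ext' fun b => LinearMap.ext_ring (h b)

lemma St.step (hX : FlatC R X) (δ : X →ₗ[R] X) (hδ : ∀ x, δ (δ x) = 0) (s : St δ) :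
    ∃ s' : St δ, (∀ z, δ (s.q z) = s'.q (s'.a z)) ∧ ∀ z, s'.a (s.a z) = 0 := by
  obtain ⟨a, b, m, h1, h2, h3, h4⟩ := hX.eq_critN (δ ∘ₗ s.q) s.m (fun j hj => by simp [s.hq j hj])
    (fun l : Fin s.k => s.a (Finsupp.single (l : ℕ) 1)) (fun l => by simp [s.hd])
  refine ⟨⟨b, a, s.m, m, h3, h4, fun z => by rw [← h1]; simp [hδ]⟩, h1, fun z => ?_⟩
  have : a ∘ₗ s.a = 0 := fs_lext fun j => by
    by_cases hj : j < s.k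
    · simpa using h2 ⟨j, hj⟩
    · simp [s.ha j (not_lt.1 hj)]
  exact LinearMap.congr_fun this z

theorem solve (hX : FlatC R X) (δ : X →ₗ[R] X) (hδ : ∀ x, δ (δ x) = 0) (hA : Att δ)
    (b0 : (ℕ →₀ R) →ₗ[R] X) (k : ℕ) (hk : ∀ j, k ≤ j → b0 (Finsupp.single j 1) = 0)
    (hb0 : ∀ z, δ (b0 z) = 0) (v : ℕ →₀ R) (hv : b0 v = 0) :
    ∃ y : (ℕ →₀ R) →ₗ[R] X, (∀ z, δ (y z) = b0 z) ∧ y v = 0 := by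
  obtain ⟨a0, q0, m, h1, h2, h3, h4⟩ := hX.eq_critN b0 k hk (fun _ : Fin 1 => v) (fun _ => hv)
  choose nx hn1 hn2 using St.step hX δ hδ
  let st : ℕ → St δ := fun n => Nat.rec ⟨q0, a0, k, m, h3, h4, fun z => by rw [← h1, hb0]⟩
    (fun _ s => nx s) n
  have e1 : ∀ n z, δ ((st n).q z) = (st (n+1)).q ((st (n+1)).a z) := fun n z => hn1 (st n) z
  have e2 : ∀ n z, (st (n+1)).a ((st n).a z) = 0 := fun n z => hn2 (st n) z
  let S : ℕ × ℕ → (ℕ × ℕ →₀ R) := fun p =>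
    Finsupp.lmapDomain R R (fun i => (p.1 + 1, i)) ((st (p.1+1)).a (Finsupp.single p.2 1))
  have hlc : ∀ {N : Type u} [AddCommGroup N] [Module R N] (s : ℕ × ℕ → N) p,
      Finsupp.linearCombination R s (S p) =
      Finsupp.linearCombination R (fun i => s (p.1+1, i)) ((st (p.1+1)).a (Finsupp.single p.2 1)) := by
    intro N _ _ s p
    simp only [S, Finsupp.lmapDomain_apply, Finsupp.linearCombination_mapDomain]
    rfl
  have hS : ∀ n, Finsupp.linearCombination R (fun i => S (n, i)) =
      Finsupp.lmapDomain R R (fun i => (n + 1, i)) ∘ₗ (st (n+1)).a := fun n => fs_lext fun i => by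
    simp [S]
  obtain ⟨s, hs⟩ := hA S (fun p => by rw [hlc, hS, LinearMap.comp_apply]; exact (congrArg _ (e2 (p.1+1) _)).trans (map_zero _))
    (fun p => (st p.1).q (Finsupp.single p.2 1)) (fun p => by
      rw [hlc, e1]
      congr 1
      exact fs_lext fun i => by simp)
  have hs' : ∀ n, δ ∘ₗ Finsupp.linearCombination R (fun i => s (n, i)) = (st n).q -
      Finsupp.linearCombination R (fun i => s (n+1, i)) ∘ₗ (st (n+1)).a := fun n => fs_lext fun i => by
    simp [hs, hlc]
  refine ⟨Finsupp.linearCombination R (fun i => s (0, i)) ∘ₗ (st 0).a, fun z => ?_, ?_⟩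
  · have := LinearMap.congr_fun (hs' 0) ((st 0).a z)
    simp only [LinearMap.comp_apply, LinearMap.sub_apply, e2, map_zero, sub_zero] at this
    rw [LinearMap.comp_apply, this]
    exact (h1 z).symm
  · have : (st 0).a v = 0 := h2 0
    simp [this]

theorem solve_ex (hX : FlatC R X) (δ : X →ₗ[R] X) (hδ : ∀ x, δ (δ x) = 0) (hA : Att δ) (x : X)
    (hx : δ x = 0) : ∃ y, δ y = x := by
  obtain ⟨y, h, -⟩ := solve hX δ hδ hA (Finsupp.linearCombination R fun j => if j = 0 then x else 0) 1
    (fun j hj => by simp; omega) (fun z => by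
      have : δ ∘ₗ (Finsupp.linearCombination R fun j => if j = 0 then x else 0) = 0 :=
        fs_lext fun j => by by_cases h : j = 0 <;> simp [h, hx]
      exact LinearMap.congr_fun this z) 0 (by simp)
  exact ⟨y (Finsupp.single 0 1), by simp [h]⟩

theorem solve_flat (hX : FlatC R X) (δ : X →ₗ[R] X) (hδ : ∀ x, δ (δ x) = 0) (hA : Att δ) :
    FlatC R (LinearMap.ker δ) := by
  apply FlatC.of_crit
  intro m x r hr
  let b : (ℕ →₀ R) →ₗ[R] X := Finsupp.linearCombination R fun j => if h : j < m then (x ⟨j, h⟩ : X) else 0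
  have hb : ∀ j : Fin m, b (Finsupp.single (j : ℕ) 1) = x j := fun j => by simp [b]
  let v : ℕ →₀ R := ∑ j : Fin m, r j • Finsupp.single (j : ℕ) 1
  obtain ⟨y, h1, h2⟩ := solve hX δ hδ hA b m (fun j hj => by simp [b, not_lt.2 hj]) (fun z => by
      have : δ ∘ₗ b = 0 := fs_lext fun j => by
        by_cases h : j < m
        · simp [b, h]
        · simp [b, h]
      exact LinearMap.congr_fun this z) v (by
      have := congrArg Subtype.val hr
      simp only [v, map_sum, map_smul, hb]
      simpa using this)
  obtain ⟨n, c, w, e1, e2⟩ := hX.eq_crit (fun j : Fin m => y (Finsupp.single (j : ℕ) 1))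
    (fun _ : Fin 1 => r) (fun _ => by
      simpa only [v, map_sum, map_smul] using h2)
  refine ⟨n, c, fun i => ⟨δ (w i), hδ _⟩, fun j => Subtype.ext ?_, fun i => e2 0 i⟩
  rw [← hb, ← h1, e1]
  simp

end K2b
end GFP

namespace GFP
open QuiverGF

section K2c
variable {R : Type u} [Ring R]

/-- embeds in a flat module with LL cokernel -/
def GG (R : Type u) [Ring R] (M : Type u) [AddCommGroup M] [Module R M] : Prop :=
  ∃ (D L : ModuleCat.{u} R) (j : M →ₗ[R] D) (q : D →ₗ[R] L), FlatC R D ∧ LL R L ∧ SES j q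

/-- periodic sequence -/
lemma SES.cyc {X : Type u} [AddCommGroup X] [Module R X] (δ : X →ₗ[R] X) (h0 : ∀ x, δ (δ x) = 0)
    (hex : ∀ x, δ x = 0 → ∃ y, δ y = x) :
    SES (LinearMap.ker δ).subtype (δ.codRestrict (LinearMap.ker δ) (fun x => h0 x)) :=
  SES.mk' (fun a h => by simpa using h) (fun a => Subtype.ext a.2)
    (fun b hb => ⟨⟨b, congrArg Subtype.val hb⟩, rfl⟩) (fun x => by
      obtain ⟨y, hy⟩ := hex x.1 x.2
      exact ⟨y, Subtype.ext hy⟩)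

theorem HEx.of_flat {X : Type u} [AddCommGroup X] [Module R X] (δ : X →ₗ[R] X) (h0 : ∀ x, δ (δ x) = 0)
    (hex : ∀ x, δ x = 0 → ∃ y, δ y = x) (hD : FlatC R (LinearMap.ker δ)) : HEx δ δ := by
  intro E _ _ hE φ hφ
  have S := SES.cyc δ h0 hex
  obtain ⟨ψ, hψ⟩ := factor_surj _ S.surj φ (fun a ha => by
    obtain ⟨y, rfl⟩ := hex a (congrArg Subtype.val ha)
    exact hφ y)
  obtain ⟨g, hg⟩ := ExtZ.flat_chr hD E _ _ _ _ S ψ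
  exact ⟨g, fun b => by rw [← hψ, ← hg]; rfl⟩

theorem LL.of_free_cyc {P : Type u} [AddCommGroup P] [Module R P] [Module.Free R P] (δ : P →ₗ[R] P)
    (h0 : ∀ x, δ (δ x) = 0)
    (hex : ∀ x, δ x = 0 → ∃ y, δ y = x) (hH : HEx δ δ) : LL R (LinearMap.ker δ) := by
  have S := SES.cyc δ h0 hex
  haveI := Module.Projective.of_free (R := R) (P := P)
  refine LL.periodic S (fun Y _ _ hY => ExtZ.of_one S fun f => ?_)
    (fun E _ _ hE => ExtZ.of_one S fun f => ?_)
  · obtain ⟨g, hg⟩ := k1 δ hH h0 hY (f ∘ₗ δ.codRestrict (LinearMap.ker δ) (fun x => h0 x)) (fun x => by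
      have : δ.codRestrict (LinearMap.ker δ) (fun x => h0 x) (δ x) = 0 := Subtype.ext (h0 x)
      simp [this])
    refine ⟨g, fun k => ?_⟩
    obtain ⟨y, rfl⟩ := S.surj k
    exact hg y
  · obtain ⟨g, hg⟩ := hH E hE (f ∘ₗ δ.codRestrict (LinearMap.ker δ) (fun x => h0 x)) (fun x => by
      have : δ.codRestrict (LinearMap.ker δ) (fun x => h0 x) (δ x) = 0 := Subtype.ext (h0 x)
      rw [LinearMap.comp_apply, this, map_zero])
    refine ⟨g, fun k => ?_⟩
    obtain ⟨y, rfl⟩ := S.surj k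
    exact hg y

theorem K2a {F P : Type u} [AddCommGroup F] [AddCommGroup P] [Module R F] [Module R P] [Module.Free R P]
    (d : F →ₗ[R] F) (hd : ∀ x, d (d x) = 0) (hex : ∀ x, d x = 0 → ∃ y, d y = x) (hH : HEx d d)
    (θ : P →ₗ[R] F) (d' : P →ₗ[R] P) (δ : F × P →ₗ[R] F × P) (hδ : ∀ f p, δ (f, p) = (d f + θ p, d' p))
    (h0 : ∀ x, δ (δ x) = 0) (hδex : ∀ x, δ x = 0 → ∃ y, δ y = x) (hD : FlatC R (LinearMap.ker δ)) :
    GG R (LinearMap.ker d) := by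
  have a1 : ∀ p, d' (d' p) = 0 := fun p => by
    have := h0 (0, p); rw [hδ, hδ] at this; exact congrArg Prod.snd this
  have a2 : ∀ p, d (θ p) + θ (d' p) = 0 := fun p => by
    have := h0 (0, p); rw [hδ, hδ] at this; simpa using congrArg Prod.fst this
  have a3 : ∀ p, d' p = 0 → ∃ f, δ (f, p) = 0 := fun p hp => by
    obtain ⟨f, hf⟩ := hex (θ p) (by have := a2 p; rwa [hp, map_zero, add_zero] at this)
    exact ⟨-f, by rw [hδ]; simp [hf, hp]⟩
  have a4 : ∀ p, d' p = 0 → ∃ p', d' p' = p := fun p hp => by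
    obtain ⟨f, hf⟩ := a3 p hp
    obtain ⟨⟨f', p'⟩, h⟩ := hδex _ hf
    rw [hδ] at h
    exact ⟨p', congrArg Prod.snd h⟩
  have HD := HEx.of_flat δ h0 hδex hD
  have HP : HEx d' d' := by
    intro E _ _ hE φ hφ
    obtain ⟨Ψ, hΨ⟩ := HD E hE (φ ∘ₗ LinearMap.snd R F P) (fun a => by
      obtain ⟨f, p⟩ := a
      rw [hδ]; exact hφ p)
    obtain ⟨χ, hχ⟩ := hH E hE (Ψ ∘ₗ LinearMap.inl R F P) (fun a => by
      have := hΨ (a, 0)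
      rw [hδ] at this
      simpa using this)
    have hχ' : ∀ f, χ (d f) = Ψ (f, 0) := hχ
    refine ⟨(Ψ ∘ₗ LinearMap.inr R F P) - χ ∘ₗ θ, fun b => ?_⟩
    have e1 := hΨ (0, b)
    rw [hδ, map_zero, zero_add] at e1
    have e2 : Ψ (θ b, d' b) = Ψ (θ b, 0) + Ψ (0, d' b) := by rw [← map_add]; simp
    rw [e2, ← hχ'] at e1
    have e3 : χ (d (θ b)) + χ (θ (d' b)) = 0 := by rw [← map_add, a2, map_zero]
    rw [LinearMap.sub_apply]
    simp only [LinearMap.comp_apply, LinearMap.inr_apply]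
    rw [eq_neg_of_add_eq_zero_left e3] at e1
    change _ = φ b at e1
    rw [← e1]; abel
  refine ⟨.of R (LinearMap.ker δ), .of R (LinearMap.ker d'),
    LinearMap.codRestrict _ (LinearMap.inl R F P ∘ₗ (LinearMap.ker d).subtype) (fun z => by
      have := z.2; simp only [LinearMap.mem_ker] at this ⊢
      simp [hδ, this]),
    LinearMap.codRestrict _ (LinearMap.snd R F P ∘ₗ (LinearMap.ker δ).subtype) (fun z => by
      obtain ⟨⟨f, p⟩, h⟩ := z
      rw [LinearMap.mem_ker, hδ] at h
      exact congrArg Prod.snd h), hD, LL.of_free_cyc d' a1 a4 HP, SES.mk' ?_ ?_ ?_ ?_⟩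
  · intro a h
    exact Subtype.ext (congrArg Prod.fst (congrArg Subtype.val h))
  · intro a; rfl
  · rintro ⟨⟨f, p⟩, h⟩ hb
    have hp : p = 0 := congrArg Subtype.val hb
    subst hp
    rw [LinearMap.mem_ker, hδ] at h
    exact ⟨⟨f, by simpa using congrArg Prod.fst h⟩, rfl⟩
  · rintro ⟨p, hp⟩
    obtain ⟨f, hf⟩ := a3 p hp
    exact ⟨⟨(f, p), hf⟩, rfl⟩

theorem K2 {F : Type u} [AddCommGroup F] [Module R F] (hF : FlatC R F)
    (d : F →ₗ[R] F) (hd : ∀ x, d (d x) = 0) (hex : ∀ x, d x = 0 → ∃ y, d y = x) (hH : HEx d d) :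
    GG R (LinearMap.ker d) := by
  have hX : FlatC R (F × (VC d →₀ R)) := hF.prod (FlatC.finsupp FlatC.self)
  have hA : Att (dX d (dV d)) := fun S hS q hq => attach d S hS q hq
  have h0 := dX_sq d hd
  refine K2a d hd hex hH (LinearMap.fst _ _ _ ∘ₗ dX d (dV d) ∘ₗ LinearMap.inr _ _ _)
    (LinearMap.snd _ _ _ ∘ₗ dX d (dV d) ∘ₗ LinearMap.inr _ _ _) (dX d (dV d)) (fun f p => ?_) h0
    (solve_ex hX _ h0 hA) (solve_flat hX _ h0 hA)
  have : dX d (dV d) (f, p) = dX d (dV d) (f, 0) + dX d (dV d) (0, p) := by rw [← map_add]; simp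
  rw [this, dX_inl]
  ext <;> simp

end K2c
end GFP

namespace GFP
open QuiverGF

section GGker
variable {R : Type u} [Ring R]

theorem GG.equiv {A B : Type u} [AddCommGroup A] [AddCommGroup B] [Module R A] [Module R B]
    (h : GG R A) (e : B ≃ₗ[R] A) : GG R B := by
  obtain ⟨D, L, j, q, h1, h2, S⟩ := h
  exact ⟨D, L, _, q, h1, h2, S.of_equiv e⟩

/-- a surjection from a free module -/
lemma ex_free (D : Type u) [AddCommGroup D] [Module R D] : ∃ (P : ModuleCat.{u} R) (π : P →ₗ[R] D),
    Module.Free R P ∧ Function.Surjective π :=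
  ⟨.of R (D →₀ R), Finsupp.linearCombination R id,
    by change Module.Free R (D →₀ R); infer_instance, fun d => ⟨Finsupp.single d 1, by simp⟩⟩

/-- enlarge the middle and right terms -/
theorem SES.prod_right {A B C : Type u} (P : Type u) [AddCommGroup A] [AddCommGroup B] [AddCommGroup C]
    [AddCommGroup P] [Module R A] [Module R B] [Module R C] [Module R P] {j : A →ₗ[R] B} {q : B →ₗ[R] C}
    (S : SES j q) : SES (LinearMap.inl R B P ∘ₗ j) (LinearMap.prodMap q (LinearMap.id : P →ₗ[R] P)) :=
  SES.mk' (fun a h => S.inj0 (congrArg Prod.fst h)) (fun a => by simp [S.zero])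
    (fun b hb => by
      obtain ⟨b, p⟩ := b
      have h1 : q b = 0 := congrArg Prod.fst hb
      have h2 : p = 0 := congrArg Prod.snd hb
      obtain ⟨a, rfl⟩ := S.mem h1
      exact ⟨a, by simp [h2]⟩) (fun c => by
      obtain ⟨b, hb⟩ := S.surj c.1
      exact ⟨(b, c.2), by simp [hb]⟩)

theorem GG.ker {M A B : Type u} [AddCommGroup M] [AddCommGroup A] [AddCommGroup B]
    [Module R M] [Module R A] [Module R B] {j : M →ₗ[R] A} {q : A →ₗ[R] B} (S : SES j q)
    (hA : GG R A) (hB : GG R B) : GG R M := by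
  obtain ⟨DA, LA, jA, qA, fA, lA, SA⟩ := hA
  obtain ⟨DB, LB, jB, qB, fB, lB, SB⟩ := hB
  obtain ⟨g, hg⟩ := lA.flat fB _ _ _ _ SA (jB ∘ₗ q)
  obtain ⟨P, π, hP, hπ⟩ := ex_free (R := R) DB
  let G : (DA × P) →ₗ[R] DB := g.coprod π
  have hG : Function.Surjective G := fun d => by
    obtain ⟨p, rfl⟩ := hπ d
    exact ⟨(0, p), by simp [G]⟩
  have SK := SES.of_surj G hG
  have fK : FlatC R (LinearMap.ker G) := FlatC.of_ker SK (fA.prod FlatC.free) fB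
  have hG' : ∀ a, G (jA a, 0) = jB (q a) := fun a => by simp [G, hg]
  let i : M →ₗ[R] LinearMap.ker G := LinearMap.codRestrict _ (LinearMap.inl R DA P ∘ₗ jA ∘ₗ j) (fun m => by
    rw [LinearMap.mem_ker]; change G (jA (j m), 0) = 0; rw [hG', S.zero, map_zero])
  have Si := SES.of_inj i (by
    rw [injective_iff_map_eq_zero]
    intro a ha
    exact S.inj0 (SA.inj0 (congrArg Prod.fst (congrArg Subtype.val ha))))
  obtain ⟨j', q', S', -⟩ := nine_coker S SK Si (SA.prod_right P) SB (fun x => rfl) (fun x => (hG' x).symm)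
  exact ⟨.of R (LinearMap.ker G), .of R _, i, _, fK, LL.of_ker S' (lA.prod LL.free) lB, Si⟩

end GGker

section tot
variable {R : Type u} [Ring R] (Z : ℤ → Type u) [∀ i, AddCommGroup (Z i)] [∀ i, Module R (Z i)]

/-- index -/
abbrev II := ULift.{u} (ℤ × ℕ)
/-- big sum -/
abbrev Big := ⨁ i : II.{u}, Z i.down.1
/-- inclusion -/
noncomputable abbrev bi (n : ℤ) (k : ℕ) : Z n →ₗ[R] Big Z :=
  DirectSum.lof R II.{u} (fun i => Z i.down.1) ⟨(n, k)⟩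

variable {Z} in
lemma big_ext {N : Type*} [AddCommGroup N] [Module R N] {f g : Big Z →ₗ[R] N}
    (h : ∀ n k x, f (bi (R := R) Z n k x) = g (bi (R := R) Z n k x)) : f = g :=
  DirectSum.linearMap_ext R fun i => LinearMap.ext fun x => h i.down.1 i.down.2 x

/-- define a map -/
noncomputable def bt {N : Type*} [AddCommGroup N] [Module R N] (f : ∀ n, ℕ → Z n →ₗ[R] N) : Big Z →ₗ[R] N :=
  DirectSum.toModule R II.{u} N (fun i => f i.down.1 i.down.2)

@[simp] lemma bt_bi {N : Type*} [AddCommGroup N] [Module R N] (f : ∀ n, ℕ → Z n →ₗ[R] N) (n k x) :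
    bt Z f (bi (R := R) Z n k x) = f n k x := by
  simp [bt, bi]

theorem swin : ∃ ρ : Big Z →ₗ[R] Big Z, SES (bi (R := R) Z 0 0) ρ := by
  let ρ : Big Z →ₗ[R] Big Z := bt Z fun n k => if n = 0 then (if k = 0 then 0 else bi Z n (k-1)) else bi Z n k
  let s : Big Z →ₗ[R] Big Z := bt Z fun n k => if n = 0 then bi Z n (k+1) else bi Z n k
  have h1 : ρ ∘ₗ s = LinearMap.id := big_ext fun n k x => by
    by_cases h : n = 0 <;> simp [ρ, s, h]
  have h2 : LinearMap.id - s ∘ₗ ρ =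
      bi (R := R) Z 0 0 ∘ₗ DirectSum.component R II.{u} (fun i => Z i.down.1) ⟨(0, 0)⟩ := big_ext fun n k x => by
    by_cases h : n = 0
    · subst h
      by_cases hk : k = 0
      · subst hk
        simp [ρ, s, DirectSum.component.lof_self]
      · obtain ⟨k, rfl⟩ := Nat.exists_eq_succ_of_ne_zero hk
        simp only [LinearMap.sub_apply, LinearMap.comp_apply, LinearMap.id_apply]
        rw [DirectSum.component.of, dif_neg (by simp)]
        simp [ρ, s]
    · simp only [LinearMap.sub_apply, LinearMap.comp_apply, LinearMap.id_apply]
      rw [DirectSum.component.of, dif_neg (by simp [h])]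
      simp [ρ, s, h]
  refine ⟨ρ, SES.mk' (fun a h => DirectSum.of_injective (β := fun i : II.{u} => Z i.down.1) ⟨(0, 0)⟩ (h.trans (map_zero _).symm)) (fun a => by simp [ρ]) (fun b hb => ?_)
    (fun b => ⟨s b, LinearMap.congr_fun h1 b⟩)⟩
  have := LinearMap.congr_fun h2 b
  simp only [LinearMap.sub_apply, LinearMap.comp_apply, LinearMap.id_apply, hb, map_zero, sub_zero] at this
  exact ⟨_, this.symm⟩

end tot

section GFGG
variable {R : Type u} [Ring R] (F : ℤ → Type u) [∀ i, AddCommGroup (F i)] [∀ i, Module R (F i)]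
  (d : ∀ n, F n →ₗ[R] F (n+1))

theorem GG.of_complex (hF : ∀ n, FlatC R (F n)) (hex : ∀ n, Function.Exact (d n) (d (n+1)))
    (hH : ∀ n, HEx (d n) (d (n+1))) : GG R (LinearMap.ker (d 0)) := by
  let Z : ℤ → Type u := fun n => LinearMap.ker (d n)
  have dd : ∀ n x, d (n+1) (d n x) = 0 := fun n x => (hex n).apply_apply_eq_zero x
  let dh : Big F →ₗ[R] Big F := bt F fun n k => bi F (n+1) k ∘ₗ d n
  let J : Big Z →ₗ[R] Big F := dsMap fun i : II.{u} => (LinearMap.ker (d i.down.1)).subtype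
  have hJ : ∀ n k x, J (bi (R := R) Z n k x) = bi (R := R) F n k x.1 := fun n k x =>
    DFinsupp.mapRange_single (hf := fun i => map_zero _)
  let T : Big F →ₗ[R] Big Z := bt F fun n k => bi Z (n+1) k ∘ₗ (d n).codRestrict (LinearMap.ker (d (n+1))) (dd n)
  have hJT : ∀ x, J (T x) = dh x := fun x => by
    have : J ∘ₗ T = dh := big_ext fun n k x => by simp [T, dh, hJ]; rfl
    exact LinearMap.congr_fun this x
  have hT : Function.Surjective T := by
    rw [← LinearMap.range_eq_top, eq_top_iff]
    rintro w -
    induction w using DirectSum.induction_on with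
    | zero => exact zero_mem _
    | add x y hx hy => exact add_mem hx hy
    | of i x =>
      obtain ⟨⟨m, k⟩⟩ := i
      obtain ⟨n, rfl⟩ : ∃ n, m = n + 1 := ⟨m - 1, by ring⟩
      obtain ⟨y, hy⟩ := (hex n x.1).1 x.2
      refine ⟨bi (R := R) F n k y, ?_⟩
      simp only [T, bt_bi, LinearMap.comp_apply]
      have : (d n).codRestrict (LinearMap.ker (d (n+1))) (dd n) y = x := Subtype.ext hy
      exact congrArg (bi (R := R) Z (n+1) k) this
  have hcomp : ∀ n k x, dh x (⟨(n+1, k)⟩ : II.{u}) = d n (x (⟨(n, k)⟩ : II.{u})) := fun n k x => by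
    have : DirectSum.component R II.{u} (fun i => F i.down.1) ⟨(n+1, k)⟩ ∘ₗ dh =
        d n ∘ₗ DirectSum.component R II.{u} (fun i => F i.down.1) ⟨(n, k)⟩ := big_ext fun m l x => by
      simp only [LinearMap.comp_apply, dh, bt_bi]
      by_cases h : m = n ∧ l = k
      · obtain ⟨rfl, rfl⟩ := h
        rw [DirectSum.component.lof_self, DirectSum.component.lof_self]
      · rw [DirectSum.component.of, DirectSum.component.of, dif_neg, dif_neg, map_zero]
        · simpa using h
        · simpa using h
    exact LinearMap.congr_fun this x
  have SD := SES.directSum (R := R) (fun i : II.{u} => show SES (LinearMap.ker (d i.down.1)).subtype (d i.down.1).rangeRestrict from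
    SES.mk' (fun a h => Subtype.ext h) (fun a => Subtype.ext a.2)
      (fun b hb => ⟨⟨b, congrArg Subtype.val hb⟩, rfl⟩) (LinearMap.surjective_rangeRestrict _))
  have hJex : ∀ x, dh x = 0 → ∃ w, J w = x := fun x hx => by
    have hx' : ∀ n k, d n (x (⟨(n, k)⟩ : II.{u})) = 0 := fun n k => by rw [← hcomp, hx]; rfl
    refine SD.mem (DFinsupp.ext fun i => ?_)
    exact Subtype.ext (hx' i.down.1 i.down.2)
  have hJinj : Function.Injective J := fun a b h => DFinsupp.ext fun i => Subtype.ext (DFunLike.congr_fun h i)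
  have hdJ : ∀ x, dh (J x) = 0 := fun x => by
    have : dh ∘ₗ J = 0 := big_ext fun n k x => by
      have : d n x.1 = 0 := x.2
      simp [hJ, dh, this]
    exact LinearMap.congr_fun this x
  have e : Big Z ≃ₗ[R] LinearMap.ker dh := LinearEquiv.ofBijective (J.codRestrict _ hdJ)
    ⟨fun a b h => hJinj (congrArg Subtype.val h), fun b => by
      obtain ⟨w, hw⟩ := hJex b.1 b.2
      exact ⟨w, Subtype.ext hw⟩⟩
  have hB : GG R (Big Z) := by
    refine GG.equiv (K2 (FlatC.directSum _ fun i => hF i.down.1) dh (fun x => by rw [← hJT x, hdJ]) (fun x hx => ?_) ?_) e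
    · obtain ⟨w, rfl⟩ := hJex x hx
      obtain ⟨y, rfl⟩ := hT w
      exact ⟨y, (hJT y).symm⟩
    · intro E _ _ hE h hh
      have key : ∀ i : II.{u}, ∃ κ : F i.down.1 →ₗ[R] ChR E, ∀ m (e : m + 1 = i.down.1) x,
          κ (e ▸ d m x) = h (bi (R := R) F m i.down.2 x) := by
        rintro ⟨⟨j, k⟩⟩
        obtain ⟨n, rfl⟩ : ∃ n, j = n + 1 + 1 := ⟨j - 1 - 1, by ring⟩
        obtain ⟨κ, hκ⟩ := hH n E hE (h ∘ₗ bi F (n+1) k) (fun a => by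
          have := hh (bi (R := R) F n k a)
          simpa [dh] using this)
        refine ⟨κ, fun m e x => ?_⟩
        obtain rfl : m = n + 1 := by simpa using e
        exact hκ x
      choose κ hκ using key
      refine ⟨bt F fun n k => κ ⟨(n, k)⟩, fun b => ?_⟩
      have : bt F (fun n k => κ ⟨(n, k)⟩) ∘ₗ dh = h := big_ext fun n k x => by
        simp only [LinearMap.comp_apply, dh, bt_bi]
        exact hκ ⟨(n+1, k)⟩ n rfl x
      exact LinearMap.congr_fun this b
  obtain ⟨ρ, hρ⟩ := swin (R := R) Z
  exact GG.ker hρ hB hB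

end GFGG
end GFP

namespace GFP
open QuiverGF

section GFeq
variable {R : Type u} [Ring R]

theorem gf_GG {M : ModuleCat.{u} R} (h : IsGorensteinFlatModule R M) : GG R M := by
  obtain ⟨F, d, h1, h2, ⟨e⟩, h3⟩ := h
  have hd : ∀ n x, (d (n+1)).hom ((d n).hom x) = 0 := fun n x => (h2 n).apply_apply_eq_zero x
  refine GG.equiv (GG.of_complex (fun n => F n) (fun n => (d n).hom) (fun n => (isFlat_iff _).1 (h1 n)) h2 ?_) e
  intro n E _ _ hE
  exact (nc_exact E _ _ (hd n)).1 (h3 (.of _ E) ((Module.injective_iff_injective_object _ _).1 hE) n)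

theorem gf_of {M : Type u} [AddCommGroup M] [Module R M] (F : ℤ → Type u) [∀ n, AddCommGroup (F n)]
    [∀ n, Module R (F n)] (d : ∀ n, F n →ₗ[R] F (n+1)) (hF : ∀ n, FlatC R (F n))
    (hex : ∀ n, Function.Exact (d n) (d (n+1))) (hH : ∀ n, HEx (d n) (d (n+1)))
    (e : M ≃ₗ[R] LinearMap.ker (d 0)) : IsGorensteinFlatModule R (.of R M) := by
  refine ⟨fun n => .of R (F n), fun n => ModuleCat.ofHom (d n), fun n => (isFlat_iff _).2 (hF n), hex, ⟨e⟩, ?_⟩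
  intro E hE n
  exact (nc_exact E _ _ (fun x => (hex n).apply_apply_eq_zero x)).2
    (hH n E ((Module.injective_iff_injective_object _ _).2 hE))

theorem flat_gf {M : ModuleCat.{u} R} (h : IsFlatModule R M) : IsGorensteinFlatModule R M := by
  refine gf_of (M := M) (fun _ => M × M) (fun _ => LinearMap.inr R M M ∘ₗ LinearMap.fst R M M)
    (fun _ => ((isFlat_iff _).1 h).prod ((isFlat_iff _).1 h)) ?_ ?_ ?_
  · rintro n ⟨x, y⟩
    constructor
    · intro h
      have : x = 0 := congrArg Prod.snd h
      exact ⟨(y, 0), by simp [this]⟩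
    · rintro ⟨⟨a, b⟩, h⟩
      rw [← h]; simp
  · intro n E _ _ hE h hh
    refine ⟨h ∘ₗ LinearMap.inl R M M ∘ₗ LinearMap.snd R M M, fun b => ?_⟩
    obtain ⟨x, y⟩ := b
    have h1 : h (0, y) = 0 := hh (y, 0)
    have h2 : h (x, y) = h (x, 0) + h (0, y) := by rw [← map_add]; simp
    rw [h2, h1, add_zero]; rfl
  · refine LinearEquiv.ofBijective (LinearMap.codRestrict _ (LinearMap.inr R M M) (fun x => by simp)) ⟨?_, ?_⟩
    · intro a b h
      exact congrArg Prod.snd (congrArg Subtype.val h)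
    · rintro ⟨⟨x, y⟩, h⟩
      have : x = 0 := congrArg Prod.snd (show ((0 : M), x) = 0 from h)
      subst this
      exact ⟨y, rfl⟩

/-- the class as a subtype -/
def LLs (R : Type u) [Ring R] := {X : ModuleCat.{u} R // LL R X}

/-- ℤ-indexed iteration -/
def zit {α : Type*} (x : α) (f g : α → α) : ℤ → α
  | Int.ofNat n => f^[n] x
  | Int.negSucc n => g^[n+1] x

lemma zit_rel {α : Type*} (x : α) (f g : α → α) (r : α → α → Prop) (hf : ∀ a, r a (f a))
    (hg : ∀ a, r (g a) a) (n : ℤ) : r (zit x f g n) (zit x f g (n+1)) := by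
  obtain n | n := n
  · change r (f^[n] x) (f^[n+1] x)
    rw [Function.iterate_succ_apply']
    exact hf _
  · obtain _ | n := n
    · exact hg x
    · change r (g^[n+1+1] x) (g^[n+1] x)
      rw [Function.iterate_succ_apply']
      exact hg _

theorem LL.gf {M : Type u} [AddCommGroup M] [Module R M] (h : LL R M) :
    IsGorensteinFlatModule R (.of R M) := by
  let r : LLs R → LLs R → Prop := fun a b => ∃ (P : ModuleCat.{u} R) (j : a.1 →ₗ[R] P) (q : P →ₗ[R] b.1),
    Module.Free R P ∧ SES j q
  have h1 : ∀ a, ∃ b, r a b := fun a => by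
    obtain ⟨P, C, j, q, h1, h2, h3⟩ := a.2.right
    exact ⟨⟨C, h3⟩, P, j, q, h1, h2⟩
  have h2 : ∀ a, ∃ b, r b a := fun a => by
    obtain ⟨P, C, j, q, h1, h2, h3⟩ := a.2.left
    exact ⟨⟨C, h3⟩, P, j, q, h1, h2⟩
  choose f hf using h1
  choose g hg using h2
  let x : LLs R := ⟨.of R M, h⟩
  let Z := zit x f g
  have hZ : ∀ n, r (Z n) (Z (n+1)) := zit_rel x f g r hf hg
  choose P j q hP S using hZ
  have hex : ∀ n p, j (n+1) (q n p) = 0 → q n p = 0 := fun n p h => (S (n+1)).inj0 h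
  refine gf_of (M := M) (fun n => P n) (fun n => j (n+1) ∘ₗ q n) (fun n => FlatC.free) ?_ ?_ ?_
  · intro n p
    constructor
    · intro h
      obtain ⟨z, rfl⟩ := (S (n+1)).mem (hex _ _ h)
      obtain ⟨y, rfl⟩ := (S n).surj z
      exact ⟨y, rfl⟩
    · rintro ⟨y, rfl⟩
      simp [(S (n+1)).zero]
  · intro n E _ _ hE h hh
    obtain ⟨ψ, hψ⟩ := factor_surj (q (n+1)) (S (n+1)).surj h (fun a ha => by
      obtain ⟨z, rfl⟩ := (S (n+1)).mem ha
      obtain ⟨y, rfl⟩ := (S n).surj z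
      exact hh y)
    obtain ⟨t, ht⟩ := (Z (n+1+1+1)).2.chr E hE _ _ _ _ (S (n+1+1)) ψ
    exact ⟨t, fun b => by rw [LinearMap.comp_apply, ht, hψ]⟩
  · refine LinearEquiv.ofBijective (LinearMap.codRestrict _ (j 0) (fun z => by
      simp [(S 0).zero])) ⟨?_, ?_⟩
    · intro a b h
      exact (S 0).inj (congrArg Subtype.val h)
    · rintro ⟨p, hp⟩
      obtain ⟨z, rfl⟩ := (S 0).mem (hex _ _ hp)
      exact ⟨z, rfl⟩

end GFeq
end GFP

namespace GFP
open QuiverGF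

section vertex
variable {R : Type u} [Ring R]

theorem vertex1 {M A B : Type u} [AddCommGroup M] [AddCommGroup A] [AddCommGroup B]
    [Module R M] [Module R A] [Module R B] {j : M →ₗ[R] A} {q : A →ₗ[R] B} (S : SES j q)
    (hA : GG R A) (hB : GG R B) : ∃ (G L K D LK : ModuleCat.{u} R) (ι : A →ₗ[R] G) (l : G →ₗ[R] L)
      (κ : K →ₗ[R] G) (g : G →ₗ[R] D) (s : M →ₗ[R] K) (p : K →ₗ[R] LK), FlatC R G ∧ FlatC R K ∧ FlatC R D ∧
      LL R L ∧ LL R LK ∧ SES ι l ∧ SES κ g ∧ SES s p ∧ ∀ m, κ (s m) = ι (j m) := by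
  obtain ⟨DA, LA, jA, qA, fA, lA, SA⟩ := hA
  obtain ⟨DB, LB, jB, qB, fB, lB, SB⟩ := hB
  obtain ⟨g, hg⟩ := lA.flat fB _ _ _ _ SA (jB ∘ₗ q)
  obtain ⟨P, π, hP, hπ⟩ := ex_free (R := R) DB
  let G : (DA × P) →ₗ[R] DB := g.coprod π
  have hG : Function.Surjective G := fun d => by
    obtain ⟨p, rfl⟩ := hπ d
    exact ⟨(0, p), by simp [G]⟩
  have SK := SES.of_surj G hG
  have fK : FlatC R (LinearMap.ker G) := FlatC.of_ker SK (fA.prod FlatC.free) fB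
  have hG' : ∀ a, G (jA a, 0) = jB (q a) := fun a => by simp [G, hg]
  let i : M →ₗ[R] LinearMap.ker G := LinearMap.codRestrict _ (LinearMap.inl R DA P ∘ₗ jA ∘ₗ j) (fun m => by
    rw [LinearMap.mem_ker]; change G (jA (j m), 0) = 0; rw [hG', S.zero, map_zero])
  have Si := SES.of_inj i (by
    rw [injective_iff_map_eq_zero]
    intro a ha
    exact S.inj0 (SA.inj0 (congrArg Prod.fst (congrArg Subtype.val ha))))
  obtain ⟨j', q', S', -⟩ := nine_coker S SK Si (SA.prod_right P) SB (fun x => rfl) (fun x => (hG' x).symm)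
  exact ⟨.of R (DA × P), .of R (LA × P), .of R (LinearMap.ker G), DB, .of R _, _, _, _, _, i, _,
    fA.prod FlatC.free, fK, fB, lA.prod LL.free, LL.of_ker S' (lA.prod LL.free) lB, SA.prod_right P, SK, Si,
    fun m => rfl⟩

/-- pushout sequence -/
theorem pushout {T M N G C : Type u} [AddCommGroup T] [AddCommGroup M] [AddCommGroup N] [AddCommGroup G]
    [AddCommGroup C] [Module R T] [Module R M] [Module R N] [Module R G] [Module R C]
    {μ : T →ₗ[R] M} {ν : M →ₗ[R] N} (S : SES μ ν) (τ : T →ₗ[R] G) {r : G × M →ₗ[R] C}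
    (S' : SES (τ.prod μ) r) : ∃ (j : G →ₗ[R] C) (q : C →ₗ[R] N), SES j q := by
  obtain ⟨q, hq⟩ := factor_surj r S'.surj (ν ∘ₗ LinearMap.snd R G M) (fun a ha => by
    obtain ⟨t, rfl⟩ := S'.mem ha
    simp [S.zero])
  refine ⟨r ∘ₗ LinearMap.inl R G M, q, SES.mk' (fun a h => ?_) (fun a => by simp [hq]) (fun b hb => ?_) ?_⟩
  · obtain ⟨t, ht⟩ := S'.mem h
    have h2 : μ t = 0 := congrArg Prod.snd ht
    have h1 : τ t = a := congrArg Prod.fst ht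
    rw [← h1, S.inj0 h2, map_zero]
  · obtain ⟨⟨g, m⟩, rfl⟩ := S'.surj b
    rw [hq] at hb
    obtain ⟨t, ht⟩ := S.mem (show ν m = 0 from hb)
    refine ⟨g - τ t, ?_⟩
    have : (g, m) = (g - τ t, 0) + (τ.prod μ) t := by simp [ht]
    rw [this, map_add, S'.zero, add_zero]; rfl
  · intro n
    obtain ⟨m, rfl⟩ := S.surj n
    exact ⟨r (0, m), by rw [hq]; rfl⟩

theorem vertexF {TX TG TL G K D LK M N : Type u}
    [AddCommGroup TX] [AddCommGroup TG] [AddCommGroup TL] [AddCommGroup G]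
    [AddCommGroup K] [AddCommGroup D] [AddCommGroup LK] [AddCommGroup M] [AddCommGroup N]
    [Module R TX] [Module R TG] [Module R TL] [Module R G]
    [Module R K] [Module R D] [Module R LK] [Module R M] [Module R N]
    {Tι : TX →ₗ[R] TG} {Tl : TG →ₗ[R] TL} (ST : SES Tι Tl) {κ : K →ₗ[R] G} {g : G →ₗ[R] D} (SK : SES κ g)
    {s : TX →ₗ[R] K} {p : K →ₗ[R] LK} (Ss : SES s p) {μ : TL →ₗ[R] M} {ν : M →ₗ[R] N} (Sμ : SES μ ν)
    (τ : TG →ₗ[R] K) (hτ : ∀ x, τ (Tι x) = s x) (fTG : FlatC R TG) (fK : FlatC R K) (fM : FlatC R M)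
    (fD : FlatC R D) (lLK : LL R LK) (lN : LL R N) :
    ∃ (C : ModuleCat.{u} R) (r : (G × M) →ₗ[R] C), FlatC R C ∧ SES ((κ ∘ₗ τ).prod (μ ∘ₗ Tl)) r := by
  let θK := τ.prod (μ ∘ₗ Tl)
  have iK : ∀ t, θK t = 0 → t = 0 := fun t ht => by
    have h1 : τ t = 0 := congrArg Prod.fst ht
    have h2 : μ (Tl t) = 0 := congrArg Prod.snd ht
    obtain ⟨x, rfl⟩ := ST.mem (Sμ.inj0 h2)
    rw [hτ] at h1
    rw [Ss.inj0 h1, map_zero]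
  have SθK := SES.of_inj θK ((injective_iff_map_eq_zero _).2 iK)
  obtain ⟨j', q', S', -⟩ := nine_coker ST SES.prod Ss SθK Sμ (fun x => by
    simp [θK, hτ, ST.zero]) (fun x => by simp [θK])
  have lZ := LL.of_ext S' lLK lN
  obtain ⟨sec, hsec⟩ := (lZ.flat fTG).split SθK
  have fZ := (fK.prod fM).retract sec _ hsec
  let θF := (κ ∘ₗ τ).prod (μ ∘ₗ Tl)
  have iF : ∀ t, θF t = 0 → t = 0 := fun t ht => by
    have h1 : κ (τ t) = 0 := congrArg Prod.fst ht
    have h2 : μ (Tl t) = 0 := congrArg Prod.snd ht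
    exact iK t (Prod.ext (SK.inj0 h1) h2)
  have SθF := SES.of_inj θF ((injective_iff_map_eq_zero _).2 iF)
  have Srow : SES (LinearMap.prodMap κ (LinearMap.id : M →ₗ[R] M)) (g ∘ₗ LinearMap.fst R G M) :=
    SES.mk' (fun a h => Prod.ext (SK.inj0 (congrArg Prod.fst h)) (show a.2 = 0 from congrArg Prod.snd h))
      (fun a => by simp [SK.zero]) (fun b hb => by
        obtain ⟨k, hk⟩ := SK.mem (show g b.1 = 0 from hb)
        exact ⟨(k, b.2), by simp [hk]⟩) (fun d => by
        obtain ⟨x, rfl⟩ := SK.surj d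
        exact ⟨(x, 0), rfl⟩)
  have S1 : SES (LinearMap.id : TG →ₗ[R] TG) (0 : TG →ₗ[R] PUnit.{u+1}) :=
    SES.mk' (fun a h => h) (fun a => rfl) (fun b _ => ⟨b, rfl⟩) (fun x => ⟨0, rfl⟩)
  have S2 : SES (0 : PUnit.{u+1} →ₗ[R] D) (LinearMap.id : D →ₗ[R] D) :=
    SES.mk' (fun a h => rfl) (fun a => rfl) (fun b hb => ⟨0, hb.symm⟩) (fun x => ⟨x, rfl⟩)
  obtain ⟨j'', q'', S'', -⟩ := nine_coker S1 Srow SθK SθF S2 (fun x => rfl) (fun x => by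
    simp [θF, SK.zero])
  exact ⟨.of R _, _, FlatC.of_ext S'' fZ fD, SθF⟩

theorem vertexY {TL L M N : Type u} [AddCommGroup TL] [AddCommGroup L] [AddCommGroup M] [AddCommGroup N]
    [Module R TL] [Module R L] [Module R M] [Module R N] {μ : TL →ₗ[R] M} {ν : M →ₗ[R] N} (Sμ : SES μ ν)
    (τ : TL →ₗ[R] L) (hL : LL R L) (hN : LL R N) :
    ∃ (C : ModuleCat.{u} R) (r : (L × M) →ₗ[R] C), LL R C ∧ SES (τ.prod μ) r := by
  have S := SES.of_inj (τ.prod μ) ((injective_iff_map_eq_zero _).2 fun t ht => Sμ.inj0 (congrArg Prod.snd ht))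
  obtain ⟨j, q, S'⟩ := pushout Sμ τ S
  exact ⟨.of R _, _, LL.of_ext S' hL hN, S⟩

end vertex
end GFP

namespace GFP
open QuiverGF
open scoped Classical

section cyl
variable {R : Type u} [Ring R] {V : Type u} [Quiver.{u} V]

/-- arrows ending at a vertex -/
abbrev Arr (i : V) := Σ j : V, j ⟶ i
/-- paths ending at a vertex -/
abbrev Pth (i : V) := Σ k : V, Quiver.Path k i

/-- sum over incoming arrows -/
abbrev TT (G : V → Type u) [∀ i, AddCommGroup (G i)] (i : V) : Type u := ⨁ p : Arr i, G p.1

/-- inclusion of an arrow component -/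
noncomputable def ta (R : Type u) [Ring R] (G : V → Type u) [∀ i, AddCommGroup (G i)] [∀ i, Module R (G i)] {j i : V} (a : j ⟶ i) :
    G j →ₗ[R] TT G i := DirectSum.lof R (Arr i) (fun p => G p.1) ⟨j, a⟩

variable {G : V → Type u} [∀ i, AddCommGroup (G i)] [∀ i, Module R (G i)]

lemma tt_ext {N : Type*} [AddCommGroup N] [Module R N] {i : V} {f g : TT G i →ₗ[R] N}
    (h : ∀ j (a : j ⟶ i) x, f (ta R G a x) = g (ta R G a x)) : f = g :=
  DirectSum.linearMap_ext R fun p => LinearMap.ext fun x => h p.1 p.2 x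

/-- map out of the sum -/
noncomputable def tm {N : Type*} [AddCommGroup N] [Module R N] {i : V} (f : ∀ j, (j ⟶ i) → (G j →ₗ[R] N)) :
    TT G i →ₗ[R] N := DirectSum.toModule R (Arr i) N (fun p => f p.1 p.2)

@[simp] lemma tm_ta {N : Type*} [AddCommGroup N] [Module R N] {i : V} (f : ∀ j, (j ⟶ i) → (G j →ₗ[R] N))
    {j} (a : j ⟶ i) (x) : tm f (ta R G a x) = f j a x := by
  simp [tm, ta]

variable {H : V → Type u} [∀ i, AddCommGroup (H i)] [∀ i, Module R (H i)]

/-- functoriality -/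
noncomputable def tmap (f : ∀ i, G i →ₗ[R] H i) (i : V) : TT G i →ₗ[R] TT H i :=
  dsMap fun p : Arr i => f p.1

@[simp] lemma tmap_ta (f : ∀ i, G i →ₗ[R] H i) {j i : V} (a : j ⟶ i) (x) :
    tmap f i (ta R G a x) = ta R H a (f j x) :=
  DFinsupp.mapRange_single (hf := fun i => map_zero _)

variable (R) (M : V → Type u) [∀ i, AddCommGroup (M i)] [∀ i, Module R (M i)]

/-- the free representation -/
abbrev Fr (M : V → Type u) [∀ i, AddCommGroup (M i)] (i : V) : Type u := ⨁ p : Pth i, M p.1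

/-- path component -/
noncomputable def fi {k i : V} (p : Quiver.Path k i) : M k →ₗ[R] Fr M i :=
  DirectSum.lof R (Pth i) (fun p => M p.1) ⟨k, p⟩

variable {R M} in
lemma fr_ext {N : Type*} [AddCommGroup N] [Module R N] {i : V} {f g : Fr M i →ₗ[R] N}
    (h : ∀ k (p : Quiver.Path k i) x, f (fi R M p x) = g (fi R M p x)) : f = g :=
  DirectSum.linearMap_ext R fun p => LinearMap.ext fun x => h p.1 p.2 x

variable {R M} in
/-- map out -/
noncomputable def fm {N : Type*} [AddCommGroup N] [Module R N] {i : V}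
    (f : ∀ k, Quiver.Path k i → (M k →ₗ[R] N)) :
    Fr M i →ₗ[R] N := DirectSum.toModule R (Pth i) N (fun p => f p.1 p.2)

@[simp] lemma fm_fi {N : Type*} [AddCommGroup N] [Module R N] {i : V}
    (f : ∀ k, Quiver.Path k i → (M k →ₗ[R] N)) {k} (p : Quiver.Path k i) (x) :
    fm f (fi R M p x) = f k p x := by
  simp [fm, fi]

/-- shift -/
noncomputable def sh {j i : V} (a : j ⟶ i) : Fr M j →ₗ[R] Fr M i := fm fun _ p => fi R M (p.cons a)

/-- nil component -/
noncomputable def nilP0 : ∀ {k i : V}, Quiver.Path k i → (M k →ₗ[R] M i)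
  | _, _, .nil => LinearMap.id
  | _, _, .cons _ _ => 0

/-- uncons -/
noncomputable def unc0 : ∀ {k i : V}, Quiver.Path k i → (M k →ₗ[R] TT (Fr M) i)
  | _, _, .nil => 0
  | _, _, .cons p a => ta R (Fr M) a ∘ₗ fi R M p

/-- projection to the trivial path -/
noncomputable def nilP (i : V) : Fr M i →ₗ[R] M i := fm fun _ p => nilP0 R M p
/-- uncons -/
noncomputable def unc (i : V) : Fr M i →ₗ[R] TT (Fr M) i := fm fun _ p => unc0 R M p
/-- inclusion of trivial path -/
noncomputable def nilI (i : V) : M i →ₗ[R] Fr M i := fi R M .nil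
/-- total shift -/
noncomputable def consT (i : V) : TT (Fr M) i →ₗ[R] Fr M i := tm fun _ a => sh R M a

lemma nilP_nilI (i : V) (m) : nilP R M i (nilI R M i m) = m := by simp [nilP, nilI, nilP0]
lemma unc_nilI (i : V) (m) : unc R M i (nilI R M i m) = 0 := by simp [unc, nilI, unc0]
lemma nilP_consT (i : V) (z) : nilP R M i (consT R M i z) = 0 := by
  have : nilP R M i ∘ₗ consT R M i = 0 := tt_ext fun j a x => by
    have : (nilP R M i ∘ₗ consT R M i) ∘ₗ ta R (Fr M) a = 0 := fr_ext fun k p x => by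
      simp [nilP, consT, sh, nilP0]
    exact LinearMap.congr_fun this x
  exact LinearMap.congr_fun this z
lemma unc_consT (i : V) (z) : unc R M i (consT R M i z) = z := by
  have : unc R M i ∘ₗ consT R M i = LinearMap.id := tt_ext fun j a x => by
    have : (unc R M i ∘ₗ consT R M i) ∘ₗ ta R (Fr M) a = ta R (Fr M) a := fr_ext fun k p x => by
      simp [unc, consT, sh, unc0]
    exact LinearMap.congr_fun this x
  exact LinearMap.congr_fun this z
lemma fr_split (i : V) (w) : nilI R M i (nilP R M i w) + consT R M i (unc R M i w) = w := by
  have : nilI R M i ∘ₗ nilP R M i + consT R M i ∘ₗ unc R M i = LinearMap.id := fr_ext fun k p x => by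
    cases p <;> simp [nilI, nilP, nilP0, unc, consT, unc0, sh]
  exact LinearMap.congr_fun this w

variable {R M}

/-- canonical map -/
noncomputable def tphi (τ : ∀ {j i : V}, (j ⟶ i) → (G j →ₗ[R] G i)) (i : V) : TT G i →ₗ[R] G i :=
  tm fun _ a => τ a

@[simp] lemma tphi_ta (τ : ∀ {j i : V}, (j ⟶ i) → (G j →ₗ[R] G i)) {j i : V} (a : j ⟶ i) (x) :
    tphi τ i (ta R G a x) = τ a x := tm_ta _ _ _

/-- the cylinder -/
abbrev Cy (G M : V → Type u) [∀ i, AddCommGroup (M i)] (i : V) : Type u := G i × Fr M i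

/-- arrow maps of the cylinder -/
noncomputable def ca (τ : ∀ {j i : V}, (j ⟶ i) → (G j →ₗ[R] G i)) (μ : ∀ i, TT G i →ₗ[R] M i) {j i : V} (a : j ⟶ i) :
    Cy G M j →ₗ[R] Cy G M i :=
  (LinearMap.prod (τ a) (nilI R M i ∘ₗ μ i ∘ₗ ta R G a)).coprod (LinearMap.inr _ _ _ ∘ₗ sh R M a)

lemma ca_apply (τ : ∀ {j i : V}, (j ⟶ i) → (G j →ₗ[R] G i)) (μ : ∀ i, TT G i →ₗ[R] M i) {j i : V} (a : j ⟶ i) (g w) :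
    ca τ μ a (g, w) = (τ a g, nilI R M i (μ i (ta R G a g)) + sh R M a w) := by
  simp [ca]

theorem cyl_ses (τ : ∀ {j i : V}, (j ⟶ i) → (G j →ₗ[R] G i)) (μ : ∀ i, TT G i →ₗ[R] M i) (i : V)
    {C : Type u} [AddCommGroup C] [Module R C] {r : (G i × M i) →ₗ[R] C}
    (S : SES ((tphi τ i).prod (μ i)) r) :
    ∃ r' : Cy G M i →ₗ[R] C,
      SES (tphi (G := Cy G M) (ca τ μ) i) r' := by
  let fT := tmap (R := R) (G := Cy G M) (fun i => LinearMap.fst R (G i) (Fr M i)) i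
  let sT := tmap (R := R) (G := Cy G M) (fun i => LinearMap.snd R (G i) (Fr M i)) i
  let il := tmap (R := R) (H := Cy G M) (fun i => LinearMap.inl R (G i) (Fr M i)) i
  let ir := tmap (R := R) (H := Cy G M) (fun i => LinearMap.inr R (G i) (Fr M i)) i
  let Φ := tphi (G := Cy G M) (ca τ μ) i
  have h1 : ∀ z, Φ z = (tphi τ i (fT z), nilI R M i (μ i (fT z)) + consT R M i (sT z)) := by
    intro z
    have : Φ = ((tphi τ i) ∘ₗ fT).prod (nilI R M i ∘ₗ μ i ∘ₗ fT + consT R M i ∘ₗ sT) :=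
      tt_ext fun j a x => by
        obtain ⟨g, w⟩ := x
        simp [Φ, fT, sT, ca_apply, consT]
    rw [this]; rfl
  have h2 : ∀ z, il (fT z) + ir (sT z) = z := fun z => by
    have : il ∘ₗ fT + ir ∘ₗ sT = LinearMap.id := tt_ext fun j a x => by
      simp only [il, fT, ir, sT, LinearMap.add_apply, LinearMap.comp_apply, tmap_ta, LinearMap.id_apply]
      rw [← map_add]; simp
    exact LinearMap.congr_fun this z
  have h3 : ∀ t, fT (il t) = t := fun t => by
    have : fT ∘ₗ il = LinearMap.id := tt_ext fun j a x => by simp [fT, il]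
    exact LinearMap.congr_fun this t
  have h4 : ∀ t, fT (ir t) = 0 := fun t => by
    have : fT ∘ₗ ir = 0 := tt_ext fun j a x => by simp [fT, ir]
    exact LinearMap.congr_fun this t
  have h5 : ∀ t, sT (ir t) = t := fun t => by
    have : sT ∘ₗ ir = LinearMap.id := tt_ext fun j a x => by simp [sT, ir]
    exact LinearMap.congr_fun this t
  have h6 : ∀ t, sT (il t) = 0 := fun t => by
    have : sT ∘ₗ il = 0 := tt_ext fun j a x => by simp [sT, il]
    exact LinearMap.congr_fun this t
  refine ⟨r ∘ₗ LinearMap.prodMap LinearMap.id (nilP R M i), SES.mk' (fun z hz => ?_) (fun z => ?_)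
    (fun b hb => ?_) ?_⟩
  · change Φ z = 0 at hz
    rw [h1] at hz
    have e1 : tphi τ i (fT z) = 0 := congrArg Prod.fst hz
    have e2 : nilI R M i (μ i (fT z)) + consT R M i (sT z) = 0 := congrArg Prod.snd hz
    have e3 := congrArg (nilP R M i) e2
    have e4 := congrArg (unc R M i) e2
    rw [map_add, nilP_nilI, nilP_consT, add_zero, map_zero] at e3
    rw [map_add, unc_nilI, unc_consT, zero_add, map_zero] at e4
    rw [← h2 z, e4, S.inj0 (a := fT z) (Prod.ext e1 e3), map_zero, map_zero, add_zero]
  · change r (LinearMap.prodMap LinearMap.id (nilP R M i) (Φ z)) = 0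
    rw [h1, LinearMap.prodMap_apply, map_add, nilP_nilI, nilP_consT, add_zero]
    exact S.zero (fT z)
  · obtain ⟨g, w⟩ := b
    obtain ⟨t, ht⟩ := S.mem (show r (g, nilP R M i w) = 0 from hb)
    refine ⟨il t + ir (unc R M i w), ?_⟩
    change Φ _ = _
    have e1 : tphi τ i t = g := congrArg Prod.fst ht
    have e2 : μ i t = nilP R M i w := congrArg Prod.snd ht
    have f1 : fT (il t + ir (unc R M i w)) = t := by rw [map_add, h3, h4, add_zero]
    have f2 : sT (il t + ir (unc R M i w)) = unc R M i w := by rw [map_add, h5, h6, zero_add]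
    rw [h1, f1, f2, e1, e2, fr_split]
  · intro c
    obtain ⟨⟨g, m⟩, rfl⟩ := S.surj c
    exact ⟨(g, nilI R M i m), by simp [nilP_nilI]⟩

end cyl
end GFP

namespace GFP
open QuiverGF
open scoped Classical

section glue
variable {R : Type u} [Ring R] {V : Type u} [Quiver.{u} V]

/-- underlying family of modules -/
abbrev fam (X : Paths V ⥤ ModuleCat.{u} R) (i : V) : Type u := X.obj (vtx i)

/-- underlying arrow maps -/
abbrev arr (X : Paths V ⥤ ModuleCat.{u} R) {j i : V} (a : j ⟶ i) : fam X j →ₗ[R] fam X i :=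
  (X.map a.toPath).hom

/-- coproduct comparison -/
noncomputable def cmp (X : Paths V ⥤ ModuleCat.{u} R) (i : V) :
    (∐ fun p : Σ j : V, j ⟶ i => X.obj (vtx p.1)) ⟶ ModuleCat.of R (TT (fam X) i) :=
  Sigma.desc fun p => ModuleCat.ofHom (ta R (fam X) p.2)

/-- inverse comparison -/
noncomputable def cmpI (X : Paths V ⥤ ModuleCat.{u} R) (i : V) :
    ModuleCat.of R (TT (fam X) i) ⟶ (∐ fun p : Σ j : V, j ⟶ i => X.obj (vtx p.1)) :=
  ModuleCat.ofHom (tm (G := fam X) fun j a =>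
    (Sigma.ι (fun p : Σ j : V, j ⟶ i => X.obj (vtx p.1)) ⟨j, a⟩).hom)

lemma cmp_cmpI (X : Paths V ⥤ ModuleCat.{u} R) (i : V) : cmp X i ≫ cmpI X i = 𝟙 _ := by
  refine Sigma.hom_ext _ _ fun p => ?_
  rw [cmp, Sigma.ι_desc_assoc, Category.comp_id]
  ext x
  exact tm_ta (R := R) (G := fam X) (fun j a =>
    (Sigma.ι (fun p : Σ j : V, j ⟶ i => X.obj (vtx p.1)) ⟨j, a⟩).hom) p.2 x

lemma ta_cmp (X : Paths V ⥤ ModuleCat.{u} R) {i j : V} (a : j ⟶ i) (x : fam X j) :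
    (cmp X i).hom ((Sigma.ι (fun p : Σ j : V, j ⟶ i => X.obj (vtx p.1)) ⟨j, a⟩).hom x) =
      ta R (fam X) a x := by
  have : Sigma.ι (fun p : Σ j : V, j ⟶ i => X.obj (vtx p.1)) ⟨j, a⟩ ≫ cmp X i =
    ModuleCat.ofHom (ta R (fam X) a) := by rw [cmp, Sigma.ι_desc]
  exact congrArg (fun f => f.hom x) this

lemma cmpI_cmp (X : Paths V ⥤ ModuleCat.{u} R) (i : V) : cmpI X i ≫ cmp X i = 𝟙 _ := by
  refine ModuleCat.hom_ext (tt_ext (G := fam X) fun j a x => ?_)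
  change (cmp X i).hom (tm (G := fam X) _ (ta R (fam X) a x)) = ta R (fam X) a x
  rw [tm_ta]
  exact ta_cmp X a x

/-- comparison as an equivalence -/
noncomputable def cmpE (X : Paths V ⥤ ModuleCat.{u} R) (i : V) :
    (∐ fun p : Σ j : V, j ⟶ i => X.obj (vtx p.1) : ModuleCat.{u} R) ≃ₗ[R] TT (fam X) i :=
  (Iso.mk (cmp X i) (cmpI X i) (cmp_cmpI X i) (cmpI_cmp X i)).toLinearEquiv

lemma phi_cmp (X : Paths V ⥤ ModuleCat.{u} R) (i : V) :
    phi X i = cmp X i ≫ ModuleCat.ofHom (tphi (G := fam X) (arr X) i) := by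
  refine Sigma.hom_ext _ _ fun p => ?_
  rw [phi, Sigma.ι_desc, cmp, Sigma.ι_desc_assoc]
  ext x
  exact (tphi_ta (G := fam X) (arr X) p.2 x).symm

lemma phi_hom (X : Paths V ⥤ ModuleCat.{u} R) (i : V) :
    (phi X i).hom = tphi (G := fam X) (arr X) i ∘ₗ (cmpE X i).toLinearMap := by
  rw [phi_cmp]; rfl

lemma ses_coker {A B : ModuleCat.{u} R} (f : A ⟶ B) [Mono f] : SES f.hom (cokernel.π f).hom := by
  have S : (ShortComplex.mk f (cokernel.π f) (cokernel.condition f)).ShortExact :=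
    { exact := ShortComplex.exact_cokernel f }
  exact ⟨S.moduleCat_injective_f, (ShortComplex.ShortExact.moduleCat_exact_iff_function_exact _).1 S.exact,
    S.moduleCat_surjective_g⟩

lemma ses_unique {A B C C' : Type u} [AddCommGroup A] [AddCommGroup B] [AddCommGroup C] [AddCommGroup C']
    [Module R A] [Module R B] [Module R C] [Module R C'] {j : A →ₗ[R] B} {q : B →ₗ[R] C} {q' : B →ₗ[R] C'}
    (S : SES j q) (S' : SES j q') : Nonempty (C ≃ₗ[R] C') := by
  obtain ⟨f, hf⟩ := factor_surj q S.surj q' (fun b hb => by obtain ⟨a, rfl⟩ := S.mem hb; exact S'.zero a)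
  obtain ⟨g, hg⟩ := factor_surj q' S'.surj q (fun b hb => by obtain ⟨a, rfl⟩ := S'.mem hb; exact S.zero a)
  refine ⟨LinearEquiv.ofLinear f g (LinearMap.ext fun c => ?_) (LinearMap.ext fun c => ?_)⟩
  · obtain ⟨b, rfl⟩ := S'.surj c; simp [hf, hg]
  · obtain ⟨b, rfl⟩ := S.surj c; simp [hf, hg]

lemma phi_ses (X : Paths V ⥤ ModuleCat.{u} R) (i : V) (h : Mono (phi X i)) :
    SES (tphi (G := fam X) (arr X) i) (cokernel.π (phi X i)).hom := by
  have S := (ses_coker (phi X i)).of_equiv (cmpE X i).symm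
  have e : (phi X i).hom ∘ₗ (cmpE X i).symm.toLinearMap = tphi (G := fam X) (arr X) i := by
    rw [phi_hom]; ext x; simp
  rwa [e] at S

lemma phi_of_ses (X : Paths V ⥤ ModuleCat.{u} R) (i : V) {C : Type u} [AddCommGroup C] [Module R C]
    {r : fam X i →ₗ[R] C} (S : SES (tphi (G := fam X) (arr X) i) r) :
    Mono (phi X i) ∧ Nonempty (C ≃ₗ[R] (cokernel (phi X i) : ModuleCat.{u} R)) := by
  have S1 := S.of_equiv (cmpE X i)
  rw [← phi_hom] at S1
  have hm : Mono (phi X i) := (ModuleCat.mono_iff_injective _).2 S1.inj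
  exact ⟨hm, ses_unique S1 (ses_coker (phi X i))⟩

/-- representation from arrow data -/
noncomputable def mkRep (G : V → Type u) [∀ i, AddCommGroup (G i)] [∀ i, Module R (G i)]
    (τ : ∀ {j i : V}, (j ⟶ i) → (G j →ₗ[R] G i)) : Paths V ⥤ ModuleCat.{u} R :=
  Paths.lift { obj := fun i => ModuleCat.of R (G i), map := fun a => ModuleCat.ofHom (τ a) }

lemma mkRep_arr (G : V → Type u) [∀ i, AddCommGroup (G i)] [∀ i, Module R (G i)]
    (τ : ∀ {j i : V}, (j ⟶ i) → (G j →ₗ[R] G i)) {j i : V} (a : j ⟶ i) (x : G j) :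
    arr (mkRep G τ) a x = τ a x := by
  have := Paths.lift_toPath { obj := fun i => ModuleCat.of R (G i), map := fun a => ModuleCat.ofHom (τ a) } a
  exact congrArg (fun f => f.hom x) this

lemma mkRep_tphi (G : V → Type u) [∀ i, AddCommGroup (G i)] [∀ i, Module R (G i)]
    (τ : ∀ {j i : V}, (j ⟶ i) → (G j →ₗ[R] G i)) (i : V) :
    tphi (G := fam (mkRep G τ)) (arr (mkRep G τ)) i = tphi (G := G) τ i := by
  refine tt_ext (G := G) fun j a x => ?_
  exact (tphi_ta (G := fam (mkRep G τ)) (arr (mkRep G τ)) a x).trans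
    ((mkRep_arr G τ a x).trans (tphi_ta τ a x).symm)

lemma nat_aux {C : Type*} [Category* C] (X Y : Paths V ⥤ C) (f : ∀ i : V, X.obj (vtx i) ⟶ Y.obj (vtx i))
    (h : ∀ {j i : V} (a : j ⟶ i), X.map a.toPath ≫ f i = f j ≫ Y.map a.toPath) {j i : V}
    (p : Quiver.Path j i) :
    X.map (X := vtx j) (Y := vtx i) p ≫ f i = f j ≫ Y.map (X := vtx j) (Y := vtx i) p := by
  induction p with
  | nil =>
    have e1 := X.map_id (vtx j)
    have e2 := Y.map_id (vtx j)
    exact (congrArg (· ≫ f j) e1).trans ((Category.id_comp _).trans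
      ((Category.comp_id _).symm.trans (congrArg (f j ≫ ·) e2.symm)))
  | @cons b c p a ih =>
    have e1 : X.map (X := vtx j) (Y := vtx c) (Quiver.Path.cons p a) =
      X.map (X := vtx j) (Y := vtx b) p ≫ X.map a.toPath :=
        X.map_comp (X := vtx j) (Y := vtx b) (Z := vtx c) p a.toPath
    have e2 : Y.map (X := vtx j) (Y := vtx c) (Quiver.Path.cons p a) =
      Y.map (X := vtx j) (Y := vtx b) p ≫ Y.map a.toPath :=
        Y.map_comp (X := vtx j) (Y := vtx b) (Z := vtx c) p a.toPath
    rw [e1, e2, Category.assoc]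
    refine (congrArg (X.map (X := vtx j) (Y := vtx b) p ≫ ·) (h a)).trans ?_
    rw [← Category.assoc, ← Category.assoc]
    exact congrArg (· ≫ Y.map a.toPath) ih

/-- natural transformation from arrow data -/
def mkNat {C : Type*} [Category* C] (X Y : Paths V ⥤ C) (f : ∀ i : V, X.obj (vtx i) ⟶ Y.obj (vtx i))
    (h : ∀ {j i : V} (a : j ⟶ i), X.map a.toPath ≫ f i = f j ≫ Y.map a.toPath) : X ⟶ Y where
  app i := f i
  naturality := fun _ _ p => nat_aux X Y f h p

lemma shortExact_of {X Y Z : Paths V ⥤ ModuleCat.{u} R} (f : X ⟶ Y) (g : Y ⟶ Z) (w : f ≫ g = 0)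
    (h : ∀ i : V, SES (f.app (vtx i)).hom (g.app (vtx i)).hom) : (ShortComplex.mk f g w).ShortExact := by
  have hP : JointlyReflectIsomorphisms (fun i : Paths V => (evaluation (Paths V) (ModuleCat.{u} R)).obj i) :=
    ⟨fun {A B} φ hφ => (NatTrans.isIso_iff_isIso_app φ).2 fun i => hφ i⟩
  rw [hP.shortExact_iff]
  intro i
  exact ModuleCat.shortComplex_shortExact _ (h i).ex (h i).inj (h i).surj

end glue
end GFP

namespace GFP
open QuiverGF
open scoped Classical

section main
variable {R : Type u} [Ring R] {V : Type u} [Quiver.{u} V]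

lemma mem_flat (X : Paths V ⥤ ModuleCat.{u} R) (h1 : ∀ i, FlatC R (fam X i))
    (h2 : ∀ i, ∃ (C : ModuleCat.{u} R) (r : fam X i →ₗ[R] C), FlatC R C ∧
      SES (tphi (G := fam X) (arr X) i) r) :
    X ∈ PhiClass (V := V) {M : ModuleCat.{u} R | IsFlatModule R M} := by
  intro i
  obtain ⟨C, r, hC, S⟩ := h2 i
  obtain ⟨hm, ⟨e⟩⟩ := phi_of_ses X i S
  exact ⟨hm, (isFlat_iff _).2 (h1 i), (isFlat_iff _).2 (hC.equiv e)⟩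

lemma mem_gf (X : Paths V ⥤ ModuleCat.{u} R) (h1 : ∀ i, LL R (fam X i))
    (h2 : ∀ i, ∃ (C : ModuleCat.{u} R) (r : fam X i →ₗ[R] C), LL R C ∧
      SES (tphi (G := fam X) (arr X) i) r) :
    X ∈ PhiClass (V := V) {M : ModuleCat.{u} R | IsGorensteinFlatModule R M} := by
  intro i
  obtain ⟨C, r, hC, S⟩ := h2 i
  obtain ⟨hm, ⟨e⟩⟩ := phi_of_ses X i S
  exact ⟨hm, (h1 i).gf, (hC.equiv e).gf⟩

theorem main_aux (X : Paths V ⥤ ModuleCat.{u} R)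
    (hX : X ∈ PhiClass (V := V) {M : ModuleCat.{u} R | IsGorensteinFlatModule R M}) :
    ∃ (W' X' : Paths V ⥤ ModuleCat.{u} R) (f : X ⟶ W') (g : W' ⟶ X') (w : f ≫ g = 0),
      (ShortComplex.mk f g w).ShortExact ∧
      W' ∈ PhiClass (V := V) {M : ModuleCat.{u} R | IsFlatModule R M} ∧
      X' ∈ PhiClass (V := V) {M : ModuleCat.{u} R | IsGorensteinFlatModule R M} := by
  have hv := fun i => vertex1 (phi_ses X i (hX i).1) (gf_GG (hX i).2.1) (gf_GG (hX i).2.2)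
  choose G L K D LK ι l κ g s p fG fK fD lL lLK Sι Sκ Ss hκ using hv
  have hτ := fun (j i : V) (a : j ⟶ i) => (lL j).flat (fK i) _ _ _ _ (Sι j) (s i ∘ₗ ta R (fam X) a)
  choose τ' hτ' using hτ
  let τ : ∀ {j i : V}, (j ⟶ i) → (G j →ₗ[R] G i) := fun {j i} a => κ i ∘ₗ τ' j i a
  have hτι : ∀ {j i : V} (a : j ⟶ i) x, τ a (ι j x) = ι i (arr X a x) := fun {j i} a x => by
    change κ i (τ' j i a (ι j x)) = _
    rw [hτ']
    refine (hκ i _).trans (congrArg (ι i) ?_)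
    exact tphi_ta (G := fam X) (arr X) a x
  have hσ := fun (j i : V) (a : j ⟶ i) => factor_surj (l j) (Sι j).surj (l i ∘ₗ τ a) (fun x hx => by
    obtain ⟨y, rfl⟩ := (Sι j).mem hx
    change l i (τ a (ι j y)) = 0
    rw [hτι, (Sι i).zero])
  choose σ' hσ' using hσ
  let σ : ∀ {j i : V}, (j ⟶ i) → (L j →ₗ[R] L i) := fun {j i} a => σ' j i a
  have hTL : ∀ i : V, LL R (TT (fun i => L i) i) := fun i =>
    LL.directSum (K := fun p : Arr i => L p.1) fun p => lL p.1
  have hM := fun i => (hTL i).right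
  choose M N μb ν freeM Sμ lN using hM
  let μ : ∀ i, TT (fun i => G i) i →ₗ[R] M i := fun i => μb i ∘ₗ tmap (G := fun i => G i) (H := fun i => L i) l i
  let F := mkRep (R := R) (Cy (fun i => G i) (fun i => M i)) (ca τ μ)
  let Y := mkRep (R := R) (Cy (fun i => L i) (fun i => M i)) (ca σ μb)
  have fFr : ∀ i, FlatC R (Fr (fun i => M i) i) := fun i =>
    FlatC.directSum (fun p : Pth i => M p.1) fun p => FlatC.free
  have lFr : ∀ i, LL R (Fr (fun i => M i) i) := fun i =>
    LL.directSum (K := fun p : Pth i => M p.1) fun p => LL.free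
  let f : X ⟶ F := mkNat X F (fun i => ModuleCat.ofHom (LinearMap.inl R (G i) (Fr (fun i => M i) i) ∘ₗ ι i)) (by
    intro j i a
    refine ModuleCat.hom_ext (LinearMap.ext fun x => ?_)
    refine Eq.trans ?_ (mkRep_arr (R := R) (Cy (fun i => G i) (fun i => M i)) (ca τ μ) a (ι j x, 0)).symm
    rw [ca_apply]
    refine Prod.ext (hτι a x).symm ?_
    change 0 = nilI R (fun i => M i) i (μb i (tmap (G := fun i => G i) (H := fun i => L i) l i _)) + sh R (fun i => M i) a 0
    rw [tmap_ta, (Sι j).zero, map_zero, map_zero, map_zero, map_zero, add_zero])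
  let q : F ⟶ Y := mkNat F Y (fun i => ModuleCat.ofHom (LinearMap.prodMap (l i) (LinearMap.id : Fr (fun i => M i) i →ₗ[R] _))) (by
    intro j i a
    refine ModuleCat.hom_ext (LinearMap.ext fun x => ?_)
    obtain ⟨y, w⟩ := x
    refine Eq.trans (congrArg (LinearMap.prodMap (l i) (LinearMap.id : Fr (fun i => M i) i →ₗ[R] _))
      (mkRep_arr (R := R) (Cy (fun i => G i) (fun i => M i)) (ca τ μ) a (y, w))) ?_
    refine Eq.trans ?_ (mkRep_arr (R := R) (Cy (fun i => L i) (fun i => M i)) (ca σ μb) a (l j y, w)).symm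
    rw [ca_apply, ca_apply]
    refine Prod.ext (hσ' j i a y).symm ?_
    change nilI R (fun i => M i) i (μb i (tmap (G := fun i => G i) (H := fun i => L i) l i _)) + sh R (fun i => M i) a w = _
    rw [tmap_ta])
  have hS : ∀ i : V, SES (f.app (vtx i)).hom (q.app (vtx i)).hom := fun i =>
    SES.prod_right (Fr (fun i => M i) i) (Sι i)
  have w : f ≫ q = 0 := by
    refine NatTrans.ext (funext fun i => ModuleCat.hom_ext (LinearMap.ext fun x => ?_))
    exact (hS i).zero x
  refine ⟨F, Y, f, q, w, shortExact_of f q w hS, mem_flat F (fun i => ?_) (fun i => ?_),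
    mem_gf Y (fun i => ?_) (fun i => ?_)⟩
  · exact (fG i).prod (fFr i)
  · have ST : SES (tmap (G := fam X) (H := fun i => G i) ι i) (tmap (G := fun i => G i) (H := fun i => L i) l i) :=
      SES.directSum (fun p : Arr i => Sι p.1)
    obtain ⟨C, r, hC, S⟩ := vertexF ST (Sκ i) (Ss i) (Sμ i) (tm (G := fun i => G i) fun j a => τ' j i a)
      (fun x => by
        refine LinearMap.congr_fun (f := (tm (G := fun i => G i) fun j a => τ' j i a) ∘ₗ
          tmap (G := fam X) (H := fun i => G i) ι i) (g := s i) (tt_ext fun j a x => ?_) x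
        rw [LinearMap.comp_apply, tmap_ta, tm_ta]
        exact hτ' j i a x)
      (FlatC.directSum (fun p : Arr i => G p.1) fun p => fG p.1) (fK i) FlatC.free (fD i) (lLK i) (lN i)
    have e : κ i ∘ₗ (tm (G := fun i => G i) fun j a => τ' j i a) = tphi (G := fun i => G i) τ i :=
      tt_ext fun j a x => by
        rw [LinearMap.comp_apply, tm_ta, tphi_ta]; rfl
    rw [e] at S
    obtain ⟨r', S'⟩ := cyl_ses (G := fun i => G i) (M := fun i => M i) τ μ i S
    refine ⟨C, r', hC, ?_⟩
    have := mkRep_tphi (R := R) (Cy (fun i => G i) (fun i => M i)) (ca τ μ) i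
    rw [← this] at S'
    exact S'
  · exact (lL i).prod (lFr i)
  · obtain ⟨C, r, hC, S⟩ := vertexY (Sμ i) (tphi (G := fun i => L i) σ i) (lL i) (lN i)
    obtain ⟨r', S'⟩ := cyl_ses (G := fun i => L i) (M := fun i => M i) σ μb i S
    refine ⟨C, r', hC, ?_⟩
    have := mkRep_tphi (R := R) (Cy (fun i => L i) (fun i => M i)) (ca σ μb) i
    rw [← this] at S'
    exact S'

theorem main : IsCogenerator (PhiClass (V := V) {M : ModuleCat.{u} R | IsFlatModule R M})
      (PhiClass (V := V) {M : ModuleCat.{u} R | IsGorensteinFlatModule R M}) :=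
  ⟨fun _ hX i => ⟨(hX i).1, flat_gf (hX i).2.1, flat_gf (hX i).2.2⟩, fun X hX => main_aux X hX⟩

end main
end GFP

section Statements

open CategoryTheory CategoryTheory.Limits Opposite QuiverGF
open scoped DirectSum

theorem stmt12 (R : Type u) [Ring R] (V : Type u) [Quiver.{u} V] (hV : LeftRooted V) :
    IsCogenerator (PhiClass (V := V) {M : ModuleCat.{u} R | IsFlatModule R M})
      (PhiClass (V := V) {M : ModuleCat.{u} R | IsGorensteinFlatModule R M}) := by
  exact GFP.main

end Statements
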